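/- Let H ⊂ ℂ be a Jordan curve and let ε > 0. Then there exists a homeomorphism φ : ℂ → ℂ with sup_{z ∈ ℂ} |φ(z) − z| < ε, with φ(z) = z for every z whose distance to H is at least ε, and such that φ(H) is an analytic Jordan curve. -/

import Mathlib

open Set Metric Topology

noncomputable section

/-- A Jordan curve: a set homeomorphic to the unit circle. -/
def IsJordanCurve (E : Set ℂ) : Prop :=
  Nonempty (E ≃ₜ (Metric.sphere (0 : ℂ) 1 : Set ℂ))

/-- An analytic Jordan curve: the image of the unit circle under a map that is
holomorphic and injective on an open annulus containing the unit circle. -/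
def IsAnalyticJordanCurve (E : Set ℂ) : Prop :=
  ∃ (r R : ℝ) (g : ℂ → ℂ), r < 1 ∧ 1 < R ∧
    DifferentiableOn ℂ g {z : ℂ | r < ‖z‖ ∧ ‖z‖ < R} ∧
    Set.InjOn g {z : ℂ | r < ‖z‖ ∧ ‖z‖ < R} ∧
    E = g '' Metric.sphere (0 : ℂ) 1

/-- `f` has a continuous logarithm on the set `K`. -/
def HasContLog {X : Type*} [TopologicalSpace X] (f : X → ℂ) (K : Set X) : Prop :=
  ∃ g : X → ℂ, ContinuousOn g K ∧ ∀ z ∈ K, f z = Complex.exp (g z)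

namespace HasContLog

variable {X Y : Type*} [TopologicalSpace X] [TopologicalSpace Y] {f f' : X → ℂ} {K L : Set X}

lemma mono (h : HasContLog f L) (hKL : K ⊆ L) : HasContLog f K :=
  let ⟨g, hg, hfg⟩ := h
  ⟨g, hg.mono hKL, fun z hz => hfg z (hKL hz)⟩

lemma congr (h : HasContLog f K) (hf : EqOn f' f K) : HasContLog f' K :=
  let ⟨g, hg, hfg⟩ := h
  ⟨g, hg, fun z hz => (hf hz).trans (hfg z hz)⟩

lemma mul (h : HasContLog f K) (h' : HasContLog f' K) :
    HasContLog (fun z => f z * f' z) K := by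
  obtain ⟨g, hg, hfg⟩ := h
  obtain ⟨g', hg', hfg'⟩ := h'
  exact ⟨fun z => g z + g' z, hg.add hg', fun z hz => by
    simp only [Complex.exp_add, hfg z hz, hfg' z hz]⟩

lemma zpow (h : HasContLog f K) (n : ℤ) : HasContLog (fun z => f z ^ n) K := by
  obtain ⟨g, hg, hfg⟩ := h
  exact ⟨fun z => n * g z, continuousOn_const.mul hg, fun z hz => by
    simp only [Complex.exp_int_mul, hfg z hz]⟩

lemma inv (h : HasContLog f K) : HasContLog (fun z => (f z)⁻¹) K :=
  (h.zpow (-1)).congr fun z _ => by simp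

lemma div (h : HasContLog f K) (h' : HasContLog f' K) :
    HasContLog (fun z => f z / f' z) K :=
  (h.mul h'.inv).congr fun _ _ => div_eq_mul_inv _ _

lemma const {c : ℂ} (hc : c ≠ 0) : HasContLog (fun _ : X => c) K :=
  ⟨fun _ => Complex.log c, continuousOn_const, fun _ _ => (Complex.exp_log hc).symm⟩

lemma comp {φ : Y → X} {M : Set Y} (h : HasContLog f K) (hφ : ContinuousOn φ M)
    (hM : MapsTo φ M K) : HasContLog (f ∘ φ) M := by
  obtain ⟨g, hg, hfg⟩ := h
  exact ⟨g ∘ φ, hg.comp hφ hM, fun z hz => hfg _ (hM hz)⟩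

lemma of_slitPlane (hf : ContinuousOn f K) (h : ∀ z ∈ K, f z ∈ Complex.slitPlane) :
    HasContLog f K :=
  ⟨fun z => Complex.log (f z), hf.clog h,
    fun z hz => (Complex.exp_log (Complex.slitPlane_ne_zero (h z hz))).symm⟩

lemma of_norm_sub_one_lt (hf : ContinuousOn f K) (h : ∀ z ∈ K, ‖f z - 1‖ < 1) :
    HasContLog f K :=
  of_slitPlane hf fun z hz => Complex.ball_one_subset_slitPlane (by
    simpa [dist_eq_norm] using h z hz)

lemma of_simplyConnected [SimplyConnectedSpace X] [LocallyPathConnectedSpace X]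
    (hf : Continuous f) (h : ∀ z, f z ≠ 0) : HasContLog f univ := by
  obtain ⟨g, hg, hfg⟩ := Complex.exists_continuousOn_eqOn_exp_comp (U := (univ : Set X))
    ((Homeomorph.Set.univ X).toHomotopyEquiv.simplyConnectedSpace) isOpen_univ
    hf.continuousOn (by simpa using h)
  exact ⟨g, hg, fun z hz => (hfg hz).symm⟩

end HasContLog

/-- Two continuous logarithms of the same function on a preconnected set differ by a constant. -/
lemma exists_eqOn_add_of_exp_eq {X : Type*} [TopologicalSpace X] {S : Set X} {g g' : X → ℂ}
    (hS : IsPreconnected S) (hg : ContinuousOn g S) (hg' : ContinuousOn g' S)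
    (h : ∀ z ∈ S, Complex.exp (g z) = Complex.exp (g' z)) :
    ∃ n : ℤ, ∀ z ∈ S, g z = g' z + n * (2 * Real.pi * Complex.I) := by
  have hd : IsDiscrete (range fun n : ℤ => ((n : ℝ) : ℂ)) := by
    rw [isDiscrete_iff_discreteTopology]
    have : IsClosedEmbedding (fun n : ℤ => ((n : ℝ) : ℂ)) :=
      Complex.isometry_ofReal.isClosedEmbedding.comp Int.isClosedEmbedding_coe_real
    exact this.isEmbedding.toHomeomorph.symm.isEmbedding.discreteTopology
  have hpi : (2 * Real.pi * Complex.I : ℂ) ≠ 0 := Complex.two_pi_I_ne_zero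
  obtain ⟨_, ⟨n, rfl⟩, hn⟩ := hS.eqOn_const_of_mapsTo hd
    (f := fun z => (g z - g' z) / (2 * Real.pi * Complex.I)) ((hg.sub hg').div_const _)
    (fun z hz => by
      obtain ⟨n, hn⟩ := Complex.exp_eq_exp_iff_exists_int.1 (h z hz)
      exact ⟨n, by simp only [hn]; field_simp; push_cast; ring⟩) (range_nonempty _)
  refine ⟨n, fun z hz => ?_⟩
  have := hn hz
  simp only [Function.const_apply] at this
  rw [div_eq_iff hpi] at this
  push_cast at this
  linear_combination this

lemma HasContLog.union_of_isClosed {X : Type*} [TopologicalSpace X] {A B : Set X} {f : X → ℂ}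
    (hA : IsClosed A) (hB : IsClosed B) (hAB : IsPreconnected (A ∩ B))
    (h : HasContLog f A) (h' : HasContLog f B) : HasContLog f (A ∪ B) := by
  classical
  obtain ⟨g, hg, hfg⟩ := h
  obtain ⟨g', hg', hfg'⟩ := h'
  obtain ⟨n, hn⟩ := exists_eqOn_add_of_exp_eq hAB (hg.mono inter_subset_left)
    (hg'.mono inter_subset_right) fun z hz => by rw [← hfg z hz.1, hfg' z hz.2]
  have hgA : EqOn (A.piecewise g fun z => g' z + n * (2 * Real.pi * Complex.I)) g A :=
    fun z hz => by simp [hz]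
  have hgB : EqOn (A.piecewise g fun z => g' z + n * (2 * Real.pi * Complex.I))
      (fun z => g' z + n * (2 * Real.pi * Complex.I)) B := fun z hz => by
    by_cases hzA : z ∈ A
    · simp only [piecewise_eq_of_mem _ _ _ hzA]; exact hn z ⟨hzA, hz⟩
    · simp [hzA]
  refine ⟨_, (hg.congr hgA).union_of_isClosed ((hg'.add continuousOn_const).congr hgB) hA hB, ?_⟩
  rintro z (hz | hz)
  · rw [hgA hz, hfg z hz]
  · rw [hgB hz, hfg' z hz, Complex.exp_add, Complex.exp_int_mul_two_pi_mul_I, mul_one]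

lemma HasContLog.union_of_isOpen {X : Type*} [TopologicalSpace X] {A B : Set X} {f : X → ℂ}
    (hA : IsOpen A) (hB : IsOpen B) (hAB : IsPreconnected (A ∩ B))
    (h : HasContLog f A) (h' : HasContLog f B) : HasContLog f (A ∪ B) := by
  classical
  obtain ⟨g, hg, hfg⟩ := h
  obtain ⟨g', hg', hfg'⟩ := h'
  obtain ⟨n, hn⟩ := exists_eqOn_add_of_exp_eq hAB (hg.mono inter_subset_left)
    (hg'.mono inter_subset_right) fun z hz => by rw [← hfg z hz.1, hfg' z hz.2]
  have hgA : EqOn (A.piecewise g fun z => g' z + n * (2 * Real.pi * Complex.I)) g A :=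
    fun z hz => by simp [hz]
  have hgB : EqOn (A.piecewise g fun z => g' z + n * (2 * Real.pi * Complex.I))
      (fun z => g' z + n * (2 * Real.pi * Complex.I)) B := fun z hz => by
    by_cases hzA : z ∈ A
    · simp only [piecewise_eq_of_mem _ _ _ hzA]; exact hn z ⟨hzA, hz⟩
    · simp [hzA]
  refine ⟨_, (hg.congr hgA).union_of_isOpen ((hg'.add continuousOn_const).congr hgB) hA hB, ?_⟩
  rintro z (hz | hz)
  · rw [hgA hz, hfg z hz]
  · rw [hgB hz, hfg' z hz, Complex.exp_add, Complex.exp_int_mul_two_pi_mul_I, mul_one]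

/-- A nontrivial power has no continuous logarithm on a circle enclosing its zero. -/
lemma not_hasContLog_zpow_sphere {p : ℂ} {r : ℝ} (hr : 0 < r) {n : ℤ} (hn : n ≠ 0) :
    ¬ HasContLog (fun z => (z - p) ^ n) (sphere p r) := by
  rintro ⟨G, hG, hfG⟩
  have hc : Continuous fun t : ℝ => p + r * Complex.exp (t * Complex.I) := by fun_prop
  have hm : MapsTo (fun t : ℝ => p + r * Complex.exp (t * Complex.I)) univ (sphere p r) :=
    fun t _ => by simp [Complex.norm_exp_ofReal_mul_I, hr.le]
  have hr' : (r : ℂ) ≠ 0 := by exact_mod_cast hr.ne'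
  obtain ⟨m, hm⟩ := exists_eqOn_add_of_exp_eq (S := univ) isPreconnected_univ
    (hG.comp hc.continuousOn hm)
    (g' := fun t : ℝ => n * (Complex.log r + t * Complex.I)) (by fun_prop) fun t ht => by
      rw [Function.comp_apply, ← hfG _ (hm ht), Complex.exp_int_mul, Complex.exp_add,
        Complex.exp_log hr']
      simp
  have h0 := hm 0 trivial
  have h1 := hm (2 * Real.pi) trivial
  simp only [Function.comp_apply, Complex.ofReal_mul, Complex.ofReal_ofNat, Complex.exp_two_pi_mul_I,
    Complex.ofReal_zero, zero_mul, Complex.exp_zero] at h0 h1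
  rw [h0] at h1
  have : (n : ℂ) * (2 * Real.pi * Complex.I) = 0 := by linear_combination -h1
  simp [hn] at this

/-- Obstruction to a logarithm on the boundary of a bounded open set. -/
lemma not_hasContLog_frontier {U : Set ℂ} (hU : IsOpen U) (hUb : Bornology.IsBounded U) {p : ℂ}
    (hp : p ∈ U) {n : ℤ} (hn : n ≠ 0) {f : ℂ → ℂ} (hf : ContinuousOn f (closure U))
    (hf0 : ∀ z ∈ closure U, f z ≠ 0) :
    ¬ HasContLog (fun z => (z - p) ^ n / f z) (frontier U) := by
  classical
  rintro ⟨g, hg, hfg⟩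
  obtain ⟨G, hG⟩ := ContinuousMap.exists_restrict_eq (isClosed_frontier (s := U))
    ⟨(frontier U).domRestrict g, hg.domRestrict⟩
  have hGg : ∀ z ∈ frontier U, G z = g z := fun z hz => by
    simpa using DFunLike.congr_fun hG ⟨z, hz⟩
  have hpz : ∀ z ∉ U, z - p ≠ 0 := fun z hz h => hz (by rwa [sub_eq_zero.1 h])
  set F : ℂ → ℂ := U.piecewise (fun z => f z * Complex.exp (G z)) fun z => (z - p) ^ n with hF
  have hFc : Continuous F := by
    refine continuous_piecewise (fun z hz => ?_) (hf.mul (by fun_prop)) fun z hz => ?_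
    · rw [hGg z hz, ← hfg z hz, mul_div_cancel₀ _ (hf0 z (frontier_subset_closure hz))]
    · rw [hU.isClosed_compl.closure_eq] at hz
      exact ContinuousAt.continuousWithinAt
        (((continuous_id.sub continuous_const).continuousAt).zpow₀ n (Or.inl (hpz z hz)))
  have hF0 : ∀ z, F z ≠ 0 := fun z => by
    by_cases hz : z ∈ U
    · simpa [hF, hz] using hf0 z (subset_closure hz)
    · simpa [hF, hz] using zpow_ne_zero n (hpz z hz)
  obtain ⟨r, hr, hUr⟩ : ∃ r > 0, U ⊆ ball p r := by
    obtain ⟨r, hr⟩ := hUb.subset_ball p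
    exact ⟨max r 1, by simp, hr.trans (ball_subset_ball (le_max_left _ _))⟩
  refine not_hasContLog_zpow_sphere (p := p) hr hn
    (((HasContLog.of_simplyConnected hFc hF0).mono (subset_univ _)).congr fun z hz => ?_)
  have hzU : z ∉ U := fun h => (mem_ball.1 (hUr h)).ne hz
  simp [hF, hzU]

/-- Points in the same component of the complement give a quotient with a logarithm. -/
lemma hasContLog_div_of_isPreconnected {K S : Set ℂ} (hK : IsCompact K) (hS : IsPreconnected S)
    (hSK : Disjoint S K) {p q : ℂ} (hp : p ∈ S) (hq : q ∈ S) :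
    HasContLog (fun z => (z - p) / (z - q)) K := by
  have hne : ∀ x ∈ S, ∀ z ∈ K, z - x ≠ 0 := fun x hx z hz h =>
    hSK.ne_of_mem hx hz (sub_eq_zero.1 h).symm
  refine hS.induction₂ (fun p q => HasContLog (fun z => (z - p) / (z - q)) K) ?_ ?_ ?_ hp hq
  · intro x hx
    have hx' : x ∈ Kᶜ := fun h => hSK.ne_of_mem hx h rfl
    obtain ⟨ε, hε, hb⟩ := Metric.isOpen_iff.1 hK.isClosed.isOpen_compl x hx'
    refine nhdsWithin_le_nhds (Filter.mem_of_superset (ball_mem_nhds x hε) fun y hy => ?_)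
    have h1 : ∀ z ∈ K, ε ≤ ‖z - x‖ := fun z hz => by
      by_contra! h
      exact hb (mem_ball_iff_norm.2 h) hz
    refine HasContLog.congr (f := fun z => ((z - y) / (z - x))⁻¹) (HasContLog.inv
      (HasContLog.of_norm_sub_one_lt ?_ fun z hz => ?_)) fun z hz => by simp
    · exact ContinuousOn.div (by fun_prop) (by fun_prop) (hne x hx)
    · have h0 := hne x hx z hz
      rw [div_sub_one h0, norm_div, div_lt_one (norm_pos_iff.2 h0)]
      refine lt_of_lt_of_le ?_ (h1 z hz)
      rw [mem_ball_iff_norm, norm_sub_rev] at hy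
      simpa using hy
  · intro x y w hx hy hw h1 h2
    refine (h1.mul h2).congr fun z hz => ?_
    have := hne y hy z hz
    field_simp
  · intro x y hx hy h
    exact h.inv.congr fun z hz => by simp

lemma isPreconnected_compl_closedBall (c : ℂ) (r : ℝ) : IsPreconnected (closedBall c r)ᶜ := by
  rcases lt_or_ge r 0 with hr | hr
  · simpa [closedBall_eq_empty.2 hr] using isPreconnected_univ
  have : (closedBall c r)ᶜ = (fun w : ℝ × ℂ => c + w.1 * w.2) '' (Ioi r ×ˢ sphere (0 : ℂ) 1) := by
    ext z
    simp only [mem_compl_iff, mem_closedBall, not_le, mem_image, mem_prod, mem_Ioi,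
      mem_sphere_iff_norm, sub_zero, Prod.exists]
    constructor
    · intro h
      rw [dist_eq_norm] at h
      have h0 : ‖z - c‖ ≠ 0 := (hr.trans_lt h).ne'
      refine ⟨‖z - c‖, (z - c) / ‖z - c‖, ⟨h, by simp [h0]⟩, ?_⟩
      have : (‖z - c‖ : ℂ) ≠ 0 := by exact_mod_cast h0
      field_simp
      ring
    · rintro ⟨a, b, ⟨ha, hb⟩, rfl⟩
      simp [dist_eq_norm, hb, abs_of_pos (hr.trans_lt ha), ha]
  rw [this]
  exact (isPreconnected_Ioi.prod (isPreconnected_sphere (by simp) 0 1)).image _ (by fun_prop)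

lemma connectedComponentIn_eq_of_not_isBounded {K : Set ℂ} (hK : Bornology.IsBounded K) {p q : ℂ}
    (hp : ¬ Bornology.IsBounded (connectedComponentIn Kᶜ p))
    (hq : ¬ Bornology.IsBounded (connectedComponentIn Kᶜ q)) :
    connectedComponentIn Kᶜ p = connectedComponentIn Kᶜ q := by
  obtain ⟨r, hr⟩ := hK.subset_closedBall 0
  have key : ∀ p, ¬ Bornology.IsBounded (connectedComponentIn Kᶜ p) →
      (closedBall (0 : ℂ) r)ᶜ ⊆ connectedComponentIn Kᶜ p := by
    intro p hp
    obtain ⟨x, hx, hxr⟩ : ∃ x ∈ connectedComponentIn Kᶜ p, x ∉ closedBall (0 : ℂ) r := by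
      by_contra! h
      exact hp (isBounded_closedBall.subset h)
    rw [connectedComponentIn_eq hx]
    exact (isPreconnected_compl_closedBall 0 r).subset_connectedComponentIn hxr
      (compl_subset_compl.2 hr)
  obtain ⟨x, hx⟩ : ((closedBall (0 : ℂ) r)ᶜ).Nonempty :=
    ⟨((|r| + 1 : ℝ) : ℂ), by
      simp only [mem_compl_iff, mem_closedBall, dist_zero_right, Complex.norm_real, not_le]
      rw [Real.norm_of_nonneg (by positivity)]
      linarith [le_abs_self r]⟩
  rw [connectedComponentIn_eq (key p hp hx), connectedComponentIn_eq (key q hq hx)]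

lemma frontier_connectedComponentIn_subset {K : Set ℂ} (hK : IsClosed K) {p : ℂ} :
    frontier (connectedComponentIn Kᶜ p) ⊆ K := by
  intro z hz
  by_contra hzK
  have ho : IsOpen (connectedComponentIn Kᶜ p) := hK.isOpen_compl.connectedComponentIn
  obtain ⟨y, hy, hyp⟩ := mem_closure_iff.1 hz.1 _
    (hK.isOpen_compl.connectedComponentIn (x := z)) (mem_connectedComponentIn hzK)
  rw [ho.frontier_eq] at hz
  apply hz.2
  rw [connectedComponentIn_eq hyp, ← connectedComponentIn_eq hy]
  exact mem_connectedComponentIn hzK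

/-- If the quotient has a logarithm on `K` then the two points lie in one component. -/
lemma connectedComponentIn_eq_of_hasContLog {K : Set ℂ} (hK : IsCompact K) {p q : ℂ}
    (hp : p ∉ K) (hq : q ∉ K) (h : HasContLog (fun z => (z - p) / (z - q)) K) :
    connectedComponentIn Kᶜ p = connectedComponentIn Kᶜ q := by
  have key : ∀ {p q : ℂ}, p ∉ K → q ∉ K → HasContLog (fun z => (z - p) / (z - q)) K →
      connectedComponentIn Kᶜ p ≠ connectedComponentIn Kᶜ q →
      ¬ Bornology.IsBounded (connectedComponentIn Kᶜ p) := by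
    intro p q hp hq h hne hb
    have hsub : frontier (connectedComponentIn Kᶜ p) ⊆ K :=
      frontier_connectedComponentIn_subset hK.isClosed
    refine not_hasContLog_frontier (n := 1) (hK.isClosed.isOpen_compl.connectedComponentIn) hb
      (mem_connectedComponentIn hp) one_ne_zero (f := fun z => z - q) (by fun_prop) ?_
      ((h.mono hsub).congr fun z _ => by simp)
    intro z hz h0
    rw [sub_eq_zero] at h0
    subst h0
    rw [closure_eq_self_union_frontier] at hz
    rcases hz with hz | hz
    · exact hne (connectedComponentIn_eq hz)
    · exact hq (hsub hz)
  by_contra hne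
  exact hne (connectedComponentIn_eq_of_not_isBounded hK.isBounded (key hp hq h hne)
    (key hq hp (h.inv.congr fun z _ => by simp) (Ne.symm hne)))

/-- **Janiszewski's theorem**. -/
theorem connectedComponentIn_compl_union_eq {A B S T : Set ℂ} (hA : IsCompact A) (hB : IsCompact B)
    (hAB : IsPreconnected (A ∩ B)) (hS : IsPreconnected S) (hT : IsPreconnected T)
    (hSA : Disjoint S A) (hTB : Disjoint T B) {p q : ℂ} (hpS : p ∈ S) (hqS : q ∈ S)
    (hpT : p ∈ T) (hqT : q ∈ T) :
    connectedComponentIn (A ∪ B)ᶜ p = connectedComponentIn (A ∪ B)ᶜ q := by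
  have hne : ∀ x ∈ S, x ∈ T → x ∉ A ∪ B := by
    rintro x hx hx' (h | h)
    exacts [hSA.ne_of_mem hx h rfl, hTB.ne_of_mem hx' h rfl]
  exact connectedComponentIn_eq_of_hasContLog (hA.union hB) (hne p hpS hpT) (hne q hqS hqT)
    (.union_of_isClosed hA.isClosed hB.isClosed hAB
      (hasContLog_div_of_isPreconnected hA hS hSA hpS hqS)
      (hasContLog_div_of_isPreconnected hB hT hTB hpT hqT))

/-- The quotient of the distances to the ends of a path has a logarithm off the path. -/
lemma hasContLog_div_compl_path {x y : ℂ} (γ : Path x y) :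
    HasContLog (fun z => (z - x) / (z - y)) (range γ)ᶜ := by
  have hne : ∀ (z : ((range γ)ᶜ : Set ℂ)) t, (z : ℂ) - γ t ≠ 0 := fun z t h =>
    z.2 ⟨t, (sub_eq_zero.1 h).symm⟩
  have hx : ∀ (z : ((range γ)ᶜ : Set ℂ)), (z : ℂ) - x ≠ 0 := fun z => by simpa using hne z 0
  have hc : Continuous fun w : unitInterval × ((range γ)ᶜ : Set ℂ) =>
      ((w.2 : ℂ) - x) / ((w.2 : ℂ) - γ w.1) :=
    Continuous.div (by fun_prop) (by fun_prop) fun w => hne _ _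
  let H : C(unitInterval × ((range γ)ᶜ : Set ℂ), {z : ℂ // z ≠ 0}) :=
    ⟨fun w => ⟨_, div_ne_zero (hx w.2) (hne w.2 w.1)⟩, hc.subtype_mk _⟩
  have H0 : ∀ a, H (0, a) = (fun z : ℂ => (⟨_, z.exp_ne_zero⟩ : {z : ℂ // z ≠ 0}))
      ((0 : C(((range γ)ᶜ : Set ℂ), ℂ)) a) := fun a => by
    ext; simp [H, div_self (hx a)]
  let L := Complex.isCoveringMap_exp.liftHomotopy H 0 H0
  have hL : ∀ w, ((w.2 : ℂ) - x) / ((w.2 : ℂ) - γ w.1) = Complex.exp (L w) := fun w => by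
    have := congr_fun (Complex.isCoveringMap_exp.liftHomotopy_lifts H 0 H0) w
    exact (congr_arg Subtype.val this).symm
  classical
  refine ⟨fun z => if hz : z ∈ (range γ)ᶜ then L (1, ⟨z, hz⟩) else 0, ?_, fun z hz => ?_⟩
  · rw [continuousOn_iff_continuous_domRestrict]
    have : Continuous fun z : ((range γ)ᶜ : Set ℂ) => L (1, z) := by fun_prop
    convert this using 2 with z
    simp [domRestrict]
  · simp only [hz, dite_true]
    simpa using hL (1, ⟨z, hz⟩)

/-- Two paths with the same distinct ends and otherwise disjoint separate the plane. -/
theorem not_isPreconnected_compl_union_range {x y : ℂ} (hxy : x ≠ y) (γ δ : Path x y)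
    (h : range γ ∩ range δ = {x, y}) : ¬ IsPreconnected (range γ ∪ range δ)ᶜ := by
  intro hc
  have h1 := HasContLog.union_of_isOpen (isCompact_range γ.continuous).isClosed.isOpen_compl
    (isCompact_range δ.continuous).isClosed.isOpen_compl (by rwa [← compl_union])
    (hasContLog_div_compl_path γ) (hasContLog_div_compl_path δ)
  rw [← compl_inter, h] at h1
  have hd : 0 < dist x y := dist_pos.2 hxy
  have hf : frontier (ball x (dist x y / 2)) = sphere x (dist x y / 2) :=
    frontier_ball x (by positivity)
  refine not_hasContLog_frontier (n := 1) (f := fun z => z - y) (p := x) isOpen_ball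
    (isBounded_ball (x := x) (r := dist x y / 2)) (mem_ball_self (by positivity)) one_ne_zero
    (by fun_prop) ?_ ?_
  · intro z hz h0
    rw [sub_eq_zero] at h0
    subst h0
    have := closure_ball_subset_closedBall hz
    rw [mem_closedBall, dist_comm] at this
    linarith
  · rw [hf]
    refine (h1.mono ?_).congr fun z _ => by simp
    rintro z hz (rfl | rfl)
    · rw [mem_sphere, dist_self] at hz; linarith
    · rw [mem_sphere, dist_comm] at hz; linarith

/-- A parametrization of a Jordan curve by the unit circle, with its inverse. -/
structure JordanParam (H : Set ℂ) (α β : ℂ → ℂ) : Prop where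
  cont : ContinuousOn α (sphere 0 1)
  cont_inv : ContinuousOn β H
  mapsTo : MapsTo α (sphere 0 1) H
  mapsTo_inv : MapsTo β H (sphere 0 1)
  left_inv : ∀ u ∈ sphere (0 : ℂ) 1, β (α u) = u
  right_inv : ∀ z ∈ H, α (β z) = z

lemma exists_jordanParam {H : Set ℂ} (e : H ≃ₜ (sphere (0 : ℂ) 1 : Set ℂ)) :
    ∃ α β, JordanParam H α β := by
  classical
  refine ⟨fun u => if hu : u ∈ sphere (0 : ℂ) 1 then e.symm ⟨u, hu⟩ else 0,
    fun z => if hz : z ∈ H then e ⟨z, hz⟩ else 0, ?_, ?_, ?_, ?_, ?_, ?_⟩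
  · rw [continuousOn_iff_continuous_domRestrict]
    have : Continuous fun u : sphere (0 : ℂ) 1 => (e.symm u : ℂ) := by fun_prop
    convert this using 2 with u
    simp [domRestrict]
  · rw [continuousOn_iff_continuous_domRestrict]
    have : Continuous fun u : H => (e u : ℂ) := by fun_prop
    convert this using 2 with u
    simp [domRestrict]
  · intro u hu
    simp only [hu, dite_true, Subtype.coe_prop]
  · intro u hu
    simp only [hu, dite_true, Subtype.coe_prop]
  · intro u hu
    simp only [hu, dite_true, Subtype.coe_prop, Subtype.coe_eta, Homeomorph.apply_symm_apply]
  · intro u hu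
    simp only [hu, dite_true, Subtype.coe_prop, Subtype.coe_eta, Homeomorph.symm_apply_apply]

lemma exp_mul_I_mem_sphere (t : ℝ) : Complex.exp (t * Complex.I) ∈ sphere (0 : ℂ) 1 := by
  simp [Complex.norm_exp_ofReal_mul_I]

lemma mul_exp_mul_I_mem_sphere {u : ℂ} (hu : u ∈ sphere (0 : ℂ) 1) (t : ℝ) :
    u * Complex.exp (t * Complex.I) ∈ sphere (0 : ℂ) 1 := by
  simp_all [Complex.norm_exp_ofReal_mul_I]

lemma exp_arg_mul_I_of_mem_sphere {u : ℂ} (hu : u ∈ sphere (0 : ℂ) 1) :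
    Complex.exp (u.arg * Complex.I) = u := by
  have := Complex.norm_mul_exp_arg_mul_I u
  simp_all

lemma ne_zero_of_mem_circle {u : ℂ} (hu : u ∈ sphere (0 : ℂ) 1) : u ≠ 0 := by
  rintro rfl; simp at hu

namespace JordanParam

variable {H : Set ℂ} {α β : ℂ → ℂ}

lemma image_eq (h : JordanParam H α β) : α '' sphere 0 1 = H :=
  Subset.antisymm h.mapsTo.image_subset fun z hz => ⟨β z, h.mapsTo_inv hz, h.right_inv z hz⟩

lemma isCompact (h : JordanParam H α β) : IsCompact H :=
  h.image_eq ▸ (isCompact_sphere 0 1).image_of_continuousOn h.cont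

lemma isClosed (h : JordanParam H α β) : IsClosed H := h.isCompact.isClosed

lemma isPreconnected (h : JordanParam H α β) : IsPreconnected H :=
  h.image_eq ▸ (isPreconnected_sphere (by simp) 0 1).image _ h.cont

lemma nonempty (h : JordanParam H α β) : H.Nonempty :=
  ⟨α 1, h.mapsTo (by simp)⟩

lemma continuous_mul_exp (h : JordanParam H α β) {u : ℂ} (hu : u ∈ sphere (0 : ℂ) 1) :
    Continuous fun t : ℝ => α (u * Complex.exp (t * Complex.I)) :=
  h.cont.comp_continuous (by fun_prop) (mul_exp_mul_I_mem_sphere hu)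

lemma isPreconnected_diff_singleton (h : JordanParam H α β) {x : ℂ} (hx : x ∈ H) :
    IsPreconnected (H \ {x}) := by
  have hu := h.mapsTo_inv hx
  have hu' : -β x ∈ sphere (0 : ℂ) 1 := by simpa using hu
  have : H \ {x} = (fun t : ℝ => α (-β x * Complex.exp (t * Complex.I))) ''
      Ioo (-Real.pi) Real.pi := by
    ext z
    constructor
    · rintro ⟨hz, hzx⟩
      have hw : β z / -β x ∈ sphere (0 : ℂ) 1 := by
        have := h.mapsTo_inv hz
        simp_all
      have h0 := ne_zero_of_mem_circle hu
      refine ⟨(β z / -β x).arg, ⟨Complex.neg_pi_lt_arg _, (Complex.arg_le_pi _).lt_of_ne ?_⟩, ?_⟩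
      · intro hpi
        have h1 := exp_arg_mul_I_of_mem_sphere hw
        rw [hpi, Complex.exp_pi_mul_I] at h1
        have h2 : β z = β x := by field_simp at h1; exact (neg_inj.1 h1).symm
        exact hzx (by rw [mem_singleton_iff, ← h.right_inv z hz, h2, h.right_inv x hx])
      · simp only [exp_arg_mul_I_of_mem_sphere hw]
        rw [mul_div_cancel₀ _ (neg_ne_zero.2 h0), h.right_inv z hz]
    · rintro ⟨t, ht, rfl⟩
      refine ⟨h.mapsTo (mul_exp_mul_I_mem_sphere hu' t), fun heq => ?_⟩
      have h1 := congr_arg β (mem_singleton_iff.1 heq)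
      rw [h.left_inv _ (mul_exp_mul_I_mem_sphere hu' t)] at h1
      have h0 := ne_zero_of_mem_circle hu
      have h2 : Complex.exp (t * Complex.I) = -1 := by
        apply mul_left_cancel₀ h0; linear_combination -h1
      have h3 := congr_arg Complex.arg h2
      rw [Complex.arg_neg_one, Complex.arg_exp_mul_I, toIocMod_eq_self Real.two_pi_pos |>.2
        ⟨ht.1, by linarith [ht.2]⟩] at h3
      exact ht.2.ne h3
  rw [this]
  exact isPreconnected_Ioo.image _ (h.continuous_mul_exp hu').continuousOn

lemma hasContLog_diff_singleton (h : JordanParam H α β) {x : ℂ} (hx : x ∈ H) {f : ℂ → ℂ}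
    (hf : ContinuousOn f H) (hf0 : ∀ z ∈ H, f z ≠ 0) : HasContLog f (H \ {x}) := by
  have hu := h.mapsTo_inv hx
  have hu' : -β x ∈ sphere (0 : ℂ) 1 := by simpa using hu
  have h0 := ne_zero_of_mem_circle hu
  have hm : ∀ t : ℝ, α (-β x * Complex.exp (t * Complex.I)) ∈ H := fun t =>
    h.mapsTo (mul_exp_mul_I_mem_sphere hu' t)
  have hl := HasContLog.of_simplyConnected
    (f := fun t : ℝ => f (α (-β x * Complex.exp (t * Complex.I))))
    (hf.comp_continuous (h.continuous_mul_exp hu') hm) fun t => hf0 _ (hm t)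
  have hw : ∀ z ∈ H \ {x}, β z / -β x ∈ sphere (0 : ℂ) 1 := fun z hz => by
    have := h.mapsTo_inv hz.1
    simp_all
  refine (hl.comp (φ := fun z => (β z / -β x).arg) (M := H \ {x}) ?_ (mapsTo_univ _ _)).congr ?_
  · intro z hz
    refine ContinuousAt.comp_continuousWithinAt (f := fun z => β z / -β x)
      (Complex.continuousAt_arg ?_) (((h.cont_inv.mono sdiff_subset).div_const _) z hz)
    rw [Complex.mem_slitPlane_iff_arg]
    refine ⟨fun hpi => ?_, ne_zero_of_mem_circle (hw z hz)⟩
    have h1 := exp_arg_mul_I_of_mem_sphere (hw z hz)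
    rw [hpi, Complex.exp_pi_mul_I] at h1
    have h2 : β z = β x := by field_simp at h1; exact (neg_inj.1 h1).symm
    exact hz.2 (by rw [mem_singleton_iff, ← h.right_inv z hz.1, h2, h.right_inv x hx])
  · intro z hz
    simp only [Function.comp_apply, exp_arg_mul_I_of_mem_sphere (hw z hz)]
    rw [mul_div_cancel₀ _ (neg_ne_zero.2 h0), h.right_inv z hz.1]

lemma exists_zpow_hasContLog (h : JordanParam H α β) {f : ℂ → ℂ}
    (hf : ContinuousOn f H) (hf0 : ∀ z ∈ H, f z ≠ 0) :
    ∃ n : ℤ, HasContLog (fun z => f z / β z ^ n) H := by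
  have h1 : (1 : ℂ) ∈ sphere (0 : ℂ) 1 := by simp
  have hm : ∀ t : ℝ, α (1 * Complex.exp (t * Complex.I)) ∈ H := fun t =>
    h.mapsTo (mul_exp_mul_I_mem_sphere h1 t)
  obtain ⟨k, hk, hfk⟩ := HasContLog.of_simplyConnected
    (f := fun t : ℝ => f (α (1 * Complex.exp (t * Complex.I))))
    (hf.comp_continuous (h.continuous_mul_exp h1) hm) fun t => hf0 _ (hm t)
  rw [← continuousOn_univ.symm.eq] at hk
  obtain ⟨n, hn⟩ := exists_eqOn_add_of_exp_eq (S := (univ : Set ℝ)) isPreconnected_univ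
    (g := fun t => k (t + 2 * Real.pi)) (g' := k) (by fun_prop) (by fun_prop) fun t _ => by
      rw [← hfk _ trivial, ← hfk _ trivial]
      have : Complex.exp (((t + 2 * Real.pi : ℝ) : ℂ) * Complex.I) = Complex.exp (t * Complex.I) := by
        push_cast
        rw [add_mul, Complex.exp_add, Complex.exp_two_pi_mul_I, mul_one]
      simp only [this]
  have hper : Function.Periodic (fun t : ℝ => k t - n * (t * Complex.I)) (2 * Real.pi) := fun t => by
    simp only [hn t trivial]
    push_cast
    ring
  have hlc : Continuous (hper.lift : Real.Angle → ℂ) :=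
    continuous_coinduced_dom.2 (by
      show Continuous (fun t : ℝ => k t - n * (t * Complex.I))
      fun_prop)
  refine ⟨n, fun z => hper.lift ((β z).arg : Real.Angle), ?_, fun z hz => ?_⟩
  · intro z hz
    exact hlc.continuousAt.comp_continuousWithinAt
      (ContinuousAt.comp_continuousWithinAt (g := Real.Angle.coe ∘ Complex.arg)
        (Complex.continuousAt_arg_coe_angle (ne_zero_of_mem_circle (h.mapsTo_inv hz)))
        (h.cont_inv z hz))
  · have h2 := exp_arg_mul_I_of_mem_sphere (h.mapsTo_inv hz)
    show f z / β z ^ n = Complex.exp (k (β z).arg - n * ((β z).arg * Complex.I))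
    rw [Complex.exp_sub, Complex.exp_int_mul, h2, ← hfk _ trivial]
    simp only [h2, one_mul, h.right_inv z hz]

lemma frontier_eq (h : JordanParam H α β) {U : Set ℂ} (hU : IsOpen U) (hne : U.Nonempty)
    (hUb : Bornology.IsBounded U) (hUH : Disjoint U H) (hfr : frontier U ⊆ H) : frontier U = H := by
  obtain ⟨p, hp⟩ := hne
  refine hfr.antisymm fun x hx => ?_
  by_contra hxf
  refine not_hasContLog_frontier hU hUb hp (n := 1) one_ne_zero (f := fun _ => 1) (by fun_prop)
    (by simp) (((h.hasContLog_diff_singleton hx (f := fun z => z - p) (by fun_prop) ?_).mono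
      (subset_sdiff_singleton hfr hxf)).congr fun z _ => by simp)
  exact fun z hz h0 => hUH.ne_of_mem hp hz (sub_eq_zero.1 h0).symm

lemma exists_isBounded_component (h : JordanParam H α β) :
    ∃ p ∉ H, Bornology.IsBounded (connectedComponentIn Hᶜ p) := by
  have h1 : (1 : ℂ) ∈ sphere (0 : ℂ) 1 := by simp
  have hc := h.continuous_mul_exp h1
  simp only [one_mul] at hc
  have hne : α 1 ≠ α (-1) := fun heq => by
    have := congr_arg β heq
    rw [h.left_inv _ h1, h.left_inv _ (by simp)] at this
    norm_num [Complex.ext_iff] at this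
  let γ : Path (α 1) (α (-1)) :=
    ⟨⟨fun t => α (Complex.exp ((Real.pi * t : ℝ) * Complex.I)),
      hc.comp (f := fun t : unitInterval => Real.pi * (t : ℝ)) (by fun_prop)⟩, by simp, by simp⟩
  let δ : Path (α 1) (α (-1)) :=
    ⟨⟨fun t => α (Complex.exp ((-(Real.pi * t) : ℝ) * Complex.I)),
      hc.comp (f := fun t : unitInterval => -(Real.pi * (t : ℝ))) (by fun_prop)⟩, by simp,
      by simp [Complex.exp_neg]⟩
  have hγ : range γ = α '' {u ∈ sphere (0 : ℂ) 1 | 0 ≤ u.im} := by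
    ext z
    constructor
    · rintro ⟨t, rfl⟩
      refine ⟨_, ⟨exp_mul_I_mem_sphere _, ?_⟩, rfl⟩
      rw [Complex.exp_ofReal_mul_I_im]
      exact Real.sin_nonneg_of_nonneg_of_le_pi (mul_nonneg Real.pi_pos.le t.2.1)
        (mul_le_of_le_one_right Real.pi_pos.le t.2.2)
    · rintro ⟨u, ⟨hu, hi⟩, rfl⟩
      refine ⟨⟨u.arg / Real.pi, div_nonneg (Complex.arg_nonneg_iff.2 hi) Real.pi_pos.le,
        div_le_one_of_le₀ (Complex.arg_le_pi u) Real.pi_pos.le⟩, ?_⟩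
      show α (Complex.exp ((Real.pi * (u.arg / Real.pi) : ℝ) * Complex.I)) = α u
      rw [mul_div_cancel₀ _ Real.pi_ne_zero, exp_arg_mul_I_of_mem_sphere hu]
  have hδ : range δ = α '' {u ∈ sphere (0 : ℂ) 1 | u.im ≤ 0} := by
    ext z
    constructor
    · rintro ⟨t, rfl⟩
      refine ⟨_, ⟨exp_mul_I_mem_sphere _, ?_⟩, rfl⟩
      rw [Complex.exp_ofReal_mul_I_im, Real.sin_neg, neg_nonpos]
      exact Real.sin_nonneg_of_nonneg_of_le_pi (mul_nonneg Real.pi_pos.le t.2.1)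
        (mul_le_of_le_one_right Real.pi_pos.le t.2.2)
    · rintro ⟨u, ⟨hu, hi⟩, rfl⟩
      have hu' : (starRingEnd ℂ) u ∈ sphere (0 : ℂ) 1 := by simpa using hu
      refine ⟨⟨((starRingEnd ℂ) u).arg / Real.pi,
        div_nonneg (Complex.arg_nonneg_iff.2 (by simpa using hi)) Real.pi_pos.le,
        div_le_one_of_le₀ (Complex.arg_le_pi _) Real.pi_pos.le⟩, ?_⟩
      show α (Complex.exp ((-(Real.pi * (((starRingEnd ℂ) u).arg / Real.pi)) : ℝ) * Complex.I)) = α u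
      rw [mul_div_cancel₀ _ Real.pi_ne_zero, Complex.ofReal_neg, neg_mul, Complex.exp_neg,
        exp_arg_mul_I_of_mem_sphere hu', Complex.inv_def]
      have : ‖u‖ = 1 := by simpa using hu
      simp [Complex.normSq_eq_norm_sq, this]
  have hU : range γ ∪ range δ = H := by
    rw [hγ, hδ, ← image_union, ← h.image_eq]
    congr 1
    ext u
    simp only [mem_union, mem_ofPred_eq]
    have := le_total 0 u.im
    tauto
  have hI : range γ ∩ range δ = {α 1, α (-1)} := by
    refine Subset.antisymm ?_ ?_
    · rw [hγ, hδ]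
      rintro _ ⟨⟨u, ⟨hu, hui⟩, rfl⟩, v, ⟨hv, hvi⟩, hvu⟩
      have huv : v = u := by rw [← h.left_inv u hu, ← hvu, h.left_inv v hv]
      subst huv
      have him : v.im = 0 := le_antisymm hvi hui
      have hn : ‖v‖ = 1 := by simpa using hv
      have hv2 : v = (v.re : ℂ) := Complex.ext (by simp) (by simp [him])
      rw [hv2, Complex.norm_real, Real.norm_eq_abs, abs_eq (by norm_num)] at hn
      rcases hn with hn | hn <;> rw [hv2, hn] <;> simp
    · rintro z (rfl | rfl)
      · exact ⟨γ.source_mem_range, δ.source_mem_range⟩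
      · exact ⟨γ.target_mem_range, δ.target_mem_range⟩
  have hsep := not_isPreconnected_compl_union_range hne γ δ hI
  rw [hU] at hsep
  by_contra! hall
  apply hsep
  refine isPreconnected_of_forall_pair fun x hx y hy => ⟨connectedComponentIn Hᶜ x,
    connectedComponentIn_subset _ _, mem_connectedComponentIn hx, ?_,
    isPreconnected_connectedComponentIn⟩
  rw [connectedComponentIn_eq_of_not_isBounded h.isCompact.isBounded (hall x hx) (hall y hy)]
  exact mem_connectedComponentIn hy

lemma connectedComponentIn_eq_of_isBounded (h : JordanParam H α β) {p q : ℂ} (hp : p ∉ H)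
    (hq : q ∉ H) (hpb : Bornology.IsBounded (connectedComponentIn Hᶜ p))
    (hqb : Bornology.IsBounded (connectedComponentIn Hᶜ q)) :
    connectedComponentIn Hᶜ p = connectedComponentIn Hᶜ q := by
  by_contra hne
  have hpH : ∀ z ∈ H, z - p ≠ 0 := fun z hz h0 => hp (by rwa [← sub_eq_zero.1 h0])
  have hqH : ∀ z ∈ H, z - q ≠ 0 := fun z hz h0 => hq (by rwa [← sub_eq_zero.1 h0])
  obtain ⟨n, hn⟩ := h.exists_zpow_hasContLog (f := fun z => z - p) (by fun_prop) hpH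
  obtain ⟨m, hm⟩ := h.exists_zpow_hasContLog (f := fun z => z - q) (by fun_prop) hqH
  have hop : ∀ p, IsOpen (connectedComponentIn Hᶜ p) := fun p =>
    h.isClosed.isOpen_compl.connectedComponentIn
  have hfr : ∀ p, frontier (connectedComponentIn Hᶜ p) ⊆ H := fun p =>
    frontier_connectedComponentIn_subset h.isClosed
  have hqc : ∀ z ∈ closure (connectedComponentIn Hᶜ p), z - q ≠ 0 := by
    intro z hz h0
    rw [sub_eq_zero] at h0
    subst h0
    rw [closure_eq_self_union_frontier] at hz
    rcases hz with hz | hz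
    · exact hne (connectedComponentIn_eq hz)
    · exact hq (hfr p hz)
  have hm0 : m = 0 := by
    by_contra hm0
    refine not_hasContLog_frontier (hop p) hpb (mem_connectedComponentIn hp) hm0
      (f := fun z => (z - q) ^ n) ?_ (fun z hz => zpow_ne_zero _ (hqc z hz)) ?_
    · exact ContinuousOn.zpow₀ (by fun_prop) _ fun z hz => Or.inl (hqc z hz)
    · refine (((hn.zpow m).div (hm.zpow n)).mono (hfr p)).congr fun z hz => ?_
      have h1 := hpH z (hfr p hz)
      have h2 := hqH z (hfr p hz)
      have h3 := ne_zero_of_mem_circle (h.mapsTo_inv (hfr p hz))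
      simp only [div_zpow, ← zpow_mul, mul_comm n m]
      have h4 := zpow_ne_zero (m * n) h3
      field_simp
  subst hm0
  exact not_hasContLog_frontier (hop q) hqb (mem_connectedComponentIn hq) (n := 1) one_ne_zero
    (f := fun _ => 1) (by fun_prop) (by simp) ((hm.mono (hfr q)).congr fun z _ => by simp)

/-- Small subsets of a Jordan curve lie in small subcontinua. -/
lemma exists_small_continuum (h : JordanParam H α β) {ε : ℝ} (hε : 0 < ε) :
    ∃ δ > 0, ∀ S ⊆ H, (∀ x ∈ S, ∀ y ∈ S, dist x y < δ) →
      ∃ J ⊆ H, IsCompact J ∧ IsPreconnected J ∧ S ⊆ J ∧ ∀ x ∈ J, ∀ y ∈ J, dist x y < ε := by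
  obtain ⟨η, hη, hα⟩ := Metric.uniformContinuousOn_iff.1
    ((isCompact_sphere (0 : ℂ) 1).uniformContinuousOn_of_continuous h.cont) ε hε
  have harg : ∀ᶠ w in 𝓝 (1 : ℂ), |w.arg| < η / 4 := by
    have : ContinuousAt (fun w : ℂ => |w.arg|) 1 :=
      (Complex.continuousAt_arg (by simp)).abs
    exact this.eventually_lt continuousAt_const (by simpa using hη)
  obtain ⟨r, hr, hball⟩ := Metric.eventually_nhds_iff.1 harg
  obtain ⟨δ, hδ, hβ⟩ := Metric.uniformContinuousOn_iff.1
    (h.isCompact.uniformContinuousOn_of_continuous h.cont_inv) r hr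
  refine ⟨δ, hδ, fun S hS hSd => ?_⟩
  rcases S.eq_empty_or_nonempty with rfl | ⟨s, hs⟩
  · exact ⟨∅, empty_subset _, isCompact_empty, isPreconnected_empty, Subset.rfl, by simp⟩
  have hu := h.mapsTo_inv (hS hs)
  have hu0 := ne_zero_of_mem_circle hu
  have hun : ‖β s‖ = 1 := by simpa using hu
  refine ⟨(fun t : ℝ => α (β s * Complex.exp (t * Complex.I))) '' Icc (-(η / 4)) (η / 4),
    ?_, isCompact_Icc.image (h.continuous_mul_exp hu),
    isPreconnected_Icc.image _ (h.continuous_mul_exp hu).continuousOn, fun x hx => ?_, ?_⟩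
  · rintro _ ⟨t, -, rfl⟩
    exact h.mapsTo (mul_exp_mul_I_mem_sphere hu t)
  · have h1 : dist (β x / β s) 1 < r := by
      have := hβ x (hS hx) s (hS hs) (hSd x hx s hs)
      rwa [dist_eq_norm, div_sub_one hu0, norm_div, hun, div_one, ← dist_eq_norm]
    have hw : β x / β s ∈ sphere (0 : ℂ) 1 := by
      have := h.mapsTo_inv (hS hx)
      simp_all
    refine ⟨(β x / β s).arg, abs_le.1 (hball h1).le, ?_⟩
    simp only [exp_arg_mul_I_of_mem_sphere hw]
    rw [mul_div_cancel₀ _ hu0, h.right_inv x (hS hx)]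
  · have hd : ∀ t ∈ Icc (-(η / 4)) (η / 4),
        dist (β s * Complex.exp (t * Complex.I)) (β s) ≤ η / 4 := fun t ht => by
      rw [dist_eq_norm, ← mul_sub_one, norm_mul, hun, one_mul, mul_comm]
      exact (Real.norm_exp_I_mul_ofReal_sub_one_le).trans (abs_le.2 ht)
    rintro _ ⟨t, ht, rfl⟩ _ ⟨t', ht', rfl⟩
    refine hα _ (mul_exp_mul_I_mem_sphere hu t) _ (mul_exp_mul_I_mem_sphere hu t') ?_
    linarith [dist_triangle_right (β s * Complex.exp (t * Complex.I))
      (β s * Complex.exp (t' * Complex.I)) (β s), hd t ht, hd t' ht']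

end JordanParam

/-- The Cauchy-Riemann operator `i ∂ₓ - ∂ᵧ`, a multiple of `∂/∂z̄`. -/
def dbar (G : ℂ → ℂ) (w : ℂ) : ℂ :=
  Complex.I * fderiv ℝ G w 1 - fderiv ℝ G w Complex.I

lemma ContDiff.continuous_dbar {G : ℂ → ℂ} (hG : ContDiff ℝ 1 G) : Continuous (dbar G) := by
  have := hG.continuous_fderiv one_ne_zero
  unfold dbar
  fun_prop

lemma dbar_mul {χ h : ℂ → ℂ} {w : ℂ} (hχ : DifferentiableAt ℝ χ w) (hh : DifferentiableAt ℂ h w) :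
    dbar (fun z => χ z * h z) w = dbar χ w * h w := by
  have h1 := hh.hasDerivAt.hasFDerivAt.restrictScalars ℝ
  have h2 : HasFDerivAt (fun z => χ z * h z) _ w := hχ.hasFDerivAt.mul h1
  unfold dbar
  rw [h2.fderiv]
  simp
  ring

lemma dbar_congr {χ h : ℂ → ℂ} {w : ℂ} (hw : χ =ᶠ[𝓝 w] h) : dbar χ w = dbar h w := by
  unfold dbar
  rw [hw.fderiv_eq]

lemma dbar_const (a w : ℂ) : dbar (fun _ => a) w = 0 := by
  simp [dbar]

lemma integral_boundary_square {G : ℂ → ℂ} (hG : ContDiff ℝ 1 G) (z : ℂ) (R : ℝ) :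
    (∫ x : ℝ in z.re - R..z.re + R, G (x + (z.im - R : ℝ) * Complex.I)) -
      (∫ x : ℝ in z.re - R..z.re + R, G (x + (z.im + R : ℝ) * Complex.I)) +
      Complex.I * (∫ y : ℝ in z.im - R..z.im + R, G ((z.re + R : ℝ) + y * Complex.I)) -
      Complex.I * ∫ y : ℝ in z.im - R..z.im + R, G ((z.re - R : ℝ) + y * Complex.I) =
      ∫ x : ℝ in z.re - R..z.re + R, ∫ y : ℝ in z.im - R..z.im + R, dbar G (x + y * Complex.I) := by
  have := Complex.integral_boundary_rect_of_hasFDerivAt_real_off_countable G (fderiv ℝ G)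
    ⟨z.re - R, z.im - R⟩ ⟨z.re + R, z.im + R⟩ ∅ countable_empty hG.continuous.continuousOn
    (fun x _ => (hG.differentiable one_ne_zero x).hasFDerivAt)
    (hG.continuous_dbar.continuousOn.integrableOn_compact
      (isCompact_uIcc.reProdIm isCompact_uIcc))
  simpa only [smul_eq_mul, dbar] using this

lemma integral_square_eq {V : Type*} [NormedAddCommGroup V] [NormedSpace ℝ V] {E : ℂ → V} {z : ℂ}
    {R : ℝ} (hE : ∀ w, R ≤ dist w z → E w = 0) :
    ∫ x : ℝ in z.re - R..z.re + R, ∫ y : ℝ in z.im - R..z.im + R, E (x + y * Complex.I) =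
      ∫ x : ℝ, ∫ y : ℝ, E (x + y * Complex.I) := by
  have h1 : ∀ x y : ℝ, R ≤ |x - z.re| → E (x + y * Complex.I) = 0 := fun x y h => hE _ <| by
    rw [Complex.dist_eq]
    exact h.trans (by simpa using Complex.abs_re_le_norm (x + y * Complex.I - z))
  have h2 : ∀ x y : ℝ, R ≤ |y - z.im| → E (x + y * Complex.I) = 0 := fun x y h => hE _ <| by
    rw [Complex.dist_eq]
    exact h.trans (by simpa using Complex.abs_im_le_norm (x + y * Complex.I - z))
  have h3 : ∀ x : ℝ, ∫ y : ℝ in z.im - R..z.im + R, E (x + y * Complex.I) =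
      ∫ y : ℝ, E (x + y * Complex.I) := fun x =>
    intervalIntegral.integral_eq_integral_of_support_subset fun y hy => by
      have := not_le.1 (mt (h2 x y) hy)
      rw [abs_lt] at this
      constructor <;> linarith
  simp only [h3]
  refine intervalIntegral.integral_eq_integral_of_support_subset fun x hx => ?_
  have : ¬ R ≤ |x - z.re| := fun h => hx (by simp [h1 x _ h])
  rw [not_le, abs_lt] at this
  constructor <;> linarith

lemma integral_dbar_eq_of_eq_inv {G : ℂ → ℂ} (hG : ContDiff ℝ 1 G) {z : ℂ} {R : ℝ} (hR : 0 < R)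
    (h0 : ∀ w, R ≤ dist w z → G w = (w - z)⁻¹) :
    ∫ x : ℝ in z.re - R..z.re + R, ∫ y : ℝ in z.im - R..z.im + R, dbar G (x + y * Complex.I) =
      4 * Complex.I * (∫ x : ℝ in -R..R, R / (x ^ 2 + R ^ 2) : ℝ) := by
  have hRR : |R| = R := abs_of_pos hR
  have hR0 : (R : ℂ) ≠ 0 := by exact_mod_cast hR.ne'
  have hne : ∀ x : ℝ, (x : ℂ) ^ 2 + R ^ 2 ≠ 0 := fun x => by
    have : x ^ 2 + R ^ 2 ≠ 0 := by positivity
    exact_mod_cast this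
  have n1 : ∀ x : ℝ, (x : ℂ) - R * Complex.I ≠ 0 := fun x h => by
    have := congr_arg Complex.im h; simp at this; linarith
  have n2 : ∀ x : ℝ, (x : ℂ) + R * Complex.I ≠ 0 := fun x h => by
    have := congr_arg Complex.im h; simp at this; linarith
  have n3 : ∀ x : ℝ, (R : ℂ) + x * Complex.I ≠ 0 := fun x h => by
    have := congr_arg Complex.re h; simp at this; linarith
  have n4 : ∀ x : ℝ, -(R : ℂ) + x * Complex.I ≠ 0 := fun x h => by
    have := congr_arg Complex.re h; simp at this; linarith
  have e1 : ∫ x : ℝ in z.re - R..z.re + R, G (x + (z.im - R : ℝ) * Complex.I) =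
      ∫ x : ℝ in -R..R, ((x : ℂ) - R * Complex.I)⁻¹ := by
    rw [show z.re - R = -R + z.re by ring, show z.re + R = R + z.re by ring,
      ← intervalIntegral.integral_comp_add_right]
    congr 1 with x
    have hw : ((x + z.re : ℝ) : ℂ) + (z.im - R : ℝ) * Complex.I - z = x - R * Complex.I := by
      apply Complex.ext <;> simp
    rw [h0, hw]
    rw [Complex.dist_eq, hw]
    exact (Complex.abs_im_le_norm _).trans' (by simp [hRR])
  have e2 : ∫ x : ℝ in z.re - R..z.re + R, G (x + (z.im + R : ℝ) * Complex.I) =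
      ∫ x : ℝ in -R..R, ((x : ℂ) + R * Complex.I)⁻¹ := by
    rw [show z.re - R = -R + z.re by ring, show z.re + R = R + z.re by ring,
      ← intervalIntegral.integral_comp_add_right]
    congr 1 with x
    have hw : ((x + z.re : ℝ) : ℂ) + (z.im + R : ℝ) * Complex.I - z = x + R * Complex.I := by
      apply Complex.ext <;> simp
    rw [h0, hw]
    rw [Complex.dist_eq, hw]
    exact (Complex.abs_im_le_norm _).trans' (by simp [hRR])
  have e3 : ∫ y : ℝ in z.im - R..z.im + R, G ((z.re + R : ℝ) + y * Complex.I) =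
      ∫ x : ℝ in -R..R, ((R : ℂ) + x * Complex.I)⁻¹ := by
    rw [show z.im - R = -R + z.im by ring, show z.im + R = R + z.im by ring,
      ← intervalIntegral.integral_comp_add_right]
    congr 1 with x
    have hw : ((z.re + R : ℝ) : ℂ) + (x + z.im : ℝ) * Complex.I - z = R + x * Complex.I := by
      apply Complex.ext <;> simp
    rw [h0, hw]
    rw [Complex.dist_eq, hw]
    exact (Complex.abs_re_le_norm _).trans' (by simp [hRR])
  have e4 : ∫ y : ℝ in z.im - R..z.im + R, G ((z.re - R : ℝ) + y * Complex.I) =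
      ∫ x : ℝ in -R..R, (-(R : ℂ) + x * Complex.I)⁻¹ := by
    rw [show z.im - R = -R + z.im by ring, show z.im + R = R + z.im by ring,
      ← intervalIntegral.integral_comp_add_right]
    congr 1 with x
    have hw : ((z.re - R : ℝ) : ℂ) + (x + z.im : ℝ) * Complex.I - z = -R + x * Complex.I := by
      apply Complex.ext <;> simp
    rw [h0, hw]
    rw [Complex.dist_eq, hw]
    exact (Complex.abs_re_le_norm _).trans' (by simp [hRR])
  rw [← integral_boundary_square hG, e1, e2, e3, e4, ← intervalIntegral.integral_sub,
    ← intervalIntegral.integral_const_mul, ← intervalIntegral.integral_const_mul,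
    ← intervalIntegral.integral_add, ← intervalIntegral.integral_sub,
    ← intervalIntegral.integral_ofReal, ← intervalIntegral.integral_const_mul]
  · congr 1 with x
    have hI := Complex.I_sq
    push_cast
    have h1 := n1 x; have h2 := n2 x; have h3 := n3 x; have h4 := n4 x; have h5 := hne x
    have k1 : ((x : ℂ) - R * Complex.I) * (x + R * Complex.I) = x ^ 2 + R ^ 2 := by
      linear_combination (-R ^ 2 : ℂ) * hI
    have k3 : ((R : ℂ) + x * Complex.I) * (-R + x * Complex.I) = -(x ^ 2 + R ^ 2) := by
      linear_combination (x ^ 2 : ℂ) * hI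
    have k2 : ((x : ℂ) - R * Complex.I)⁻¹ - (x + R * Complex.I)⁻¹ =
        2 * Complex.I * (R / (x ^ 2 + R ^ 2)) := by
      rw [inv_sub_inv h1 h2, k1]; ring
    have k4 : ((R : ℂ) + x * Complex.I)⁻¹ - (-R + x * Complex.I)⁻¹ =
        2 * (R / (x ^ 2 + R ^ 2)) := by
      rw [inv_sub_inv h3 h4, k3]; field_simp; ring
    linear_combination k2 + Complex.I * k4
  all_goals
    apply Continuous.intervalIntegrable
    fun_prop (disch := assumption)

lemma exists_smooth_cutoff {K U : Set ℂ} (hK : IsCompact K) (hU : IsOpen U) (hKU : K ⊆ U) :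
    ∃ χ : ℂ → ℂ, ContDiff ℝ 1 χ ∧ (∃ L ⊆ U, IsCompact L ∧ ∀ z ∉ L, χ z = 0) ∧
      ∃ N, IsOpen N ∧ K ⊆ N ∧ ∀ z ∈ N, χ z = 1 := by
  obtain ⟨L, hL, hKL, hLU⟩ := exists_compact_between hK hU hKU
  obtain ⟨L', hL', hKL', hLU'⟩ := exists_compact_between hK isOpen_interior hKL
  obtain ⟨f, hf, -, hfs, hf1⟩ := exists_contMDiff_support_eq_eq_one_iff
    (n := 1) (modelWithCornersSelf ℝ ℂ) (isOpen_interior (s := L)) hL'.isClosed hLU'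
  refine ⟨fun z => f z, Complex.ofRealCLM.contDiff.comp hf.contDiff, ⟨L, hLU, hL, fun z hz => ?_⟩,
    interior L', isOpen_interior, hKL', fun z hz => ?_⟩
  · have : z ∉ Function.support f := fun h => hz (interior_subset (hfs ▸ h))
    simpa using this
  · simp [(hf1 z).1 (interior_subset hz)]

lemma continuous_dbar_mul {χ g : ℂ → ℂ} {L U : Set ℂ} (hχ : ContDiff ℝ 1 χ) (hU : IsOpen U)
    (hL : IsCompact L) (hLU : L ⊆ U) (h0 : ∀ z ∉ L, χ z = 0) (hg : ContinuousOn g U) :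
    Continuous fun w => dbar χ w * g w := by
  rw [continuous_iff_continuousAt]
  intro w
  by_cases hw : w ∈ U
  · exact hχ.continuous_dbar.continuousAt.mul (hg.continuousAt (hU.mem_nhds hw))
  · have : (fun w => dbar χ w * g w) =ᶠ[𝓝 w] fun _ => 0 := by
      filter_upwards [hL.isClosed.isOpen_compl.mem_nhds fun h => hw (hLU h)] with v hv
      rw [dbar_congr (h := fun _ => 0), dbar_const, zero_mul]
      filter_upwards [hL.isClosed.isOpen_compl.mem_nhds hv] with v hv using h0 v hv
    exact continuousAt_const.congr this.symm

/-- The Cauchy-Pompeiu formula for a cut-off holomorphic function. -/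
lemma integral_dbar_mul_inv {χ g : ℂ → ℂ} {L N U : Set ℂ} (hχ : ContDiff ℝ 1 χ) (hU : IsOpen U)
    (hL : IsCompact L) (hLU : L ⊆ U) (h0 : ∀ z ∉ L, χ z = 0) (hN : IsOpen N)
    (hN1 : ∀ z ∈ N, χ z = 1) (hg : DifferentiableOn ℂ g U) {R : ℝ} (hR : 0 < R) {z : ℂ}
    (hzN : z ∈ N) (hz0 : g z ≠ 0) (hLz : ∀ w, R ≤ dist w z → w ∉ L) :
    ∫ x : ℝ, ∫ y : ℝ, dbar χ (x + y * Complex.I) * g (x + y * Complex.I) *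
      (x + y * Complex.I - z)⁻¹ =
      -(4 * Complex.I * (∫ x : ℝ in -R..R, R / (x ^ 2 + R ^ 2) : ℝ)) * g z := by
  have hzU : z ∈ U := hLU (by by_contra h; simpa [hN1 z hzN] using h0 z h)
  have hd : DifferentiableOn ℂ (dslope g z) U :=
    (Complex.differentiableOn_dslope (hU.mem_nhds hzU)).2 hg
  set G : ℂ → ℂ := fun w => (1 - χ w) * (w - z)⁻¹ - (g z)⁻¹ * (χ w * dslope g z w) with hG
  have hA : ∀ w, (fun w => (1 - χ w) * (w - z)⁻¹) =ᶠ[𝓝 w] (fun _ => 0) ∨ w ≠ z := fun w => by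
    by_cases hw : w = z
    · left
      filter_upwards [hN.mem_nhds (hw ▸ hzN)] with v hv
      simp [hN1 v hv]
    · exact Or.inr hw
  have hB : ∀ w, (fun w => χ w * dslope g z w) =ᶠ[𝓝 w] (fun _ => 0) ∨ w ∈ U := fun w => by
    by_cases hw : w ∈ U
    · exact Or.inr hw
    · left
      filter_upwards [hL.isClosed.isOpen_compl.mem_nhds fun h => hw (hLU h)] with v hv
      simp [h0 v hv]
  have hcA : ContDiff ℝ 1 fun w => (1 - χ w) * (w - z)⁻¹ := by
    rw [contDiff_iff_contDiffAt]
    intro w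
    rcases hA w with h | h
    · exact contDiffAt_const.congr_of_eventuallyEq h
    · exact (contDiffAt_const.sub hχ.contDiffAt).mul
        ((contDiffAt_id.sub contDiffAt_const).inv (sub_ne_zero.2 h))
  have hcB : ContDiff ℝ 1 fun w => χ w * dslope g z w := by
    rw [contDiff_iff_contDiffAt]
    intro w
    rcases hB w with h | h
    · exact contDiffAt_const.congr_of_eventuallyEq h
    · exact hχ.contDiffAt.mul
        (((hd.contDiffOn hU).contDiffAt (hU.mem_nhds h)).restrict_scalars ℝ)
  have hGc : ContDiff ℝ 1 G := hcA.sub (contDiff_const.mul hcB)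
  have hdL : ∀ w ∉ L, dbar χ w = 0 := fun w hw => by
    rw [dbar_congr (h := fun _ => 0), dbar_const]
    filter_upwards [hL.isClosed.isOpen_compl.mem_nhds hw] with v hv using h0 v hv
  have hdz : dbar χ z = 0 := by
    rw [dbar_congr (h := fun _ => 1), dbar_const]
    filter_upwards [hN.mem_nhds hzN] with v hv using hN1 v hv
  have hdbar : ∀ w, dbar χ w * g w * (w - z)⁻¹ = -(g z) * dbar G w := by
    intro w
    have h1 : dbar G w = dbar (fun w => (1 - χ w) * (w - z)⁻¹) w -
        (g z)⁻¹ * dbar (fun w => χ w * dslope g z w) w := by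
      have e : HasFDerivAt G _ w := (hcA.differentiable one_ne_zero w).hasFDerivAt.sub
        ((hcB.differentiable one_ne_zero w).hasFDerivAt.const_mul (g z)⁻¹)
      unfold dbar
      rw [e.fderiv]
      simp
      ring
    have h2 : dbar (fun w => (1 - χ w) * (w - z)⁻¹) w = -(dbar χ w * (w - z)⁻¹) := by
      rcases eq_or_ne w z with rfl | hw
      · rw [dbar_congr ((hA w).resolve_right (by simp)), dbar_const, hdz]; simp
      · rw [dbar_mul (by exact (hχ.differentiable one_ne_zero w).const_sub 1)
          (by exact (differentiableAt_id.sub_const z).inv (sub_ne_zero.2 hw))]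
        have : dbar (fun w => 1 - χ w) w = -dbar χ w := by
          unfold dbar
          rw [fderiv_const_sub]
          simp
          ring
        rw [this]; ring
    have h3 : dbar (fun w => χ w * dslope g z w) w = dbar χ w * dslope g z w := by
      rcases hB w with h | h
      · by_cases hw : w ∈ U
        · exact dbar_mul (hχ.differentiable one_ne_zero w)
            ((hd w hw).differentiableAt (hU.mem_nhds hw))
        · rw [dbar_congr h, dbar_const, hdL w fun h => hw (hLU h), zero_mul]
      · exact dbar_mul (hχ.differentiable one_ne_zero w)
          ((hd w h).differentiableAt (hU.mem_nhds h))
    rw [h1, h2, h3]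
    rcases eq_or_ne w z with rfl | hw
    · simp [hdz]
    · rw [dslope_of_ne _ hw, slope_def_field]
      field_simp
      ring
  simp only [hdbar]
  simp only [MeasureTheory.integral_const_mul]
  rw [← integral_square_eq (z := z) (R := R), integral_dbar_eq_of_eq_inv hGc hR]
  · ring
  · intro w hw
    have := h0 w (hLz w hw)
    simp [hG, this]
  · intro w hw
    have h1 := hdbar w
    rw [hdL w (hLz w hw)] at h1
    simpa [hz0] using h1

lemma hasContLog_sub_of_isPreconnected_compl {K : Set ℂ} (hK : IsCompact K)
    (hKc : IsPreconnected Kᶜ) {a : ℂ} (ha : a ∉ K) : HasContLog (fun z => z - a) K := by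
  obtain ⟨r, hr0, hr⟩ := hK.isBounded.subset_ball_lt 0 0
  have hq : (r : ℂ) ∉ K := fun h => by
    have := hr h
    simp [abs_of_pos hr0] at this
  have hrc : (r : ℂ) ≠ 0 := by exact_mod_cast hr0.ne'
  have h1 := hasContLog_div_of_isPreconnected hK hKc disjoint_compl_left ha hq
  have h2 : HasContLog (fun z : ℂ => 1 - z / r) K :=
    .of_norm_sub_one_lt (by fun_prop) fun z hz => by
      have : ‖z‖ < r := by simpa using hr hz
      simpa [abs_of_pos hr0, div_lt_one hr0] using this
  refine (h1.mul (h2.mul (.const (c := -r) (by simpa using hrc)))).congr fun z hz => ?_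
  have : z - r ≠ 0 := fun h => hq (by rwa [← sub_eq_zero.1 h])
  simp only
  field_simp
  ring

lemma hasContLog_polynomial {K : Set ℂ} (hK : IsCompact K) (hKc : IsPreconnected Kᶜ)
    {P : Polynomial ℂ} (hP : P ≠ 0) (h : ∀ z ∈ K, P.eval z ≠ 0) :
    HasContLog (fun z => P.eval z) K := by
  have h1 : ∀ s : Multiset ℂ, (∀ a ∈ s, a ∉ K) →
      HasContLog (fun z => ((s.map fun a => z - a).prod)) K := by
    intro s
    induction s using Multiset.induction with
    | empty => exact fun _ => by simpa using HasContLog.const one_ne_zero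
    | cons a s ih =>
      intro hs
      simp only [Multiset.map_cons, Multiset.prod_cons]
      exact (hasContLog_sub_of_isPreconnected_compl hK hKc (hs a (by simp))).mul
        (ih fun b hb => hs b (by simp [hb]))
  refine (HasContLog.mul (.const (c := P.leadingCoeff) (by simpa using hP)) (h1 P.roots
    fun a ha haK => h a haK (Polynomial.isRoot_of_mem_roots ha))).congr fun z _ => ?_
  have := congr_arg (Polynomial.eval z) (IsAlgClosed.splits P).eq_prod_roots
  rw [this, Polynomial.eval_mul, Polynomial.eval_C, Polynomial.eval_multiset_prod, Multiset.map_map]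
  simp

lemma exists_rational_of_mem_span {K : Set ℂ} [CompactSpace K] {S : Set C(K, ℂ)}
    (hS : ∀ q ∈ S, ∃ w ∉ K, ∀ z : K, q z = (w - z)⁻¹) {q : C(K, ℂ)}
    (hq : q ∈ Submodule.span ℂ S) : ∃ P Q : Polynomial ℂ, (∀ z ∈ K, Q.eval z ≠ 0) ∧
      ∀ z : K, q z = P.eval (z : ℂ) / Q.eval (z : ℂ) := by
  induction hq using Submodule.span_induction with
  | mem q hq =>
    obtain ⟨w, hw, h⟩ := hS q hq
    exact ⟨1, Polynomial.C w - Polynomial.X, fun z hz h0 => hw (by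
      simp only [Polynomial.eval_sub, Polynomial.eval_C, Polynomial.eval_X] at h0
      rwa [sub_eq_zero.1 h0]), fun z => by simp [h z]⟩
  | zero => exact ⟨0, 1, by simp, by simp⟩
  | add q q' _ _ h h' =>
    obtain ⟨P, Q, hQ, e⟩ := h
    obtain ⟨P', Q', hQ', e'⟩ := h'
    refine ⟨P * Q' + Q * P', Q * Q', fun z hz => ?_, fun z => ?_⟩
    · simpa using ⟨hQ z hz, hQ' z hz⟩
    · simp [e z, e' z, div_add_div _ _ (hQ z z.2) (hQ' z z.2)]
  | smul a q _ h =>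
    obtain ⟨P, Q, hQ, e⟩ := h
    exact ⟨Polynomial.C a * P, Q, hQ, fun z => by simp [e z, mul_div_assoc]⟩

lemma integral_div_sq_add_sq_pos {R : ℝ} (hR : 0 < R) :
    0 < ∫ x : ℝ in -R..R, R / (x ^ 2 + R ^ 2) := by
  refine intervalIntegral.intervalIntegral_pos_of_pos_on ?_ (fun x _ => by positivity)
    (by linarith)
  exact (Continuous.div (by fun_prop) (by fun_prop) fun x => by positivity).intervalIntegrable _ _

set_option maxHeartbeats 800000 in
/-- A form of Runge's theorem: a nonvanishing holomorphic function on a neighbourhood of a compact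
set is a uniform limit of combinations of Cauchy kernels. -/
lemma exists_mem_closure_span_cauchy {K U : Set ℂ} (hK : IsCompact K) [CompactSpace K]
    (hU : IsOpen U) (hKU : K ⊆ U) {g : ℂ → ℂ} (hg : DifferentiableOn ℂ g U)
    (hg0 : ∀ z ∈ K, g z ≠ 0) : ∃ G ∈ closure (Submodule.span ℂ
      {q : C(K, ℂ) | ∃ w ∉ K, ∀ z : K, q z = (w - z)⁻¹} : Set C(K, ℂ)), ∀ z : K, G z = g z := by
  obtain ⟨χ, hχ, ⟨L, hLU, hL, h0⟩, N, hN, hKN, hN1⟩ := exists_smooth_cutoff hK hU hKU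
  obtain ⟨ρ, hρ0, hρ⟩ := (hK.union hL).isBounded.subset_ball_lt 0 0
  have hp := continuous_dbar_mul hχ hU hL hLU h0 hg.continuousOn
  have hpN : ∀ w ∈ N, dbar χ w = 0 := fun w hw => by
    rw [dbar_congr (h := fun _ => 1), dbar_const]
    filter_upwards [hN.mem_nhds hw] with v hv using hN1 v hv
  have hpL : ∀ w ∉ L, dbar χ w = 0 := fun w hw => by
    rw [dbar_congr (h := fun _ => 0), dbar_const]
    filter_upwards [hL.isClosed.isOpen_compl.mem_nhds hw] with v hv using h0 v hv
  have hQ : Continuous fun x : ℂ × K => dbar χ x.1 * g x.1 * (x.1 - x.2)⁻¹ := by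
    rw [continuous_iff_continuousAt]
    rintro ⟨w, z⟩
    by_cases hw : w ∈ N
    · refine (continuousAt_const (y := (0 : ℂ))).congr ?_
      filter_upwards [continuousAt_fst.preimage_mem_nhds (hN.mem_nhds hw)] with x hx
      rw [hpN _ hx]; simp
    · have hwz : w - z ≠ 0 := fun h => hw (hKN (sub_eq_zero.1 h ▸ z.2))
      exact (hp.continuousAt.comp (f := fun x : ℂ × K => x.1) continuousAt_fst).mul
        (ContinuousAt.inv₀ (by fun_prop) hwz)
  let Φ : C(ℂ, C(K, ℂ)) := ContinuousMap.curry ⟨_, hQ⟩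
  have hΦ : ∀ w z, Φ w z = dbar χ w * g w * (w - z)⁻¹ := fun w z => rfl
  let S : Set C(K, ℂ) := {q | ∃ w ∉ K, ∀ z : K, q z = (w - z)⁻¹}
  let M := (Submodule.span ℂ S).topologicalClosure
  have hΦM : ∀ w, Φ w ∈ M := fun w => by
    apply Submodule.le_topologicalClosure
    by_cases hw : w ∈ K
    · have : Φ w = 0 := by ext z; rw [hΦ, hpN w (hKN hw)]; simp
      rw [this]; exact Submodule.zero_mem _
    · have hc : Continuous fun z : K => (w - z : ℂ)⁻¹ :=
        Continuous.inv₀ (by fun_prop) fun z h => hw (sub_eq_zero.1 h ▸ z.2)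
      have : Φ w = (dbar χ w * g w) • (⟨_, hc⟩ : C(K, ℂ)) := by
        ext z; rw [hΦ]; simp
      rw [this]
      exact Submodule.smul_mem _ _ (Submodule.subset_span ⟨w, hw, fun z => rfl⟩)
  let Ψ : ℂ → M := fun w => ⟨Φ w, hΦM w⟩
  have hΨ : Continuous Ψ := Φ.continuous.subtype_mk _
  let b : M := ∫ x : ℝ in (0 : ℂ).re - ρ..(0 : ℂ).re + ρ,
    ∫ y : ℝ in (0 : ℂ).im - ρ..(0 : ℂ).im + ρ, Ψ (x + y * Complex.I)
  have hin : Continuous fun x : ℝ =>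
      ∫ y : ℝ in (0 : ℂ).im - ρ..(0 : ℂ).im + ρ, Ψ (x + y * Complex.I) :=
    intervalIntegral.continuous_parametric_intervalIntegral_of_continuous' (by
      exact hΨ.comp (by fun_prop)) _ _
  have hb : ∀ z : K, (b : C(K, ℂ)) z =
      -(4 * Complex.I * (∫ x : ℝ in -(2 * ρ)..(2 * ρ), (2 * ρ) / (x ^ 2 + (2 * ρ) ^ 2) : ℝ)) *
        g z := by
    intro z
    let ev : M →L[ℂ] ℂ := (ContinuousMap.evalCLM ℂ z).comp M.subtypeL
    have hev : ∀ q : M, ev q = (q : C(K, ℂ)) z := fun q => rfl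
    have hzρ : ‖(z : ℂ)‖ < ρ := by simpa using hρ (Or.inl z.2)
    have hLρ : ∀ w ∈ L, ‖w‖ < ρ := fun w hw => by simpa using hρ (Or.inr hw)
    rw [← hev, ← ContinuousLinearMap.intervalIntegral_comp_comm ev (hin.intervalIntegrable _ _)]
    have hinner : ∀ x : ℝ, ev (∫ y : ℝ in (0 : ℂ).im - ρ..(0 : ℂ).im + ρ, Ψ (x + y * Complex.I)) =
        ∫ y : ℝ in (0 : ℂ).im - ρ..(0 : ℂ).im + ρ, ev (Ψ (x + y * Complex.I)) := fun x =>
      (ContinuousLinearMap.intervalIntegral_comp_comm ev ((hΨ.comp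
        (by fun_prop : Continuous fun y : ℝ => (x + y * Complex.I : ℂ))).intervalIntegrable
        _ _)).symm
    simp only [hinner]
    rw [integral_square_eq (E := fun w => ev (Ψ w))]
    · exact integral_dbar_mul_inv hχ hU hL hLU h0 hN hN1 hg (R := 2 * ρ) (by linarith)
        (hKN z.2) (hg0 z z.2) fun w hw hwL => by
          have := hLρ w hwL
          rw [dist_eq_norm] at hw
          linarith [norm_sub_le w z]
    · intro w hw
      have : w ∉ L := fun h => by
        have := hLρ w h
        simp at hw
        linarith
      rw [hev]
      show Φ w z = 0
      rw [hΦ, hpL w this]; simp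
  have hpos := integral_div_sq_add_sq_pos (show 0 < 2 * ρ by linarith)
  have hc0 : -(4 * Complex.I *
      ((∫ x : ℝ in -(2 * ρ)..(2 * ρ), (2 * ρ) / (x ^ 2 + (2 * ρ) ^ 2) : ℝ) : ℂ)) ≠ 0 :=
    neg_ne_zero.2 (mul_ne_zero (mul_ne_zero (by norm_num) Complex.I_ne_zero)
      (Complex.ofReal_ne_zero.2 hpos.ne'))
  generalize -(4 * Complex.I *
      ((∫ x : ℝ in -(2 * ρ)..(2 * ρ), (2 * ρ) / (x ^ 2 + (2 * ρ) ^ 2) : ℝ) : ℂ)) = c at hb hc0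
  refine ⟨c⁻¹ • (b : C(K, ℂ)), Submodule.smul_mem _ _ b.2, fun z => ?_⟩
  rw [ContinuousMap.smul_apply, hb z, smul_eq_mul, inv_mul_cancel_left₀ hc0]

/-- A nonvanishing holomorphic function has a continuous logarithm on any compact set
with connected complement. -/
lemma hasContLog_of_differentiableOn {K U : Set ℂ} (hK : IsCompact K) (hKc : IsPreconnected Kᶜ)
    (hU : IsOpen U) (hKU : K ⊆ U) {g : ℂ → ℂ} (hg : DifferentiableOn ℂ g U)
    (hg0 : ∀ z ∈ K, g z ≠ 0) : HasContLog g K := by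
  rcases K.eq_empty_or_nonempty with rfl | hne
  · exact ⟨fun _ => 0, continuousOn_const, by simp⟩
  have : CompactSpace K := isCompact_iff_compactSpace.1 hK
  obtain ⟨G, hG, hGg⟩ := exists_mem_closure_span_cauchy hK hU hKU hg hg0
  have hgK : ContinuousOn g K := hg.continuousOn.mono hKU
  obtain ⟨m, hm, hmin⟩ := hK.exists_isMinOn hne hgK.norm
  have hm0 : 0 < ‖g m‖ := norm_pos_iff.2 (hg0 m hm)
  obtain ⟨q, hq, hqd⟩ := Metric.mem_closure_iff.1 hG _ hm0
  have hqg : ∀ z : K, ‖q z - g z‖ < ‖g z‖ := fun z => by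
    refine lt_of_lt_of_le ?_ (hmin z.2)
    have h1 := ContinuousMap.dist_apply_le_dist (f := G) (g := q) z
    rw [hGg, dist_comm, dist_eq_norm] at h1
    exact h1.trans_lt hqd
  obtain ⟨P, Q, hQ0, hPQ⟩ := exists_rational_of_mem_span (fun q hq => hq) hq
  have hP0 : ∀ z ∈ K, P.eval z ≠ 0 := fun z hz h => by
    have := hqg ⟨z, hz⟩
    rw [hPQ] at this
    simp [h] at this
  have hne0 : ∀ {P : Polynomial ℂ}, (∀ z ∈ K, P.eval z ≠ 0) → P ≠ 0 := fun h h' => by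
    obtain ⟨z, hz⟩ := hne
    exact h z hz (by simp [h'])
  have hR := (hasContLog_polynomial hK hKc (hne0 hP0) hP0).div
    (hasContLog_polynomial hK hKc (hne0 hQ0) hQ0)
  have hR1 : HasContLog (fun z => P.eval z / Q.eval z / g z) K := by
    refine .of_norm_sub_one_lt ?_ fun z hz => ?_
    · exact ((P.continuous.continuousOn).div Q.continuous.continuousOn hQ0).div hgK hg0
    · have := hqg ⟨z, hz⟩
      rw [hPQ] at this
      rw [div_sub_one (hg0 z hz), norm_div, div_lt_one (norm_pos_iff.2 (hg0 z hz))]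
      exact this
  refine (hR.div hR1).congr fun z hz => ?_
  have := hP0 z hz; have := hQ0 z hz; have := hg0 z hz
  simp only
  field_simp

lemma isPreconnected_compl_connectedComponentIn {H : Set ℂ} (hH : IsClosed H)
    (hc : IsPreconnected H) (hne : H.Nonempty) (p : ℂ) :
    IsPreconnected (connectedComponentIn Hᶜ p)ᶜ := by
  obtain ⟨x, hx⟩ := hne
  refine isPreconnected_of_forall x fun y hy => ?_
  by_cases hyH : y ∈ H
  · exact ⟨H, fun z hz h => connectedComponentIn_subset _ _ h hz, hx, hyH, hc⟩
  refine ⟨H ∪ closure (connectedComponentIn Hᶜ y), ?_, Or.inl hx,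
    Or.inr (subset_closure (mem_connectedComponentIn hyH)), ?_⟩
  · rintro z (hz | hz) h
    · exact connectedComponentIn_subset _ _ h hz
    · rw [closure_eq_self_union_frontier] at hz
      rcases hz with hz | hz
      · apply hy
        rw [connectedComponentIn_eq h, ← connectedComponentIn_eq hz]
        exact mem_connectedComponentIn hyH
      · exact connectedComponentIn_subset _ _ h (frontier_connectedComponentIn_subset hH hz)
  · obtain ⟨z, hz⟩ : (frontier (connectedComponentIn Hᶜ y)).Nonempty := by
      rw [nonempty_iff_ne_empty]
      intro h
      rw [frontier_eq_empty_iff] at h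
      rcases h with h | h
      · have := mem_connectedComponentIn (show y ∈ Hᶜ from hyH)
        rw [h] at this
        exact this
      · have : x ∈ connectedComponentIn Hᶜ y := by rw [h]; trivial
        exact connectedComponentIn_subset _ _ this hx
    exact hc.union z (frontier_connectedComponentIn_subset hH hz) hz.1
      isPreconnected_connectedComponentIn.closure

lemma IsPreconnected.thickening {S : Set ℂ} (hS : IsPreconnected S) (r : ℝ) :
    IsPreconnected (thickening r S) := by
  have : Metric.thickening r S = (fun x : ℂ × ℂ => x.1 + x.2) '' (S ×ˢ ball 0 r) := by
    ext z
    simp only [mem_thickening_iff, mem_image, mem_prod, Prod.exists, mem_ball, dist_zero_right]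
    constructor
    · rintro ⟨x, hx, h⟩
      exact ⟨x, z - x, ⟨hx, by rwa [← dist_eq_norm]⟩, by ring⟩
    · rintro ⟨x, y, ⟨hx, hy⟩, rfl⟩
      exact ⟨x, hx, by simpa [dist_eq_norm] using hy⟩
  rw [this]
  exact (hS.prod (convex_ball _ _).isPreconnected).image _ (by fun_prop)

lemma differentiableOn_of_sq_eq {U : Set ℂ} (hU : IsOpen U) {f s : ℂ → ℂ}
    (hf : DifferentiableOn ℂ f U) (hs : ContinuousOn s U) (h : ∀ z ∈ U, s z ^ 2 = f z)
    (h0 : ∀ z ∈ U, f z ≠ 0) : DifferentiableOn ℂ s U := by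
  intro z hz
  have hsz : s z ≠ 0 := fun h' => h0 z hz (by rw [← h z hz, h']; simp)
  have hsc : ContinuousAt s z := hs.continuousAt (hU.mem_nhds hz)
  have hfd := ((hf z hz).differentiableAt (hU.mem_nhds hz)).hasDerivAt
  refine DifferentiableAt.differentiableWithinAt (HasDerivAt.differentiableAt
    (f' := deriv f z / (s z + s z)) ?_)
  rw [hasDerivAt_iff_tendsto_slope] at hfd ⊢
  have h2 : Filter.Tendsto (fun w => s w + s z) (𝓝[≠] z) (𝓝 (s z + s z)) :=
    (hsc.tendsto.mono_left nhdsWithin_le_nhds).add_const _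
  refine (hfd.div h2 (by simpa [← two_mul] using hsz)).congr' ?_
  filter_upwards [self_mem_nhdsWithin, nhdsWithin_le_nhds (hU.mem_nhds hz),
    h2.eventually_ne (show s z + s z ≠ 0 by simpa [← two_mul] using hsz)] with w hw hwU hne
  have hwz : w - z ≠ 0 := sub_ne_zero.2 hw
  simp only [Pi.div_apply]
  rw [slope_def_field, slope_def_field, ← h z hz, ← h w hwU]
  field_simp
  ring

/-- Nonvanishing holomorphic functions on a bounded open set with connected complement have
holomorphic square roots. -/
lemma exists_sq_eq_of_isPreconnected_compl {U : Set ℂ} (hU : IsOpen U)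
    (hUb : Bornology.IsBounded U) (hUc : IsPreconnected Uᶜ) {f : ℂ → ℂ}
    (hf : DifferentiableOn ℂ f U) (h0 : ∀ z ∈ U, f z ≠ 0) :
    ∃ s, DifferentiableOn ℂ s U ∧ ∀ z ∈ U, s z ^ 2 = f z := by
  let K : ℕ → Set ℂ := fun n => (thickening (1 / (n + 1)) Uᶜ)ᶜ
  have hKU : ∀ n, K n ⊆ U := fun n z hz => by
    by_contra h
    exact hz (self_subset_thickening (by positivity) _ h)
  have hKc : ∀ n, IsCompact (K n) := fun n =>
    isCompact_of_isClosed_isBounded isOpen_thickening.isClosed_compl (hUb.subset (hKU n))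
  have hlog : ∀ n, HasContLog f (K n) := fun n =>
    hasContLog_of_differentiableOn (hKc n) (by simpa [K] using hUc.thickening _) hU (hKU n) hf
      fun z hz => h0 z (hKU n hz)
  choose ℓ hℓ hfℓ using hlog
  have hmem : ∀ z ∈ U, ∃ r > 0, ∃ n₀, ball z r ⊆ U ∧ ∀ n ≥ n₀, ball z r ⊆ K n := by
    intro z hz
    obtain ⟨r, hr, hrU⟩ := Metric.isOpen_iff.1 hU z hz
    obtain ⟨n₀, hn₀⟩ := exists_nat_one_div_lt (half_pos hr)
    refine ⟨r / 2, half_pos hr, n₀, (ball_subset_ball (by linarith)).trans hrU,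
      fun n hn w hw hwt => ?_⟩
    obtain ⟨x, hx, hwx⟩ := mem_thickening_iff.1 hwt
    apply hx
    apply hrU
    have h1 : (1 : ℝ) / (n + 1) ≤ 1 / (n₀ + 1) := by gcongr
    rw [mem_ball] at hw ⊢
    linarith [dist_triangle_left x z w]
  let s : ℕ → ℂ → ℂ := fun n z => Complex.exp (ℓ n z / 2)
  have hs2 : ∀ n, ∀ z ∈ K n, s n z ^ 2 = f z := fun n z hz => by
    rw [hfℓ n z hz, ← Complex.exp_nat_mul]
    congr 1
    push_cast
    ring
  have hsc : ∀ n, ContinuousOn (s n) (K n) := fun n => ((hℓ n).div_const 2).cexp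
  have hrel : ∀ {z : ℂ} {r : ℝ} {n m : ℕ}, ball z r ⊆ K n → ball z r ⊆ K m → ∀ w ∈ ball z r,
      s n w * s m z = s n z * s m w := by
    intro z r n m hn hm w hw
    have hz : z ∈ ball z r := mem_ball_self (pos_of_mem_ball hw)
    obtain ⟨k, hk⟩ := exists_eqOn_add_of_exp_eq (convex_ball z r).isPreconnected
      ((hℓ n).mono hn) ((hℓ m).mono hm)
      fun x hx => by rw [← hfℓ n x (hn hx), ← hfℓ m x (hm hx)]
    simp only [s, ← Complex.exp_add, hk w hw, hk z hz]
    congr 1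
    ring
  have hlim : ∀ z ∈ U, ∃ a, Filter.Tendsto (fun n => s n z) (Filter.hyperfilter ℕ : Filter ℕ)
      (𝓝 a) := by
    intro z hz
    obtain ⟨r, hr, n₀, -, hn₀⟩ := hmem z hz
    have hb : ∀ᶠ n in (Filter.hyperfilter ℕ : Filter ℕ),
        s n z ∈ closedBall (0 : ℂ) (‖f z‖ + 1) := by
      have : ∀ᶠ n in Filter.atTop, s n z ∈ closedBall (0 : ℂ) (‖f z‖ + 1) := by
        filter_upwards [Filter.eventually_ge_atTop n₀] with n hn
        have h1 := congr_arg norm (hs2 n z (hn₀ n hn (mem_ball_self hr)))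
        rw [norm_pow] at h1
        rw [mem_closedBall_zero_iff]
        nlinarith [norm_nonneg (s n z)]
      exact Nat.hyperfilter_le_atTop this
    obtain ⟨a, -, ha⟩ := (isCompact_closedBall (0 : ℂ) (‖f z‖ + 1)).ultrafilter_le_nhds
      ((Filter.hyperfilter ℕ).map fun n => s n z) (Filter.le_principal_iff.2 hb)
    exact ⟨a, ha⟩
  choose! σ hσ using hlim
  have hev : ∀ {z : ℂ} {n₀ : ℕ} {r : ℝ}, (∀ n ≥ n₀, ball z r ⊆ K n) →
      ∀ᶠ n in (Filter.hyperfilter ℕ : Filter ℕ), ball z r ⊆ K n := fun h =>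
    Nat.hyperfilter_le_atTop (Filter.eventually_atTop.2 ⟨_, h⟩)
  have hσ2 : ∀ z ∈ U, σ z ^ 2 = f z := by
    intro z hz
    obtain ⟨r, hr, n₀, -, hn₀⟩ := hmem z hz
    refine tendsto_nhds_unique ((hσ z hz).pow 2) (tendsto_const_nhds.congr' ?_)
    filter_upwards [hev hn₀] with n hn using (hs2 n z (hn (mem_ball_self hr))).symm
  refine ⟨σ, differentiableOn_of_sq_eq hU hf (fun z hz => ?_) hσ2 h0, hσ2⟩
  obtain ⟨r, hr, n₀, hrU, hn₀⟩ := hmem z hz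
  have hne : s n₀ z ≠ 0 := Complex.exp_ne_zero _
  have heq : ∀ w ∈ ball z r, σ w = σ z * s n₀ w / s n₀ z := by
    intro w hw
    rw [eq_div_iff hne]
    refine tendsto_nhds_unique ((hσ w (hrU hw)).mul_const _)
      (((hσ z hz).mul_const (s n₀ w)).congr' ?_)
    filter_upwards [hev hn₀] with n hn using (hrel hn (hn₀ n₀ le_rfl) w hw).symm
  refine ContinuousAt.continuousWithinAt (ContinuousAt.congr (f := fun w => σ z * s n₀ w / s n₀ z)
    ?_ ?_)
  · exact (continuousAt_const.mul ((hsc n₀).continuousAt (Filter.mem_of_superset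
      (ball_mem_nhds z hr) (hn₀ n₀ le_rfl)))).div_const _
  · filter_upwards [ball_mem_nhds z hr] with w hw using (heq w hw).symm

/-- Montel's theorem, phrased with a nonprincipal ultrafilter. -/
lemma exists_tendstoLocallyUniformlyOn_hyperfilter {U : Set ℂ} (hU : IsOpen U) {f : ℕ → ℂ → ℂ}
    (hf : ∀ n, DifferentiableOn ℂ (f n) U) (hf1 : ∀ n, ∀ z ∈ U, ‖f n z‖ ≤ 1) :
    ∃ g, TendstoLocallyUniformlyOn f g (Filter.hyperfilter ℕ : Filter ℕ) U := by
  have hlim : ∀ z ∈ U, ∃ a, Filter.Tendsto (fun n => f n z) (Filter.hyperfilter ℕ : Filter ℕ)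
      (𝓝 a) := by
    intro z hz
    have hb : ∀ᶠ n in (Filter.hyperfilter ℕ : Filter ℕ), f n z ∈ closedBall (0 : ℂ) 1 :=
      .of_forall fun n => by simpa using hf1 n z hz
    obtain ⟨a, -, ha⟩ := (isCompact_closedBall (0 : ℂ) 1).ultrafilter_le_nhds
      ((Filter.hyperfilter ℕ).map fun n => f n z) (Filter.le_principal_iff.2 hb)
    exact ⟨a, ha⟩
  choose! g hg using hlim
  refine ⟨g, Metric.tendstoLocallyUniformlyOn_iff.2 fun ε hε z hz => ?_⟩
  obtain ⟨r, hr, hrU⟩ := Metric.isOpen_iff.1 hU z hz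
  have hlip : ∀ n, ∀ w ∈ ball z r, dist (f n w) (f n z) ≤ 2 / r * dist w z := fun n w hw =>
    Complex.dist_le_div_mul_dist_of_mapsTo_ball ((hf n).mono hrU) (fun v hv => by
      rw [mem_closedBall, dist_eq_norm]
      linarith [norm_sub_le (f n v) (f n z), hf1 n v (hrU hv), hf1 n z hz]) hw
  have hglip : ∀ w ∈ ball z r, dist (g w) (g z) ≤ 2 / r * dist w z := fun w hw =>
    le_of_tendsto ((hg w (hrU hw)).dist (hg z hz)) (Filter.Eventually.of_forall fun n =>
      hlip n w hw)
  have hδ : 0 < min r (ε * r / 8) := by positivity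
  refine ⟨ball z (min r (ε * r / 8)), mem_nhdsWithin_of_mem_nhds (ball_mem_nhds z hδ), ?_⟩
  filter_upwards [(hg z hz).eventually (ball_mem_nhds _ (half_pos hε))] with n hn w hw
  rw [mem_ball, lt_min_iff] at hw
  have h1 := hlip n w hw.1
  have h2 := hglip w hw.1
  have h3 : 2 / r * dist w z < ε / 4 := by
    rw [div_mul_eq_mul_div, div_lt_iff₀ hr]
    nlinarith [hw.2]
  rw [dist_comm] at h1
  linarith [dist_triangle4 (g w) (g z) (f n z) (f n w), dist_comm (f n z) (g z)]

/-- Hurwitz's theorem. -/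
lemma TendstoLocallyUniformlyOn.eqOn_zero_or_ne_zero {U : Set ℂ} (hU : IsOpen U)
    (hUc : IsPreconnected U) {ι : Type*} {p : Filter ι} [p.NeBot] {f : ι → ℂ → ℂ} {g : ℂ → ℂ}
    (h : TendstoLocallyUniformlyOn f g p U) (hf : ∀ n, DifferentiableOn ℂ (f n) U)
    (hf0 : ∀ n, ∀ z ∈ U, f n z ≠ 0) : EqOn g 0 U ∨ ∀ z ∈ U, g z ≠ 0 := by
  by_contra! hcon
  obtain ⟨hne, a, ha, hga⟩ := hcon
  have hg : DifferentiableOn ℂ g U := h.differentiableOn (.of_forall hf) hU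
  have han : AnalyticOnNhd ℂ g U := hg.analyticOnNhd hU
  rcases (han a ha).eventually_eq_zero_or_eventually_ne_zero with h0 | h0
  · exact hne (han.eqOn_zero_of_preconnected_of_eventuallyEq_zero hUc ha h0)
  rw [eventually_nhdsWithin_iff] at h0
  obtain ⟨r, hr, hball⟩ := Metric.eventually_nhds_iff_ball.1 (h0.and (hU.eventually_mem ha))
  have hcb : closedBall a (r / 2) ⊆ ball a r := closedBall_subset_ball (by linarith)
  have hsU : sphere a (r / 2) ⊆ U := fun z hz => (hball z (hcb (sphere_subset_closedBall hz))).2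
  have hs0 : ∀ z ∈ sphere a (r / 2), g z ≠ 0 := fun z hz =>
    (hball z (hcb (sphere_subset_closedBall hz))).1 (by
      rintro rfl
      simp at hz
      linarith)
  obtain ⟨m, hm, hmin⟩ := (isCompact_sphere a (r / 2)).exists_isMinOn
    (NormedSpace.sphere_nonempty.2 (by linarith)) (hg.continuousOn.mono hsU).norm
  have hm0 : 0 < ‖g m‖ := norm_pos_iff.2 (hs0 m hm)
  have hunif := (tendstoLocallyUniformlyOn_iff_tendstoUniformlyOn_of_compact
    (isCompact_sphere a (r / 2))).1 (h.mono hsU)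
  have hev : ∀ᶠ n in p, ‖g m‖ / 2 ≤ ‖f n a‖ := by
    filter_upwards [Metric.tendstoUniformlyOn_iff.1 hunif _ (half_pos hm0)] with n hn
    have hfa := hf0 n a ha
    have hd : DiffContOnCl ℂ (fun z => (f n z)⁻¹) (ball a (r / 2)) := by
      apply DifferentiableOn.diffContOnCl
      rw [closure_ball _ (by linarith : r / 2 ≠ 0)]
      have hs : closedBall a (r / 2) ⊆ U := fun z hz => (hball z (hcb hz)).2
      exact ((hf n).mono hs).inv fun z hz => hf0 n z (hs hz)
    have := Complex.norm_le_of_forall_mem_frontier_norm_le (C := (‖g m‖ / 2)⁻¹) isBounded_ball hd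
      (fun z hz => ?_) (subset_closure (mem_ball_self (by linarith)))
    · rw [norm_inv] at this
      exact (inv_le_inv₀ (norm_pos_iff.2 hfa) (half_pos hm0)).1 this
    · rw [frontier_ball _ (by linarith : r / 2 ≠ 0)] at hz
      rw [norm_inv]
      apply inv_anti₀ (half_pos hm0)
      have h1 := hn z hz
      have h2 : ‖g m‖ ≤ ‖g z‖ := hmin hz
      rw [dist_eq_norm] at h1
      linarith [norm_sub_norm_le (g z) (f n z)]
  have := ge_of_tendsto (h.tendsto_at ha).norm hev
  rw [hga, norm_zero] at this
  linarith

/-- The disc automorphism exchanging `w` and `0`, up to sign. -/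
def discMap (w z : ℂ) : ℂ := (z - w) / (1 - (starRingEnd ℂ) w * z)

lemma one_sub_conj_mul_ne_zero {w z : ℂ} (hw : ‖w‖ < 1) (hz : ‖z‖ < 1) :
    1 - (starRingEnd ℂ) w * z ≠ 0 := by
  intro h
  have : ‖(starRingEnd ℂ) w * z‖ = 1 := by rw [← sub_eq_zero.1 h]; simp
  rw [norm_mul, RCLike.norm_conj] at this
  nlinarith [norm_nonneg w, norm_nonneg z]

lemma norm_discMap_lt {w z : ℂ} (hw : ‖w‖ < 1) (hz : ‖z‖ < 1) : ‖discMap w z‖ < 1 := by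
  rw [discMap, norm_div, div_lt_one (norm_pos_iff.2 (one_sub_conj_mul_ne_zero hw hz))]
  refine lt_of_pow_lt_pow_left₀ 2 (norm_nonneg _) ?_
  have h1 : ‖1 - (starRingEnd ℂ) w * z‖ ^ 2 - ‖z - w‖ ^ 2 =
      (1 - ‖z‖ ^ 2) * (1 - ‖w‖ ^ 2) := by
    simp only [Complex.sq_norm, Complex.normSq_apply]
    simp
    ring
  have h2 : 0 < (1 - ‖z‖ ^ 2) * (1 - ‖w‖ ^ 2) :=
    mul_pos (by nlinarith [norm_nonneg z]) (by nlinarith [norm_nonneg w])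
  linarith

lemma one_sub_conj_mul_self_ne_zero {w : ℂ} (hw : ‖w‖ < 1) : 1 - (starRingEnd ℂ) w * w ≠ 0 :=
  one_sub_conj_mul_ne_zero hw hw

lemma discMap_injOn {w : ℂ} (hw : ‖w‖ < 1) : InjOn (discMap w) (ball 0 1) := by
  intro x hx y hy h
  rw [mem_ball_zero_iff] at hx hy
  rw [discMap, discMap, div_eq_div_iff (one_sub_conj_mul_ne_zero hw hx)
    (one_sub_conj_mul_ne_zero hw hy)] at h
  have := mul_left_cancel₀ (one_sub_conj_mul_self_ne_zero hw)
    (show (1 - (starRingEnd ℂ) w * w) * x = (1 - (starRingEnd ℂ) w * w) * y by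
      linear_combination h)
  exact this

lemma hasDerivAt_discMap {w z : ℂ} (hw : ‖w‖ < 1) (hz : ‖z‖ < 1) :
    HasDerivAt (discMap w)
      ((1 - (starRingEnd ℂ) w * w) / (1 - (starRingEnd ℂ) w * z) ^ 2) z := by
  have h : HasDerivAt (discMap w) _ z := ((hasDerivAt_id z).sub_const w).div
    (((hasDerivAt_id z).const_mul ((starRingEnd ℂ) w)).const_sub 1)
    (one_sub_conj_mul_ne_zero hw hz)
  convert h using 1
  simp only [id]
  ring

/-- The competitors in the extremal problem of the Riemann mapping theorem. -/
structure RiemannCandidate (U : Set ℂ) (z₀ : ℂ) (f : ℂ → ℂ) : Prop where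
  diff : DifferentiableOn ℂ f U
  norm_lt : ∀ z ∈ U, ‖f z‖ < 1
  inj : InjOn f U
  deriv_ne : ∀ z ∈ U, deriv f z ≠ 0
  zero : f z₀ = 0

lemma RiemannCandidate.exists_of_isBounded {U : Set ℂ} (hUb : Bornology.IsBounded U) {z₀ : ℂ} :
    ∃ f, RiemannCandidate U z₀ f := by
  obtain ⟨r, hr, hrU⟩ := hUb.subset_ball_lt 0 z₀
  have hr0 : (r : ℂ) ≠ 0 := by exact_mod_cast hr.ne'
  refine ⟨fun z => (z - z₀) / r, by fun_prop, fun z hz => ?_, fun x _ y _ h => ?_, fun z _ => ?_,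
    by simp⟩
  · have := hrU hz
    rw [mem_ball, dist_eq_norm] at this
    simpa [abs_of_pos hr, div_lt_one hr] using this
  · simpa [hr0] using h
  · simpa using hr0

/-- Koebe's square root trick. -/
lemma RiemannCandidate.exists_deriv_lt {U : Set ℂ} (hU : IsOpen U) {z₀ : ℂ} (hz₀ : z₀ ∈ U)
    (hsq : ∀ f : ℂ → ℂ, DifferentiableOn ℂ f U → (∀ z ∈ U, f z ≠ 0) →
      ∃ s, DifferentiableOn ℂ s U ∧ ∀ z ∈ U, s z ^ 2 = f z)
    {f : ℂ → ℂ} (hf : RiemannCandidate U z₀ f) {w : ℂ} (hw : ‖w‖ < 1) (hwf : w ∉ f '' U) :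
    ∃ h, RiemannCandidate U z₀ h ∧ ‖deriv f z₀‖ < ‖deriv h z₀‖ := by
  have hfd : ∀ z ∈ U, HasDerivAt f (deriv f z) z := fun z hz =>
    ((hf.diff z hz).differentiableAt (hU.mem_nhds hz)).hasDerivAt
  have hgd : ∀ z ∈ U, HasDerivAt (fun z => discMap w (f z))
      ((1 - (starRingEnd ℂ) w * w) / (1 - (starRingEnd ℂ) w * f z) ^ 2 * deriv f z) z :=
    fun z hz => (hasDerivAt_discMap hw (hf.norm_lt z hz)).comp z (hfd z hz)
  have hg0 : ∀ z ∈ U, discMap w (f z) ≠ 0 := fun z hz h => by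
    rw [discMap, div_eq_zero_iff] at h
    rcases h with h | h
    · exact hwf ⟨z, hz, sub_eq_zero.1 h⟩
    · exact one_sub_conj_mul_ne_zero hw (hf.norm_lt z hz) h
  obtain ⟨s, hs, hs2⟩ := hsq _ (fun z hz => (hgd z hz).differentiableAt.differentiableWithinAt) hg0
  have hsd : ∀ z ∈ U, HasDerivAt s (deriv s z) z := fun z hz =>
    ((hs z hz).differentiableAt (hU.mem_nhds hz)).hasDerivAt
  have hrel : ∀ z ∈ U, 2 * s z * deriv s z =
      (1 - (starRingEnd ℂ) w * w) / (1 - (starRingEnd ℂ) w * f z) ^ 2 * deriv f z := fun z hz => by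
    have h1 : HasDerivAt (fun z => s z ^ 2) (2 * s z * deriv s z) z := by
      have h2 : HasDerivAt (fun z => s z ^ 2) _ z := (hsd z hz).pow 2
      convert h2 using 1
      simp
    refine h1.unique ((hgd z hz).congr_of_eventuallyEq ?_)
    filter_upwards [hU.mem_nhds hz] with v hv using hs2 v hv
  have hs1 : ∀ z ∈ U, ‖s z‖ < 1 := fun z hz => by
    have h1 := norm_discMap_lt hw (hf.norm_lt z hz)
    rw [← hs2 z hz, norm_pow] at h1
    nlinarith [norm_nonneg (s z)]
  have hs0 : ∀ z ∈ U, s z ≠ 0 := fun z hz h => hg0 z hz (by rw [← hs2 z hz, h]; simp)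
  have hds0 : ∀ z ∈ U, deriv s z ≠ 0 := fun z hz h => by
    have := hrel z hz
    rw [h, mul_zero] at this
    exact mul_ne_zero (div_ne_zero (one_sub_conj_mul_self_ne_zero hw)
      (pow_ne_zero 2 (one_sub_conj_mul_ne_zero hw (hf.norm_lt z hz)))) (hf.deriv_ne z hz) this.symm
  have hhd : ∀ z ∈ U, HasDerivAt (fun z => discMap (s z₀) (s z))
      ((1 - (starRingEnd ℂ) (s z₀) * s z₀) / (1 - (starRingEnd ℂ) (s z₀) * s z) ^ 2 * deriv s z)
      z := fun z hz => (hasDerivAt_discMap (hs1 z₀ hz₀) (hs1 z hz)).comp z (hsd z hz)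
  refine ⟨fun z => discMap (s z₀) (s z), ⟨fun z hz =>
    (hhd z hz).differentiableAt.differentiableWithinAt, fun z hz =>
    norm_discMap_lt (hs1 z₀ hz₀) (hs1 z hz), fun x hx y hy h => ?_, fun z hz => ?_, ?_⟩, ?_⟩
  · have h1 := discMap_injOn (hs1 z₀ hz₀) (mem_ball_zero_iff.2 (hs1 x hx))
      (mem_ball_zero_iff.2 (hs1 y hy)) h
    have h2 : discMap w (f x) = discMap w (f y) := by rw [← hs2 x hx, ← hs2 y hy, h1]
    exact hf.inj hx hy (discMap_injOn hw (mem_ball_zero_iff.2 (hf.norm_lt x hx))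
      (mem_ball_zero_iff.2 (hf.norm_lt y hy)) h2)
  · rw [(hhd z hz).deriv]
    exact mul_ne_zero (div_ne_zero (one_sub_conj_mul_self_ne_zero (hs1 z₀ hz₀))
      (pow_ne_zero 2 (one_sub_conj_mul_ne_zero (hs1 z₀ hz₀) (hs1 z hz)))) (hds0 z hz)
  · simp [discMap]
  · rw [(hhd z₀ hz₀).deriv]
    have hb : ∀ b : ℂ, (starRingEnd ℂ) b * b = ((‖b‖ ^ 2 : ℝ) : ℂ) := fun b => by
      rw [mul_comm, Complex.mul_conj, Complex.normSq_eq_norm_sq]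
    have hwt : ‖w‖ = ‖s z₀‖ ^ 2 := by
      rw [← norm_pow, hs2 z₀ hz₀, hf.zero]; simp [discMap]
    have h1 := congr_arg norm (hrel z₀ hz₀)
    rw [hf.zero] at h1
    simp only [mul_zero, sub_zero, one_pow, div_one] at h1
    simp only [hb, norm_mul, ← Complex.ofReal_one,
      ← Complex.ofReal_sub, Complex.norm_real, Complex.norm_ofNat, Real.norm_eq_abs, hwt] at h1
    have ht0 : 0 < ‖s z₀‖ := norm_pos_iff.2 (hs0 z₀ hz₀)
    have ht1 := hs1 z₀ hz₀
    have hdf : 0 < ‖deriv f z₀‖ := norm_pos_iff.2 (hf.deriv_ne z₀ hz₀)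
    have hpos : 0 < 1 - ‖s z₀‖ ^ 2 := by nlinarith
    have hpos' : 0 < 1 - (‖s z₀‖ ^ 2) ^ 2 := by nlinarith
    simp only [hb, norm_mul, norm_div, norm_pow, ← Complex.ofReal_one, ← Complex.ofReal_sub,
      Complex.norm_real, Real.norm_eq_abs]
    rw [abs_of_pos hpos] 
    rw [abs_of_pos hpos'] at h1
    generalize ‖s z₀‖ = t at *
    generalize ‖deriv s z₀‖ = d at *
    generalize ‖deriv f z₀‖ = e at *
    have h2 : 2 * t * d = (1 - t ^ 2) * (1 + t ^ 2) * e := by rw [h1]; ring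
    have h3 : (1 - t ^ 2) / (1 - t ^ 2) ^ 2 * d = d / (1 - t ^ 2) := by field_simp
    rw [h3, lt_div_iff₀ hpos]
    have h4 : 0 < (1 - t ^ 2) * e * (1 - t) ^ 2 :=
      mul_pos (mul_pos hpos hdf) (pow_pos (by linarith) 2)
    by_contra hcon
    push Not at hcon
    nlinarith

/-- A locally uniform limit of competitors is a competitor as soon as its derivative at the base
point does not vanish. -/
lemma RiemannCandidate.of_tendstoLocallyUniformlyOn {U : Set ℂ} (hU : IsOpen U)
    (hUc : IsPreconnected U) {z₀ : ℂ} (hz₀ : z₀ ∈ U) {ι : Type*} {p : Filter ι} [p.NeBot]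
    {f : ι → ℂ → ℂ} {g : ℂ → ℂ} (hf : ∀ n, RiemannCandidate U z₀ (f n))
    (h : TendstoLocallyUniformlyOn f g p U) (hg0 : deriv g z₀ ≠ 0) : RiemannCandidate U z₀ g := by
  have hgd : DifferentiableOn ℂ g U := h.differentiableOn (.of_forall fun n => (hf n).diff) hU
  have hd := h.deriv (.of_forall fun n => (hf n).diff) hU
  have hderiv : ∀ z ∈ U, deriv g z ≠ 0 := by
    rcases hd.eqOn_zero_or_ne_zero hU hUc (fun n => (hf n).diff.deriv hU)
      (fun n => (hf n).deriv_ne) with h0 | h0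
    · exact absurd (h0 hz₀) hg0
    · exact h0
  have hle : ∀ z ∈ U, ‖g z‖ ≤ 1 := fun z hz =>
    le_of_tendsto (h.tendsto_at hz).norm (.of_forall fun n => ((hf n).norm_lt z hz).le)
  refine ⟨hgd, fun z hz => ?_, fun a ha b hb hab => ?_, hderiv, ?_⟩
  · have hs : HasStrictDerivAt g (deriv g z) z :=
      (hgd.analyticAt (hU.mem_nhds hz)).hasStrictDerivAt
    have h1 : g '' U ∈ 𝓝 (g z) := by
      rw [← hs.map_nhds_eq (hderiv z hz)]
      exact Filter.image_mem_map (hU.mem_nhds hz)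
    have h2 : closedBall (0 : ℂ) 1 ∈ 𝓝 (g z) :=
      Filter.mem_of_superset h1 (image_subset_iff.2 fun v hv => by simpa using hle v hv)
    have h3 := mem_interior_iff_mem_nhds.2 h2
    rw [interior_closedBall _ one_ne_zero] at h3
    simpa using h3
  · by_contra hne
    obtain ⟨r, hr, hrU⟩ := Metric.isOpen_iff.1 (hU.sdiff (isClosed_singleton (x := b))) a ⟨ha, hne⟩
    have hb' : TendstoLocallyUniformlyOn (fun n z => f n z - f n b) (fun z => g z - g b) p
        (ball a r) := by
      have h1 := h.mono (hrU.trans sdiff_subset)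
      have h2 : TendstoLocallyUniformlyOn (fun n (_ : ℂ) => f n b) (fun _ => g b) p (ball a r) := by
        refine TendstoUniformlyOn.tendstoLocallyUniformlyOn ?_
        exact (Filter.Tendsto.tendstoUniformlyOn_const (h.tendsto_at hb) _)
      exact h1.sub h2
    rcases hb'.eqOn_zero_or_ne_zero isOpen_ball (convex_ball a r).isPreconnected
      (fun n => ((hf n).diff.mono (hrU.trans sdiff_subset)).sub_const _)
      (fun n z hz h0 => (hrU hz).2 ((hf n).inj (hrU hz).1 hb (sub_eq_zero.1 h0))) with h0 | h0
    · refine hderiv a ha ?_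
      have : g =ᶠ[𝓝 a] fun _ => g b := by
        filter_upwards [ball_mem_nhds a hr] with z hz using sub_eq_zero.1 (h0 hz)
      rw [this.deriv_eq, deriv_const]
    · exact h0 a (mem_ball_self hr) (sub_eq_zero.2 hab)
  · refine tendsto_nhds_unique (h.tendsto_at hz₀) ?_
    simp only [(hf _).zero]
    exact tendsto_const_nhds

/-- The Riemann mapping theorem for bounded domains admitting square roots. -/
theorem exists_riemannMap {U : Set ℂ} (hU : IsOpen U) (hUc : IsPreconnected U)
    (hUb : Bornology.IsBounded U) {z₀ : ℂ} (hz₀ : z₀ ∈ U)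
    (hsq : ∀ f : ℂ → ℂ, DifferentiableOn ℂ f U → (∀ z ∈ U, f z ≠ 0) →
      ∃ s, DifferentiableOn ℂ s U ∧ ∀ z ∈ U, s z ^ 2 = f z) :
    ∃ f, RiemannCandidate U z₀ f ∧ f '' U = ball 0 1 := by
  obtain ⟨r, hr, hrU⟩ := Metric.isOpen_iff.1 hU z₀ hz₀
  set S : Set ℝ := {x | ∃ f, RiemannCandidate U z₀ f ∧ ‖deriv f z₀‖ = x} with hS
  have hSne : S.Nonempty := by
    obtain ⟨f, hf⟩ := RiemannCandidate.exists_of_isBounded hUb (z₀ := z₀)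
    exact ⟨_, f, hf, rfl⟩
  have hSb : BddAbove S := by
    refine ⟨1 / r, ?_⟩
    rintro _ ⟨f, hf, rfl⟩
    refine Complex.norm_deriv_le_div_of_mapsTo_ball (hf.diff.mono hrU) (fun z hz => ?_) hr
    simpa [hf.zero] using (hf.norm_lt z (hrU hz)).le
  have hseq : ∀ n : ℕ, ∃ f, RiemannCandidate U z₀ f ∧
      sSup S - 1 / ((n : ℝ) + 1) < ‖deriv f z₀‖ := fun n => by
    obtain ⟨_, ⟨f, hf, rfl⟩, h⟩ := exists_lt_of_lt_csSup hSne
      (sub_lt_self (sSup S) (by positivity : 0 < 1 / ((n : ℝ) + 1)))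
    exact ⟨f, hf, h⟩
  choose f hf hfS using hseq
  obtain ⟨g, hg⟩ := exists_tendstoLocallyUniformlyOn_hyperfilter hU (fun n => (hf n).diff)
    (fun n z hz => ((hf n).norm_lt z hz).le)
  have hlim : Filter.Tendsto (fun n => ‖deriv (f n) z₀‖) Filter.atTop (𝓝 (sSup S)) := by
    refine tendsto_of_tendsto_of_tendsto_of_le_of_le (g := fun n : ℕ => sSup S - 1 / ((n : ℝ) + 1))
      ?_ tendsto_const_nhds (fun n => (hfS n).le) (fun n => le_csSup hSb ⟨f n, hf n, rfl⟩)
    simpa using tendsto_const_nhds.sub (tendsto_one_div_add_atTop_nhds_zero_nat (𝕜 := ℝ))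
  have hd : ‖deriv g z₀‖ = sSup S :=
    tendsto_nhds_unique
      ((hg.deriv (.of_forall fun n => (hf n).diff) hU).tendsto_at hz₀).norm
      (hlim.mono_left Nat.hyperfilter_le_atTop)
  have hpos : 0 < sSup S := by
    obtain ⟨f, hf⟩ := RiemannCandidate.exists_of_isBounded hUb (z₀ := z₀)
    exact (norm_pos_iff.2 (hf.deriv_ne z₀ hz₀)).trans_le (le_csSup hSb ⟨f, hf, rfl⟩)
  have hgc : RiemannCandidate U z₀ g := .of_tendstoLocallyUniformlyOn hU hUc hz₀ hf hg
    (norm_pos_iff.1 (hd ▸ hpos))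
  refine ⟨g, hgc, Subset.antisymm (image_subset_iff.2 fun z hz => by
    simpa using hgc.norm_lt z hz) fun w hw => ?_⟩
  by_contra hwg
  obtain ⟨k, hk, hlt⟩ := hgc.exists_deriv_lt hU hz₀ hsq (mem_ball_zero_iff.1 hw) hwg
  exact (le_csSup hSb ⟨k, hk, rfl⟩).not_gt (hd ▸ hlt)

/-- A conformal map `F` from the unit disc onto `U`, with inverse `G`. -/
structure ConformalDisc (U : Set ℂ) (F G : ℂ → ℂ) : Prop where
  diff : DifferentiableOn ℂ F (ball 0 1)
  diff_inv : DifferentiableOn ℂ G U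
  mapsTo : MapsTo F (ball 0 1) U
  mapsTo_inv : MapsTo G U (ball 0 1)
  left_inv : ∀ z ∈ ball (0 : ℂ) 1, G (F z) = z
  right_inv : ∀ w ∈ U, F (G w) = w

theorem exists_conformalDisc {U : Set ℂ} (hU : IsOpen U) (hUc : IsPreconnected U)
    (hUb : Bornology.IsBounded U) (hUcompl : IsPreconnected Uᶜ) {z₀ : ℂ} (hz₀ : z₀ ∈ U) :
    ∃ F G, ConformalDisc U F G ∧ F 0 = z₀ := by
  obtain ⟨G, hG, hGU⟩ := exists_riemannMap hU hUc hUb hz₀ fun f hf h0 =>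
    exists_sq_eq_of_isPreconnected_compl hU hUb hUcompl hf h0
  have hbij : BijOn G U (ball 0 1) := hGU ▸ hG.inj.bijOn_image
  set F := Function.invFunOn G U
  have hinv : InvOn F G U (ball 0 1) := hbij.invOn_invFunOn
  have hFm : MapsTo F (ball 0 1) U := hbij.surjOn.mapsTo_invFunOn
  refine ⟨F, G, ⟨fun z hz => ?_, hG.diff, hFm, hbij.mapsTo, hinv.2, hinv.1⟩, ?_⟩
  · have hs : HasStrictDerivAt G (deriv G (F z)) (F z) :=
      (hG.diff.analyticAt (hU.mem_nhds (hFm hz))).hasStrictDerivAt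
    have h0 := hG.deriv_ne _ (hFm hz)
    have hcont : ContinuousAt F z := by
      intro N hN
      rw [Filter.mem_map]
      have h1 : G '' (N ∩ U) ∈ 𝓝 (G (F z)) := by
        rw [← hs.map_nhds_eq h0]
        exact Filter.image_mem_map (Filter.inter_mem hN (hU.mem_nhds (hFm hz)))
      rw [hinv.2 hz] at h1
      filter_upwards [h1]
      rintro _ ⟨w, ⟨hwN, hwU⟩, rfl⟩
      rw [mem_preimage, hinv.1 hwU]
      exact hwN
    refine (HasDerivAt.of_local_left_inverse hcont hs.hasDerivAt h0
      ?_).differentiableAt.differentiableWithinAt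
    filter_upwards [isOpen_ball.mem_nhds hz] with w hw using hinv.2 hw
  · rw [← hG.zero]
    exact hinv.1 hz₀

open MeasureTheory in
lemma lintegral_norm_deriv_sq_eq_volume_image {Φ : ℂ → ℂ} {E : Set ℂ} (hE : MeasurableSet E)
    (hΦ : ∀ z ∈ E, DifferentiableAt ℂ Φ z) (hinj : InjOn Φ E) :
    ∫⁻ z in E, ENNReal.ofReal (‖deriv Φ z‖ ^ 2) = volume (Φ '' E) := by
  rw [← lintegral_abs_det_fderiv_eq_addHaar_image volume hE
    (fun z hz => ((hΦ z hz).hasFDerivAt.restrictScalars ℝ).hasFDerivWithinAt) hinj]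
  refine setLIntegral_congr_fun hE fun z hz => ?_
  have h1 : ((fderiv ℂ Φ z).restrictScalars ℝ).det = ‖deriv Φ z‖ ^ 2 := by
    have h2 : (((fderiv ℂ Φ z).restrictScalars ℝ : ℂ →L[ℝ] ℂ) : ℂ →ₗ[ℝ] ℂ) =
        Algebra.lmul ℝ ℂ (deriv Φ z) := by
      ext
      simp [mul_comm]
    rw [ContinuousLinearMap.det, h2, ← Algebra.norm_apply, Algebra.norm_complex_apply,
      Complex.normSq_eq_norm_sq]
  simp only [h1, abs_of_nonneg (sq_nonneg ‖deriv Φ z‖)]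

open MeasureTheory in
/-- The length–area principle: an injective holomorphic function on the strip `|Im z| < π / 2`
whose image has finite area has a vertical segment of small energy. -/
lemma exists_energy_le {Φ : ℂ → ℂ} {A N : ℝ} (hN : 0 < N)
    (hΦ : DifferentiableOn ℂ Φ {z | |z.im| < Real.pi / 2})
    (hinj : InjOn Φ {z | |z.im| < Real.pi / 2})
    (hA : volume (Φ '' {z | |z.im| < Real.pi / 2}) ≤ ENNReal.ofReal A) :
    ∃ s ∈ Icc (-2 * N) (-N), ∫⁻ θ in Ioo (-(Real.pi / 2)) (Real.pi / 2),
      ENNReal.ofReal (‖deriv Φ (s + θ * Complex.I)‖ ^ 2) ≤ ENNReal.ofReal (A / N) := by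
  have hopen : IsOpen {z : ℂ | |z.im| < Real.pi / 2} :=
    isOpen_lt (by fun_prop) continuous_const
  set P : Set (ℝ × ℝ) := Icc (-2 * N) (-N) ×ˢ Ioo (-(Real.pi / 2)) (Real.pi / 2) with hP
  have hPm : MeasurableSet P := measurableSet_Icc.prod measurableSet_Ioo
  set E : Set ℂ := Complex.measurableEquivRealProd ⁻¹' P with hE
  have hEm : MeasurableSet E := Complex.measurableEquivRealProd.measurable hPm
  have hES : E ⊆ {z | |z.im| < Real.pi / 2} := fun z hz => abs_lt.2 hz.2
  set q : ℝ × ℝ → ENNReal := fun x =>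
    ENNReal.ofReal (‖deriv Φ (x.1 + x.2 * Complex.I)‖ ^ 2) with hq
  have hqm : Measurable q := by
    have : Measurable fun x : ℝ × ℝ => deriv Φ (x.1 + x.2 * Complex.I) :=
      (measurable_deriv Φ).comp (by fun_prop)
    exact ENNReal.measurable_ofReal.comp (this.norm.pow_const 2)
  have h1 : ∫⁻ x in P, q x ≤ ENNReal.ofReal A := by
    rw [← Complex.volume_preserving_equiv_real_prod.setLIntegral_comp_preimage_emb
      Complex.measurableEquivRealProd.measurableEmbedding q P]
    have : ∀ z : ℂ, q (Complex.measurableEquivRealProd z) =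
        ENNReal.ofReal (‖deriv Φ z‖ ^ 2) := fun z => by
      simp [hq, Complex.measurableEquivRealProd_apply, Complex.re_add_im]
    simp only [this]
    rw [← hE, lintegral_norm_deriv_sq_eq_volume_image hEm
      (fun z hz => (hΦ z (hES hz)).differentiableAt (hopen.mem_nhds (hES hz))) (hinj.mono hES)]
    exact (measure_mono (image_mono hES)).trans hA
  rw [Measure.volume_eq_prod, setLIntegral_prod q hqm.aemeasurable] at h1
  have hv : volume (Icc (-2 * N) (-N)) = ENNReal.ofReal N := by
    rw [Real.volume_Icc]; congr 1; ring
  obtain ⟨s, hs, h⟩ := exists_le_setLAverage (μ := volume) (s := Icc (-2 * N) (-N))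
    (f := fun s => ∫⁻ θ in Ioo (-(Real.pi / 2)) (Real.pi / 2), q (s, θ))
    (by rw [hv]; simpa using hN) (by rw [hv]; simp)
    (hqm.lintegral_prod_right').aemeasurable
  refine ⟨s, hs, h.trans ?_⟩
  rw [setLAverage_eq, hv, ENNReal.ofReal_div_of_pos hN]
  gcongr

open MeasureTheory in
lemma exists_short_crosscut {Φ : ℂ → ℂ} {A N : ℝ} (hN : 0 < N) (hA0 : 0 ≤ A)
    (hΦ : DifferentiableOn ℂ Φ {z | |z.im| < Real.pi / 2})
    (hinj : InjOn Φ {z | |z.im| < Real.pi / 2})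
    (hA : volume (Φ '' {z | |z.im| < Real.pi / 2}) ≤ ENNReal.ofReal A) {c : ℝ} (hc : 0 < c) :
    ∃ s ∈ Icc (-2 * N) (-N), ∀ θ₁ ∈ Ioo (-(Real.pi / 2)) (Real.pi / 2),
      ∀ θ₂ ∈ Ioo (-(Real.pi / 2)) (Real.pi / 2),
      dist (Φ (s + θ₁ * Complex.I)) (Φ (s + θ₂ * Complex.I)) ≤
        (c * Real.pi + A / N / c) / 2 := by
  obtain ⟨s, hs, hE⟩ := exists_energy_le hN hΦ hinj hA
  refine ⟨s, hs, ?_⟩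
  have hopen : IsOpen {z : ℂ | |z.im| < Real.pi / 2} :=
    isOpen_lt (by fun_prop) continuous_const
  intro θ₁ h₁ θ₂ h₂
  wlog hle : θ₁ ≤ θ₂ generalizing θ₁ θ₂
  · rw [dist_comm]
    exact this θ₂ h₂ θ₁ h₁ (not_le.1 hle).le
  have hsub : Icc θ₁ θ₂ ⊆ Ioo (-(Real.pi / 2)) (Real.pi / 2) := fun θ hθ =>
    ⟨h₁.1.trans_le hθ.1, hθ.2.trans_lt h₂.2⟩
  have hmem : ∀ θ ∈ Icc θ₁ θ₂, (s + θ * Complex.I : ℂ) ∈ {z : ℂ | |z.im| < Real.pi / 2} :=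
    fun θ hθ => by simpa [abs_lt] using hsub hθ
  have hd : ∀ θ ∈ uIcc θ₁ θ₂, HasDerivAt (fun t : ℝ => Φ (s + t * Complex.I))
      (deriv Φ (s + θ * Complex.I) * Complex.I) θ := fun θ hθ => by
    rw [uIcc_of_le hle] at hθ
    have h1 := ((hΦ _ (hmem θ hθ)).differentiableAt (hopen.mem_nhds (hmem θ hθ))).hasDerivAt
    have h2 : HasDerivAt (fun t : ℂ => s + t * Complex.I) Complex.I (θ : ℂ) := by
      simpa using ((hasDerivAt_id (θ : ℂ)).mul_const Complex.I).const_add (s : ℂ)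
    exact (HasDerivAt.comp (θ : ℂ) h1 h2).comp_ofReal
  have hcont : ContinuousOn (fun t : ℝ => deriv Φ (s + t * Complex.I)) (uIcc θ₁ θ₂) := by
    rw [uIcc_of_le hle]
    exact (hΦ.deriv hopen).continuousOn.comp (by fun_prop) hmem
  have hFTC := intervalIntegral.integral_eq_sub_of_hasDerivAt hd
    (hcont.mul continuousOn_const).intervalIntegrable
  have hi1 : IntervalIntegrable (fun t : ℝ => ‖deriv Φ (s + t * Complex.I)‖) volume θ₁ θ₂ :=
    hcont.norm.intervalIntegrable
  have hi2 : IntervalIntegrable (fun t : ℝ => ‖deriv Φ (s + t * Complex.I)‖ ^ 2) volume θ₁ θ₂ :=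
    (hcont.norm.pow 2).intervalIntegrable
  have hen : ∫ t in θ₁..θ₂, ‖deriv Φ (s + t * Complex.I)‖ ^ 2 ≤ A / N := by
    rw [intervalIntegral.integral_of_le hle, integral_eq_lintegral_of_nonneg_ae
      (.of_forall fun t => by positivity) hi2.1.aestronglyMeasurable]
    refine ENNReal.toReal_le_of_le_ofReal (by positivity) (le_trans ?_ hE)
    exact lintegral_mono_set (Ioc_subset_Icc_self.trans hsub)
  rw [dist_comm, dist_eq_norm, ← hFTC]
  calc ‖∫ t in θ₁..θ₂, deriv Φ (s + t * Complex.I) * Complex.I‖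
      ≤ ∫ t in θ₁..θ₂, ‖deriv Φ (s + t * Complex.I) * Complex.I‖ :=
        intervalIntegral.norm_integral_le_integral_norm hle
    _ = ∫ t in θ₁..θ₂, ‖deriv Φ (s + t * Complex.I)‖ := by simp
    _ ≤ ∫ t in θ₁..θ₂, (c / 2 + (1 / (2 * c)) * ‖deriv Φ (s + t * Complex.I)‖ ^ 2) := by
        refine intervalIntegral.integral_mono_on hle hi1
          (intervalIntegrable_const.add (hi2.const_mul _)) fun t _ => ?_
        have : c / 2 + (1 / (2 * c)) * ‖deriv Φ (s + t * Complex.I)‖ ^ 2 -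
            ‖deriv Φ (s + t * Complex.I)‖ =
            (c - ‖deriv Φ (s + t * Complex.I)‖) ^ 2 / (2 * c) := by
          field_simp
          ring
        have h0 : 0 ≤ (c - ‖deriv Φ (s + t * Complex.I)‖) ^ 2 / (2 * c) := by positivity
        linarith
    _ = (θ₂ - θ₁) * (c / 2) + 1 / (2 * c) *
          ∫ t in θ₁..θ₂, ‖deriv Φ (s + t * Complex.I)‖ ^ 2 := by
        rw [intervalIntegral.integral_add intervalIntegrable_const
          (hi2.const_mul _), intervalIntegral.integral_const,
          intervalIntegral.integral_const_mul, smul_eq_mul]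
    _ ≤ Real.pi * (c / 2) + 1 / (2 * c) * (A / N) := by
        gcongr
        linarith [h₁.1, h₂.2]
    _ = (c * Real.pi + A / N / c) / 2 := by
        field_simp

lemma one_add_exp_ne_zero {ζ : ℂ} (hζ : |ζ.im| < Real.pi / 2) : 1 + Complex.exp ζ ≠ 0 := fun h => by
  have h1 : 0 < (Complex.exp ζ).re := by
    rw [Complex.exp_re]
    exact mul_pos (Real.exp_pos _) (Real.cos_pos_of_mem_Ioo (abs_lt.1 hζ))
  have := congr_arg Complex.re h
  simp only [Complex.add_re, Complex.one_re, Complex.zero_re] at this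
  linarith

/-- The conformal map from the strip `|Im ζ| < π / 2` to the disc sending `-∞` to `a`. -/
def stripMap (a ζ : ℂ) : ℂ := a * ((1 - Complex.exp ζ) / (1 + Complex.exp ζ))

lemma stripMap_mem_ball {a ζ : ℂ} (ha : ‖a‖ = 1) (hζ : |ζ.im| < Real.pi / 2) :
    stripMap a ζ ∈ ball (0 : ℂ) 1 := by
  have h1 : 0 < (Complex.exp ζ).re := by
    rw [Complex.exp_re]
    exact mul_pos (Real.exp_pos _) (Real.cos_pos_of_mem_Ioo (abs_lt.1 hζ))
  rw [mem_ball_zero_iff, stripMap, norm_mul, ha, one_mul, norm_div,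
    div_lt_one (norm_pos_iff.2 (one_add_exp_ne_zero hζ))]
  refine lt_of_pow_lt_pow_left₀ 2 (norm_nonneg _) ?_
  simp only [Complex.sq_norm, Complex.normSq_apply]
  simp only [Complex.sub_re, Complex.sub_im, Complex.add_re, Complex.add_im, Complex.one_re,
    Complex.one_im]
  nlinarith

lemma differentiableOn_stripMap (a : ℂ) :
    DifferentiableOn ℂ (stripMap a) {ζ | |ζ.im| < Real.pi / 2} := by
  unfold stripMap
  refine DifferentiableOn.const_mul (DifferentiableOn.div (by fun_prop) (by fun_prop) ?_) a
  exact fun ζ hζ => one_add_exp_ne_zero hζ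

lemma sub_stripMap {a ζ : ℂ} (hζ : |ζ.im| < Real.pi / 2) :
    a - stripMap a ζ = Complex.exp ζ * (a + stripMap a ζ) := by
  have := one_add_exp_ne_zero hζ
  rw [stripMap]
  field_simp
  ring

lemma add_ne_zero_of_mem_ball {a z : ℂ} (ha : ‖a‖ = 1) (hz : z ∈ ball (0 : ℂ) 1) : a + z ≠ 0 :=
  fun h => by
    rw [mem_ball_zero_iff, ← norm_neg, ← eq_neg_of_add_eq_zero_left h] at hz
    linarith

lemma stripMap_injOn {a : ℂ} (ha : ‖a‖ = 1) : InjOn (stripMap a) {ζ | |ζ.im| < Real.pi / 2} := by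
  intro x hx y hy hxy
  have h1 := sub_stripMap (a := a) hx
  have h2 := sub_stripMap (a := a) hy
  rw [hxy, h2] at h1
  have h3 := mul_right_cancel₀ (add_ne_zero_of_mem_ball ha (stripMap_mem_ball ha hy)) h1
  have hpi := Real.pi_pos
  simp only [mem_ofPred_eq, abs_lt] at hx hy
  exact (Complex.exp_inj_of_neg_pi_lt_of_le_pi (by linarith) (by linarith) (by linarith)
    (by linarith) h3).symm

lemma exists_eq_stripMap {a z : ℂ} (ha : ‖a‖ = 1) (hz : z ∈ ball (0 : ℂ) 1) {s : ℝ}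
    (h : ‖a - z‖ = Real.exp s * ‖a + z‖) :
    ∃ θ ∈ Ioo (-(Real.pi / 2)) (Real.pi / 2), z = stripMap a (s + θ * Complex.I) := by
  have h0 := add_ne_zero_of_mem_ball ha hz
  have hn : ‖(a - z) / (a + z)‖ = Real.exp s := by
    rw [norm_div, h, mul_div_cancel_right₀ _ (norm_ne_zero_iff.2 h0)]
  have hre : 0 < ((a - z) / (a + z)).re := by
    have hzn : z.re ^ 2 + z.im ^ 2 < 1 := by
      rw [mem_ball_zero_iff] at hz
      have : ‖z‖ ^ 2 < 1 := by nlinarith [norm_nonneg z]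
      rw [Complex.sq_norm, Complex.normSq_apply] at this
      linarith
    have han : a.re ^ 2 + a.im ^ 2 = 1 := by
      have : ‖a‖ ^ 2 = 1 := by rw [ha]; norm_num
      rw [Complex.sq_norm, Complex.normSq_apply] at this
      linarith
    rw [Complex.div_re, ← add_div]
    refine div_pos ?_ (Complex.normSq_pos.2 h0)
    simp only [Complex.sub_re, Complex.add_re, Complex.sub_im, Complex.add_im]
    nlinarith
  set w := (a - z) / (a + z) with hw
  have hexp : Complex.exp (s + w.arg * Complex.I) = w := by
    rw [Complex.exp_add, ← Complex.ofReal_exp, ← hn, Complex.norm_mul_exp_arg_mul_I]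
  have harg : |w.arg| < Real.pi / 2 := Complex.abs_arg_lt_pi_div_two_iff.2 (Or.inl hre)
  refine ⟨w.arg, abs_lt.1 harg, ?_⟩
  have h1 : 1 + w ≠ 0 := by
    rw [← hexp]
    exact one_add_exp_ne_zero (by simpa using harg)
  have h2 : w * (a + z) = a - z := div_mul_cancel₀ _ h0
  rw [stripMap, hexp, mul_div_assoc', eq_div_iff h1]
  linear_combination h2

open MeasureTheory in
/-- Some circular crosscut around the boundary point `a` has a small image. -/
lemma ConformalDisc.exists_crosscut {U : Set ℂ} {F G : ℂ → ℂ} (hF : ConformalDisc U F G)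
    (hUb : Bornology.IsBounded U) {a : ℂ} (ha : ‖a‖ = 1) {η κ : ℝ} (hη : 0 < η) (hκ : 0 < κ) :
    ∃ k > 0, k < κ ∧ ∀ z ∈ ball (0 : ℂ) 1, ∀ z' ∈ ball (0 : ℂ) 1,
      ‖a - z‖ = k * ‖a + z‖ → ‖a - z'‖ = k * ‖a + z'‖ → dist (F z) (F z') ≤ η := by
  have hpi := Real.pi_pos
  set A := (volume U).toReal with hA
  have hA0 : 0 ≤ A := ENNReal.toReal_nonneg
  set c := η / Real.pi with hc
  have hc0 : 0 < c := by positivity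
  obtain ⟨N, hN0, hNκ, hNA⟩ : ∃ N : ℝ, 0 < N ∧ -N < Real.log κ ∧ A / (c * η) ≤ N :=
    ⟨max 1 (max (1 - Real.log κ) (A / (c * η))), by positivity, by
      linarith [le_max_left (1 - Real.log κ) (A / (c * η)),
        le_max_right 1 (max (1 - Real.log κ) (A / (c * η)))],
      (le_max_right _ _).trans (le_max_right _ _)⟩
  have hm : MapsTo (stripMap a) {ζ | |ζ.im| < Real.pi / 2} (ball 0 1) := fun ζ hζ =>
    stripMap_mem_ball ha hζ
  have hFinj : InjOn F (ball 0 1) := (show LeftInvOn G F _ from hF.left_inv).injOn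
  obtain ⟨s, hs, hd⟩ := exists_short_crosscut (Φ := fun ζ => F (stripMap a ζ)) (A := A) hN0 hA0
    (hF.diff.comp (differentiableOn_stripMap a) hm) (hFinj.comp (stripMap_injOn ha) hm) (by
      rw [hA, ENNReal.ofReal_toReal hUb.measure_lt_top.ne]
      exact measure_mono (image_subset_iff.2 fun ζ hζ => hF.mapsTo (hm hζ))) hc0
  refine ⟨Real.exp s, Real.exp_pos s, ?_, fun z hz z' hz' h h' => ?_⟩
  · rw [← Real.lt_log_iff_exp_lt hκ]
    linarith [hs.2]
  · obtain ⟨θ, hθ, rfl⟩ := exists_eq_stripMap ha hz h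
    obtain ⟨θ', hθ', rfl⟩ := exists_eq_stripMap ha hz' h'
    refine (hd θ hθ θ' hθ').trans ?_
    have h1 : c * Real.pi = η := by rw [hc]; field_simp
    have h2 : A / N / c ≤ η := by
      rw [div_le_iff₀ (by positivity)] at hNA
      rw [div_le_iff₀ hc0, div_le_iff₀ hN0]
      linarith
    linarith

lemma ConformalDisc.exists_infDist_lt {U H : Set ℂ} {F G : ℂ → ℂ} (hF : ConformalDisc U F G)
    (hUb : Bornology.IsBounded U) (hUH : closure U ⊆ U ∪ H) {d : ℝ} (hd : 0 < d) :
    ∃ r < 1, ∀ z ∈ ball (0 : ℂ) 1, r < ‖z‖ → infDist (F z) H < d := by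
  have hK : IsCompact (closure U ∩ {w | d ≤ infDist w H}) :=
    hUb.isCompact_closure.inter_right
      (isClosed_le continuous_const (continuous_infDist_pt H))
  have hKU : closure U ∩ {w | d ≤ infDist w H} ⊆ U := fun w hw => by
    rcases hUH hw.1 with h | h
    · exact h
    · have h1 : d ≤ infDist w H := hw.2
      rw [infDist_zero_of_mem h] at h1
      linarith
  rcases (closure U ∩ {w | d ≤ infDist w H}).eq_empty_or_nonempty with h0 | hne
  · refine ⟨0, one_pos, fun z hz _ => ?_⟩
    by_contra hcon
    exact eq_empty_iff_forall_notMem.1 h0 (F z) ⟨subset_closure (hF.mapsTo hz), not_lt.1 hcon⟩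
  · obtain ⟨m, hm, hmax⟩ := hK.exists_isMaxOn hne (hF.diff_inv.continuousOn.mono hKU).norm
    refine ⟨‖G m‖, by simpa using hF.mapsTo_inv (hKU hm), fun z hz hlt => ?_⟩
    by_contra hcon
    have h1 : ‖G (F z)‖ ≤ ‖G m‖ := hmax ⟨subset_closure (hF.mapsTo hz), not_lt.1 hcon⟩
    rw [hF.left_inv z hz] at h1
    linarith

section

variable {H : Set ℂ} {α β F G : ℂ → ℂ}

lemma closure_connectedComponentIn_compl_subset (hH : IsClosed H) (p : ℂ) :
    closure (connectedComponentIn Hᶜ p) ⊆ connectedComponentIn Hᶜ p ∪ H := by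
  rw [closure_eq_self_union_frontier]
  exact union_subset_union_right _ (frontier_connectedComponentIn_subset hH)

/-- The side of a short crosscut away from the centre has a small image. -/
lemma ConformalDisc.dist_le_of_crosscut {p : ℂ}
    (hF : ConformalDisc (connectedComponentIn Hᶜ p) F G) (hH : IsCompact H) {J : Set ℂ}
    (hJ : IsCompact J) (hJc : IsPreconnected J) (hJH : J ⊆ H)
    {a : ℂ} (ha : ‖a‖ = 1) {k ρ : ℝ} (hk1 : k < 1) {c : ℂ}
    (hC : ∀ z ∈ ball (0 : ℂ) 1, ‖a - z‖ = k * ‖a + z‖ → dist (F z) c ≤ ρ)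
    (hCJ : closure (F '' {z | z ∈ ball (0 : ℂ) 1 ∧ ‖a - z‖ = k * ‖a + z‖}) ∩ H ⊆ J)
    (hJρ : ∀ x ∈ J, dist x c ≤ ρ) (h0 : ρ < dist (F 0) c) {z : ℂ} (hz : z ∈ ball (0 : ℂ) 1)
    (hzk : ‖a - z‖ < k * ‖a + z‖) : dist (F z) c ≤ ρ := by
  by_contra! hcon
  set C := F '' {z | z ∈ ball (0 : ℂ) 1 ∧ ‖a - z‖ = k * ‖a + z‖} with hCdef
  have hCρ : closure C ⊆ closedBall c ρ :=
    closure_minimal (by rintro _ ⟨w, hw, rfl⟩; exact hC w hw.1 hw.2) isClosed_closedBall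
  have hCU : C ⊆ connectedComponentIn Hᶜ p := by
    rintro _ ⟨w, hw, rfl⟩
    exact hF.mapsTo hw.1
  have hCc : IsCompact (closure C) := (isCompact_closedBall c ρ).of_isClosed_subset
    isClosed_closure hCρ
  have hinter : H ∩ (closure C ∪ J) = J := by
    rw [inter_union_distrib_left, inter_comm H, inter_eq_right.2 hJH]
    exact union_eq_right.2 hCJ
  have hUH : connectedComponentIn Hᶜ p ⊆ Hᶜ := connectedComponentIn_subset _ _
  have h0b : (0 : ℂ) ∈ ball (0 : ℂ) 1 := by simp
  have hcomp := connectedComponentIn_compl_union_eq (A := H) (B := closure C ∪ J)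
    (S := connectedComponentIn Hᶜ p) (T := (closedBall c ρ)ᶜ) (p := F 0) (q := F z)
    hH (hCc.union hJ) (by rwa [hinter])
    isPreconnected_connectedComponentIn (isPreconnected_compl_closedBall c ρ)
    (disjoint_left.2 fun x hx hx' => hUH hx hx')
    (disjoint_left.2 fun x hx hx' => hx (hx'.elim (fun h => hCρ h) (hJρ x)))
    (hF.mapsTo h0b) (hF.mapsTo hz) (by simpa using h0) (by simpa using hcon)
  set Q := connectedComponentIn (H ∪ (closure C ∪ J))ᶜ (F 0) with hQ
  have hmem : ∀ w ∈ ball (0 : ℂ) 1, ρ < dist (F w) c → F w ∈ (H ∪ (closure C ∪ J))ᶜ := by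
    rintro w hw hwρ (h | h | h)
    · exact hUH (hF.mapsTo hw) h
    · exact (mem_closedBall.1 (hCρ h)).not_gt hwρ
    · exact (hJρ _ h).not_gt hwρ
  have hQ0 : F 0 ∈ Q := mem_connectedComponentIn (hmem 0 h0b h0)
  have hQz : F z ∈ Q := by
    rw [hcomp]
    exact mem_connectedComponentIn (hmem z hz hcon)
  have hQc : IsPreconnected Q := isPreconnected_connectedComponentIn
  have hQsub : Q ⊆ (H ∪ (closure C ∪ J))ᶜ := connectedComponentIn_subset _ _
  have hQU : Q ⊆ connectedComponentIn Hᶜ p := by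
    rw [connectedComponentIn_eq (hF.mapsTo h0b)]
    exact hQc.subset_connectedComponentIn hQ0
      (hQsub.trans (compl_subset_compl.2 subset_union_left))
  have hGQ : IsPreconnected (G '' Q) := hQc.image G (hF.diff_inv.continuousOn.mono hQU)
  have hG0 : (0 : ℂ) ∈ G '' Q := ⟨F 0, hQ0, hF.left_inv 0 h0b⟩
  have hGz : z ∈ G '' Q := ⟨F z, hQz, hF.left_inv z hz⟩
  obtain ⟨_, ⟨q, hq, rfl⟩, hval⟩ := hGQ.intermediate_value hGz hG0
    (f := fun x => ‖a - x‖ - k * ‖a + x‖) (by fun_prop)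
    (show (0 : ℝ) ∈ _ from ⟨by linarith, by simp [ha]; linarith⟩)
  refine hQsub hq (Or.inr (Or.inl (subset_closure ?_)))
  exact ⟨G q, ⟨hF.mapsTo_inv (hQU hq), sub_eq_zero.1 hval⟩, hF.right_inv q (hQU hq)⟩

theorem ConformalDisc.exists_tendsto_sphere {p : ℂ}
    (hF : ConformalDisc (connectedComponentIn Hᶜ p) F G) (h : JordanParam H α β)
    (hUb : Bornology.IsBounded (connectedComponentIn Hᶜ p)) {a : ℂ} (ha : ‖a‖ = 1) :
    ∃ y, Filter.Tendsto F (𝓝[ball 0 1] a) (𝓝 y) := by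
  have h0b : (0 : ℂ) ∈ ball (0 : ℂ) 1 := by simp
  have hne : (𝓝[ball 0 1] a).NeBot := by
    rw [← mem_closure_iff_nhdsWithin_neBot, closure_ball _ one_ne_zero]
    simp [ha]
  have hF0H : F 0 ∉ H := fun h0 => connectedComponentIn_subset _ _ (hF.mapsTo h0b) h0
  have hd : 0 < infDist (F 0) H := (h.isClosed.notMem_iff_infDist_pos h.nonempty).1 hF0H
  obtain ⟨r, hr, hrH⟩ := hF.exists_infDist_lt hUb
    (closure_connectedComponentIn_compl_subset h.isClosed p) (half_pos hd)
  have key : ∀ ε > 0, ∃ c, ∃ t ∈ 𝓝[ball 0 1] a, ∀ z ∈ t, dist (F z) c < ε := by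
    intro ε hε
    set ρ := min (ε / 2) (infDist (F 0) H / 2) with hρ
    have hρ0 : 0 < ρ := by positivity
    obtain ⟨δ, hδ, hcont⟩ := h.exists_small_continuum (half_pos hρ0)
    obtain ⟨k, hk0, hk, hkd⟩ := hF.exists_crosscut hUb ha
      (η := min (ρ / 2) (δ / 2)) (κ := min 1 ((1 - r) / 2)) (by positivity)
      (lt_min one_pos (by linarith))
    rw [lt_min_iff] at hk
    set S := {z | z ∈ ball (0 : ℂ) 1 ∧ ‖a - z‖ = k * ‖a + z‖} with hS
    have hz0 : a * (((1 - k) / (1 + k) : ℝ) : ℂ) ∈ S := by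
      have h1 : 0 < (1 - k) / (1 + k) := div_pos (by linarith) (by linarith)
      have h2 : (1 - k) / (1 + k) < 1 := by rw [div_lt_one (by linarith)]; linarith
      refine ⟨by simp only [mem_ball_zero_iff, norm_mul, ha, one_mul, Complex.norm_real,
        Real.norm_eq_abs, abs_of_pos h1, h2], ?_⟩
      have h3 : a - a * (((1 - k) / (1 + k) : ℝ) : ℂ) =
          a * ((1 - (1 - k) / (1 + k) : ℝ) : ℂ) := by push_cast; ring
      have h4 : a + a * (((1 - k) / (1 + k) : ℝ) : ℂ) =
          a * ((1 + (1 - k) / (1 + k) : ℝ) : ℂ) := by push_cast; ring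
      rw [h3, h4, norm_mul, norm_mul, ha, one_mul, one_mul, Complex.norm_real, Complex.norm_real,
        Real.norm_of_nonneg (by linarith), Real.norm_of_nonneg (by linarith)]
      have : 1 + k ≠ 0 := by linarith
      field_simp
      ring
    set z0 := a * (((1 - k) / (1 + k) : ℝ) : ℂ)
    have hfar : ρ < dist (F 0) (F z0) := by
      have h1 : ‖a - z0‖ ≤ 2 * k := by
        rw [hz0.2]
        have := norm_add_le a z0
        have h2 := mem_ball_zero_iff.1 hz0.1
        nlinarith
      have h2 : r < ‖z0‖ := by
        have := norm_sub_norm_le a z0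
        linarith
      have h3 := hrH z0 hz0.1 h2
      have h4 := infDist_le_infDist_add_dist (s := H) (x := F 0) (y := F z0)
      linarith [min_le_right (ε / 2) (infDist (F 0) H / 2)]
    have hCd : ∀ x ∈ closure (F '' S), ∀ y ∈ closure (F '' S),
        dist x y ≤ min (ρ / 2) (δ / 2) := by
      intro x hx y hy
      have h1 : (x, y) ∈ closure ((F '' S) ×ˢ (F '' S)) := by
        rw [closure_prod_eq]; exact ⟨hx, hy⟩
      refine closure_minimal (t := {q : ℂ × ℂ | dist q.1 q.2 ≤ min (ρ / 2) (δ / 2)}) ?_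
        (isClosed_le (by fun_prop) continuous_const) h1
      rintro ⟨_, _⟩ ⟨⟨u, hu, rfl⟩, v, hv, rfl⟩
      exact hkd u hu.1 v hv.1 hu.2 hv.2
    have hcC : F z0 ∈ closure (F '' S) := subset_closure ⟨z0, hz0, rfl⟩
    obtain ⟨J, hJH, hJc, hJp, hSJ, hJd⟩ : ∃ J ⊆ H, IsCompact J ∧ IsPreconnected J ∧
        closure (F '' S) ∩ H ⊆ J ∧ ∀ x ∈ J, dist x (F z0) ≤ ρ := by
      rcases (closure (F '' S) ∩ H).eq_empty_or_nonempty with he | ⟨q, hq⟩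
      · exact ⟨∅, empty_subset _, isCompact_empty, isPreconnected_empty, he.subset, by simp⟩
      · obtain ⟨J, hJH, hJc, hJp, hSJ, hJd⟩ := hcont (closure (F '' S) ∩ H) inter_subset_right
          (fun x hx y hy => (hCd x hx.1 y hy.1).trans_lt
            ((min_le_right _ _).trans_lt (by linarith)))
        refine ⟨J, hJH, hJc, hJp, hSJ, fun x hx => ?_⟩
        have h1 := hJd x hx q (hSJ hq)
        have h2 := (hCd q hq.1 _ hcC).trans (min_le_left _ _)
        linarith [dist_triangle x q (F z0)]
    refine ⟨F z0, ball 0 1 ∩ {z | ‖a - z‖ < k * ‖a + z‖}, ?_, fun z hz => ?_⟩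
    · refine Filter.inter_mem self_mem_nhdsWithin (mem_nhdsWithin_of_mem_nhds ?_)
      refine (isOpen_lt (by fun_prop) (by fun_prop)).mem_nhds ?_
      have : ‖a + a‖ = 2 := by rw [← two_mul, norm_mul, ha]; simp
      simp [this, hk0]
    · refine (hF.dist_le_of_crosscut h.isCompact hJc hJp hJH ha hk.1 (fun w hw hwk => ?_) hSJ hJd
        hfar hz.1 hz.2).trans_lt ?_
      · exact (hCd _ (subset_closure ⟨w, ⟨hw, hwk⟩, rfl⟩) _ hcC).trans
          ((min_le_left _ _).trans (by linarith))
      · exact (min_le_left _ _).trans_lt (by linarith)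
  refine cauchy_map_iff_exists_tendsto.1 (Metric.cauchy_iff.2 ⟨inferInstance, fun ε hε => ?_⟩)
  obtain ⟨c, t, ht, hc⟩ := key (ε / 2) (half_pos hε)
  refine ⟨F '' t, Filter.image_mem_map ht, ?_⟩
  rintro _ ⟨x, hx, rfl⟩ _ ⟨y, hy, rfl⟩
  have h1 := hc x hx
  have h2 := hc y hy
  rw [dist_comm] at h2
  linarith [dist_triangle (F x) c (F y)]

lemma ConformalDisc.congr {U : Set ℂ} {F' : ℂ → ℂ} (hF : ConformalDisc U F G)
    (h : EqOn F' F (ball 0 1)) : ConformalDisc U F' G where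
  diff := hF.diff.congr h
  diff_inv := hF.diff_inv
  mapsTo := hF.mapsTo.congr h.symm
  mapsTo_inv := hF.mapsTo_inv
  left_inv z hz := by rw [h hz, hF.left_inv z hz]
  right_inv w hw := by rw [h (hF.mapsTo_inv hw), hF.right_inv w hw]

lemma ConformalDisc.exists_continuous_extension {p : ℂ}
    (hF : ConformalDisc (connectedComponentIn Hᶜ p) F G) (h : JordanParam H α β)
    (hUb : Bornology.IsBounded (connectedComponentIn Hᶜ p)) :
    ∃ F', EqOn F' F (ball 0 1) ∧ ContinuousOn F' (closedBall 0 1) := by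
  have hcl : closure (ball (0 : ℂ) 1) = closedBall 0 1 := closure_ball _ one_ne_zero
  refine ⟨extendFrom (ball 0 1) F, fun z hz => ?_, continuousOn_extendFrom hcl.ge fun z hz => ?_⟩
  · exact extendFrom_eq (subset_closure hz) (hF.diff.continuousOn z hz)
  · rcases (mem_closedBall_zero_iff.1 hz).lt_or_eq with h1 | h1
    · exact ⟨F z, hF.diff.continuousOn z (mem_ball_zero_iff.2 h1)⟩
    · exact hF.exists_tendsto_sphere h hUb h1

lemma ConformalDisc.mapsTo_sphere {U : Set ℂ} (hF : ConformalDisc U F G)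
    (hFc : ContinuousOn F (closedBall 0 1)) (hUb : Bornology.IsBounded U)
    (hH : IsClosed H) (hHne : H.Nonempty) (hUH : closure U ⊆ U ∪ H) :
    MapsTo F (sphere 0 1) H := by
  intro u hu
  have hne : (𝓝[ball 0 1] u).NeBot := by
    rw [← mem_closure_iff_nhdsWithin_neBot, closure_ball _ one_ne_zero]
    exact sphere_subset_closedBall hu
  have ht : Filter.Tendsto F (𝓝[ball 0 1] u) (𝓝 (F u)) :=
    (hFc u (sphere_subset_closedBall hu)).mono ball_subset_closedBall
  have hle : ∀ d > 0, infDist (F u) H ≤ d := fun d hd => by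
    obtain ⟨r, hr, hrH⟩ := hF.exists_infDist_lt hUb hUH hd
    refine le_of_tendsto ((continuous_infDist_pt H).continuousAt.tendsto.comp ht) ?_
    have h1 : ∀ᶠ z in 𝓝[ball 0 1] u, r < ‖z‖ :=
      nhdsWithin_le_nhds ((isOpen_lt continuous_const continuous_norm).mem_nhds
        (by rw [mem_sphere_zero_iff_norm] at hu; simpa [hu] using hr))
    filter_upwards [h1, self_mem_nhdsWithin] with z hz hzb using (hrH z hzb hz).le
  rw [hH.mem_iff_infDist_zero hHne]
  exact le_antisymm (le_of_forall_pos_le_add fun d hd => by simpa using hle d hd) infDist_nonneg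

/-- A function continuous on the closed disc, holomorphic inside and constant on an arc of the
unit circle takes that constant value at the centre. -/
lemma eq_of_eqOn_arc (hFc : ContinuousOn F (closedBall 0 1))
    (hFd : DifferentiableOn ℂ F (ball 0 1)) {O : Set ℂ} (hO : IsOpen O) {u p : ℂ}
    (hu : u ∈ sphere (0 : ℂ) 1) (huO : u ∈ O) (hp : ∀ v ∈ O ∩ sphere (0 : ℂ) 1, F v = p) :
    F 0 = p := by
  have hu1 := mem_sphere_zero_iff_norm.1 hu
  obtain ⟨t, ht, hcov⟩ := (isCompact_sphere (0 : ℂ) 1).elim_nhds_subcover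
    (fun w => {v | u / w * v ∈ O}) (fun w hw => by
      refine (hO.preimage (continuous_const.mul continuous_id)).mem_nhds ?_
      simpa [div_mul_cancel₀ _ (ne_zero_of_mem_circle hw)] using huO)
  have hn : ∀ w ∈ t, ∀ z : ℂ, ‖u / w * z‖ = ‖z‖ := fun w hw z => by
    rw [norm_mul, norm_div, hu1, mem_sphere_zero_iff_norm.1 (ht w hw)]
    simp
  have hball : ∀ w ∈ t, MapsTo (fun z => u / w * z) (ball 0 1) (ball 0 1) := fun w hw z hz => by
    simpa [mem_ball_zero_iff, -norm_mul, -Complex.norm_mul, hn w hw] using hz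
  have hcball : ∀ w ∈ t, MapsTo (fun z => u / w * z) (closedBall 0 1) (closedBall 0 1) :=
    fun w hw z hz => by
      simpa [mem_closedBall_zero_iff, -norm_mul, -Complex.norm_mul, hn w hw] using hz
  have hdc : DiffContOnCl ℂ (fun z => ∏ w ∈ t, (F (u / w * z) - p)) (ball 0 1) := by
    refine ⟨DifferentiableOn.fun_finsetProd fun w hw => ?_, ?_⟩
    · exact (hFd.comp (by fun_prop) (hball w hw)).sub_const p
    · rw [closure_ball _ one_ne_zero]
      exact continuousOn_finsetProd _ fun w hw =>
        (hFc.comp (by fun_prop) (hcball w hw)).sub continuousOn_const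
  have h0 := Complex.norm_le_of_forall_mem_frontier_norm_le (C := 0) isBounded_ball hdc
    (fun z hz => ?_) (subset_closure (mem_ball_self one_pos))
  · simp only [mul_zero, norm_le_zero_iff, Finset.prod_eq_zero_iff] at h0
    obtain ⟨w, -, hw⟩ := h0
    exact sub_eq_zero.1 hw
  · rw [frontier_ball _ one_ne_zero] at hz
    obtain ⟨w, hw, hzw⟩ := mem_iUnion₂.1 (hcov hz)
    rw [norm_le_zero_iff]
    refine Finset.prod_eq_zero hw (sub_eq_zero.2 (hp _ ⟨hzw, ?_⟩))
    rw [mem_sphere_zero_iff_norm, hn w hw, mem_sphere_zero_iff_norm.1 hz]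

lemma re_conj_mul_lt_one {a u : ℂ} (ha : ‖a‖ = 1) (hu : ‖u‖ = 1) (hne : a ≠ u) :
    ((starRingEnd ℂ) u * a).re < 1 := by
  by_contra! hcon
  have h1 : ‖a‖ ^ 2 = 1 := by rw [ha, one_pow]
  have h2 : ‖u‖ ^ 2 = 1 := by rw [hu, one_pow]
  rw [Complex.sq_norm, Complex.normSq_apply] at h1 h2
  simp only [Complex.mul_re, Complex.conj_re, Complex.conj_im] at hcon
  have h3 : a.re - u.re = 0 := by
    refine pow_eq_zero_iff two_ne_zero |>.1 (le_antisymm ?_ (sq_nonneg _))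
    nlinarith [sq_nonneg (a.im - u.im)]
  have h4 : a.im - u.im = 0 := by
    refine pow_eq_zero_iff two_ne_zero |>.1 (le_antisymm ?_ (sq_nonneg _))
    nlinarith [sq_nonneg (a.re - u.re)]
  exact hne (Complex.ext (sub_eq_zero.1 h3) (sub_eq_zero.1 h4))

/-- A point of the disc off two radii lies in a convex sector disjoint from both radii. -/
lemma exists_sector {a b z : ℂ} (ha : ‖a‖ = 1) (hb : ‖b‖ = 1) (hz : z ∈ ball (0 : ℂ) 1)
    (hza : ∀ t ∈ Icc (0 : ℝ) 1, z ≠ t * a) (hzb : ∀ t ∈ Icc (0 : ℝ) 1, z ≠ t * b) :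
    ∃ O : Set ℂ, IsOpen O ∧ Convex ℝ O ∧ z ∈ O ∧ (∃ u ∈ O, u ∈ sphere (0 : ℂ) 1) ∧
      (∀ t ∈ Icc (0 : ℝ) 1, (t * a : ℂ) ∉ O) ∧ ∀ t ∈ Icc (0 : ℝ) 1, (t * b : ℂ) ∉ O := by
  have hz0 : 0 < ‖z‖ := norm_pos_iff.2 fun h0 => hza 0 (by simp) (by simp [h0])
  have hz1 := mem_ball_zero_iff.1 hz
  set u : ℂ := z / ‖z‖ with hu
  have hzu : z = ‖z‖ * u := by
    rw [hu, mul_div_cancel₀]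
    exact_mod_cast hz0.ne'
  have hu1 : ‖u‖ = 1 := by simp [hu, hz0.ne']
  have hau : a ≠ u := fun h => hza ‖z‖ ⟨hz0.le, hz1.le⟩ (by rw [h]; exact hzu)
  have hbu : b ≠ u := fun h => hzb ‖z‖ ⟨hz0.le, hz1.le⟩ (by rw [h]; exact hzu)
  set L : ℂ →ₗ[ℝ] ℝ := Complex.reLm ∘ₗ LinearMap.mulLeft ℝ ((starRingEnd ℂ) u) with hL
  have hLx : ∀ x, L x = ((starRingEnd ℂ) u * x).re := fun x => rfl
  have hLu : L u = 1 := by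
    rw [hLx, mul_comm, Complex.mul_conj, Complex.normSq_eq_norm_sq, hu1]
    simp
  have hLsmul : ∀ (t : ℝ) (x : ℂ), L (t * x) = t * L x := fun t x => by
    rw [← Complex.real_smul, map_smul, smul_eq_mul]
  set c := max 0 (max (L a) (L b)) with hc
  have hc0 : 0 ≤ c := le_max_left _ _
  have hc1 : c < 1 := max_lt one_pos
    (max_lt (re_conj_mul_lt_one ha hu1 hau) (re_conj_mul_lt_one hb hu1 hbu))
  have hrad : ∀ x : ℂ, ‖x‖ = 1 → L x ≤ c → ∀ t ∈ Icc (0 : ℝ) 1,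
      (t * x : ℂ) ∉ {x | c * ‖x‖ - L x < 0} := fun x hx hxc t ht h => by
    simp only [mem_ofPred_eq, norm_mul, hx, hLsmul, Complex.norm_real, Real.norm_of_nonneg ht.1,
      mul_one] at h
    nlinarith [ht.1]
  refine ⟨{x | c * ‖x‖ - L x < 0}, ?_, ?_, ?_, ⟨u, ?_, by simpa using hu1⟩,
    hrad a ha ((le_max_left _ _).trans (le_max_right _ _)),
    hrad b hb ((le_max_right _ _).trans (le_max_right _ _))⟩
  · have : Continuous L := L.continuous_of_finiteDimensional
    exact isOpen_lt (by fun_prop) continuous_const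
  · have := (((convexOn_norm convex_univ).smul hc0).sub (L.concaveOn convex_univ)).convex_lt 0
    simpa using this
  · rw [mem_ofPred_eq, hzu, hLsmul, hLu, ← hzu]
    nlinarith
  · rw [mem_ofPred_eq, hLu, hu1]
    linarith

theorem ConformalDisc.injOn_sphere {p : ℂ}
    (hF : ConformalDisc (connectedComponentIn Hᶜ p) F G)
    (hFc : ContinuousOn F (closedBall 0 1)) (h : JordanParam H α β)
    (hUb : Bornology.IsBounded (connectedComponentIn Hᶜ p)) : InjOn F (sphere 0 1) := by
  intro a ha b hb hab
  by_contra hne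
  have hUH : ∀ x ∈ connectedComponentIn Hᶜ p, x ∉ H := fun x hx =>
    connectedComponentIn_subset _ _ hx
  have hS : MapsTo F (sphere 0 1) H := hF.mapsTo_sphere hFc hUb h.isClosed h.nonempty
    (closure_connectedComponentIn_compl_subset h.isClosed p)
  have hinj : InjOn F (ball 0 1) := (show LeftInvOn G F _ from hF.left_inv).injOn
  have h0b : (0 : ℂ) ∈ ball (0 : ℂ) 1 := by simp
  have hmemb : ∀ u ∈ sphere (0 : ℂ) 1, ∀ t ∈ Ico (0 : ℝ) 1, (t * u : ℂ) ∈ ball (0 : ℂ) 1 :=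
    fun u hu t ht => by
      rw [mem_sphere_zero_iff_norm] at hu
      simpa [hu, abs_of_nonneg ht.1] using ht.2
  have hmemc : ∀ u ∈ sphere (0 : ℂ) 1, ∀ t ∈ Icc (0 : ℝ) 1, (t * u : ℂ) ∈ closedBall (0 : ℂ) 1 :=
    fun u hu t ht => by
      rw [mem_sphere_zero_iff_norm] at hu
      simpa [hu, abs_of_nonneg ht.1] using ht.2
  have hcont : ∀ u ∈ sphere (0 : ℂ) 1, Continuous fun t : unitInterval => F (t * u) :=
    fun u hu => hFc.comp_continuous (by fun_prop) fun t => hmemc u hu t t.2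
  let γ : Path (F 0) (F a) := ⟨⟨fun t => F (t * a), hcont a ha⟩, by simp, by simp⟩
  let δ : Path (F 0) (F a) := ⟨⟨fun t => F (t * b), hcont b hb⟩, by simp, by simp [hab]⟩
  have hrange : ∀ u ∈ sphere (0 : ℂ) 1, F u = F a → ∀ t ∈ Icc (0 : ℝ) 1,
      F (t * u) = F a ∨ F (t * u) ∈ connectedComponentIn Hᶜ p := fun u hu hua t ht => by
    rcases ht.2.lt_or_eq with h1 | rfl
    · exact Or.inr (hF.mapsTo (hmemb u hu t ⟨ht.1, h1⟩))
    · left; simpa using hua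
  have hF0 : F 0 ≠ F a := fun h0 => hUH _ (hF.mapsTo h0b) (h0 ▸ hS ha)
  have hinter : range γ ∩ range δ = {F 0, F a} := by
    apply Subset.antisymm
    · rintro x ⟨⟨t, rfl⟩, s, hs⟩
      have hs' : F (s * b) = F (t * a) := hs
      change F (t * a) ∈ _
      rcases t.2.2.lt_or_eq with ht1 | ht1
      · rcases s.2.2.lt_or_eq with hs1 | hs1
        · have h1 := hinj (hmemb b hb s ⟨s.2.1, hs1⟩) (hmemb a ha t ⟨t.2.1, ht1⟩) hs'
          have h2 := congr_arg norm h1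
          rw [mem_sphere_zero_iff_norm] at ha hb
          rw [norm_mul, norm_mul, ha, hb, mul_one, mul_one, Complex.norm_real, Complex.norm_real,
            Real.norm_of_nonneg s.2.1, Real.norm_of_nonneg t.2.1] at h2
          rw [h2] at h1
          rcases mul_eq_mul_left_iff.1 h1 with h3 | h3
          · exact absurd h3.symm hne
          · rw [h3]; simp
        · rw [← hs', hs1]
          simp [hab]
      · rw [ht1]; simp
    · rintro x (rfl | rfl)
      · exact ⟨⟨0, γ.source⟩, 0, δ.source⟩
      · exact ⟨⟨1, γ.target⟩, 1, δ.target⟩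
  have hnot := not_isPreconnected_compl_union_range hF0 γ δ hinter
  set J := range γ ∪ range δ with hJ
  have hJa : F a ∈ J := Or.inl ⟨1, γ.target⟩
  have hJcl : IsClosed J :=
    ((isCompact_range γ.continuous).union (isCompact_range δ.continuous)).isClosed
  have hJU : ∀ x ∈ J, x = F a ∨ x ∈ connectedComponentIn Hᶜ p := by
    rintro _ (⟨t, rfl⟩ | ⟨t, rfl⟩)
    · exact hrange a ha rfl t t.2
    · exact hrange b hb hab.symm t t.2
  have hJH : ∀ x ∈ J, x ∈ H → x = F a := fun x hx hxH =>
    (hJU x hx).resolve_right fun hU => hUH x hU hxH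
  obtain ⟨q, hqH, hqa⟩ : ∃ q ∈ H, q ≠ F a := by
    refine ⟨α (-β (F a)), h.mapsTo (by simpa using h.mapsTo_inv (hS ha)), fun heq => ?_⟩
    have h1 := congr_arg β heq
    rw [h.left_inv _ (by simpa using h.mapsTo_inv (hS ha))] at h1
    exact ne_zero_of_mem_circle (h.mapsTo_inv (hS ha)) (self_eq_neg.1 h1.symm)
  have hqJ : q ∈ Jᶜ := fun hqJ => hqa (hJH q hqJ hqH)
  have hHq : H \ {F a} ⊆ connectedComponentIn Jᶜ q :=
    (h.isPreconnected_diff_singleton (hS ha)).subset_connectedComponentIn ⟨hqH, hqa⟩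
      fun x hx hxJ => hx.2 (hJH x hxJ hx.1)
  obtain ⟨x, hxJ, hxq⟩ : ∃ x ∈ Jᶜ, x ∉ connectedComponentIn Jᶜ q := by
    by_contra! hcon
    apply hnot
    rw [Subset.antisymm hcon (connectedComponentIn_subset _ _)]
    exact isPreconnected_connectedComponentIn
  set W := connectedComponentIn Jᶜ x with hW
  have hxW : x ∈ W := mem_connectedComponentIn hxJ
  have hWJ : W ⊆ Jᶜ := connectedComponentIn_subset _ _
  have hWH : ∀ y ∈ W, y ∉ H := fun y hy hyH => by
    have h1 : y ∈ connectedComponentIn Jᶜ q := hHq ⟨hyH, fun h2 => hWJ hy (h2 ▸ hJa)⟩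
    rw [connectedComponentIn_eq h1, ← connectedComponentIn_eq hy] at hxq
    exact hxq hxW
  have hWcl : closure W ⊆ W ∪ J := closure_connectedComponentIn_compl_subset hJcl x
  obtain ⟨y, hyW, hyU⟩ : (W ∩ connectedComponentIn Hᶜ p).Nonempty := by
    by_contra hemp
    have hdisj : Disjoint W (connectedComponentIn Hᶜ p) :=
      disjoint_iff_inter_eq_empty.2 (not_nonempty_iff_eq_empty.1 hemp)
    have hdisj' := hdisj.closure_left h.isClosed.isOpen_compl.connectedComponentIn
    have hsub : ({F a}ᶜ : Set ℂ) ⊆ W := by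
      refine (isConnected_compl_singleton_of_one_lt_rank (by simp)
        (F a)).isPreconnected.subset_of_closure_inter_subset
        hJcl.isOpen_compl.connectedComponentIn ⟨x, fun h1 => hxJ (h1 ▸ hJa), hxW⟩ ?_
      rintro w ⟨hw, hwa⟩
      refine (hWcl hw).resolve_right fun hwJ => ?_
      exact disjoint_left.1 hdisj' hw ((hJU w hwJ).resolve_left hwa)
    exact hWH q (hsub hqa) hqH
  have hyJ : y ∉ J := hWJ hyW
  obtain ⟨O, hO, hOc, hzO, ⟨u, huO, hu⟩, hOa, hOb⟩ := exists_sector (z := G y)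
    (mem_sphere_zero_iff_norm.1 ha) (mem_sphere_zero_iff_norm.1 hb) (hF.mapsTo_inv hyU)
    (fun t ht h1 => hyJ (Or.inl ⟨⟨t, ht⟩, by
      change F (t * a) = y; rw [← h1, hF.right_inv y hyU]⟩))
    (fun t ht h1 => hyJ (Or.inr ⟨⟨t, ht⟩, by
      change F (t * b) = y; rw [← h1, hF.right_inv y hyU]⟩))
  have hoff : ∀ v ∈ sphere (0 : ℂ) 1, (∀ t ∈ Icc (0 : ℝ) 1, (t * v : ℂ) ∉ O) →
      ∀ w ∈ ball 0 1 ∩ O, ∀ t : unitInterval, F (t * v) ≠ F w := fun v hv hvO w hw t heq => by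
    rcases t.2.2.lt_or_eq with ht1 | ht1
    · have := hinj (hmemb v hv t ⟨t.2.1, ht1⟩) hw.1 heq
      exact hvO t t.2 (this ▸ hw.2)
    · rw [ht1, Complex.ofReal_one, one_mul] at heq
      exact hUH _ (hF.mapsTo hw.1) (heq ▸ hS hv)
  have hFW : F '' (ball 0 1 ∩ O) ⊆ W := by
    have h1 : IsPreconnected (F '' (ball 0 1 ∩ O)) :=
      ((convex_ball (0 : ℂ) 1).inter hOc).isPreconnected.image F
        (hF.diff.continuousOn.mono inter_subset_left)
    rw [hW, connectedComponentIn_eq hyW]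
    refine h1.subset_connectedComponentIn ⟨G y, ⟨hF.mapsTo_inv hyU, hzO⟩, hF.right_inv y hyU⟩ ?_
    rintro _ ⟨w, hw, rfl⟩ (⟨t, ht⟩ | ⟨t, ht⟩)
    · exact hoff a ha hOa w hw t ht
    · exact hoff b hb hOb w hw t ht
  refine hF0 (eq_of_eqOn_arc hFc hF.diff hO hu huO fun v hv => ?_)
  have hvcl : v ∈ closure (ball 0 1 ∩ O) := hO.closure_inter
    ⟨by rw [closure_ball _ one_ne_zero]; exact sphere_subset_closedBall hv.2, hv.1⟩
  have h1 : F v ∈ closure (F '' (ball 0 1 ∩ O)) :=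
    ((hFc v (sphere_subset_closedBall hv.2)).mono
      (inter_subset_left.trans ball_subset_closedBall)).mem_closure_image hvcl
  rcases hWcl (closure_mono hFW h1) with h2 | h2
  · exact absurd (hS hv.2) (hWH _ h2)
  · exact hJH _ h2 (hS hv.2)

/-- A homeomorphism from the closed unit disc onto `U ∪ H` that is conformal from the open disc
onto `U`. -/
structure CaratheodoryMap (U H : Set ℂ) (F : ℂ → ℂ) : Prop where
  cont : ContinuousOn F (closedBall 0 1)
  diff : DifferentiableOn ℂ F (ball 0 1)
  inj : InjOn F (closedBall 0 1)
  image_ball : F '' ball 0 1 = U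
  image_sphere : F '' sphere 0 1 = H

/-- Carathéodory's theorem. -/
theorem JordanParam.exists_caratheodoryMap (h : JordanParam H α β) {p : ℂ} (hp : p ∉ H)
    (hUb : Bornology.IsBounded (connectedComponentIn Hᶜ p)) :
    ∃ F, CaratheodoryMap (connectedComponentIn Hᶜ p) H F ∧ F 0 = p := by
  have hUo : IsOpen (connectedComponentIn Hᶜ p) := h.isClosed.isOpen_compl.connectedComponentIn
  have hpU : p ∈ connectedComponentIn Hᶜ p := mem_connectedComponentIn hp
  have hUH : connectedComponentIn Hᶜ p ⊆ Hᶜ := connectedComponentIn_subset _ _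
  obtain ⟨F₀, G, hF₀, hF₀p⟩ := exists_conformalDisc hUo isPreconnected_connectedComponentIn hUb
    (isPreconnected_compl_connectedComponentIn h.isClosed h.isPreconnected h.nonempty p) hpU
  obtain ⟨F, hFF, hFc⟩ := hF₀.exists_continuous_extension h hUb
  have hF := hF₀.congr hFF
  have hS : MapsTo F (sphere 0 1) H := hF.mapsTo_sphere hFc hUb h.isClosed h.nonempty
    (closure_connectedComponentIn_compl_subset h.isClosed p)
  have himb : F '' ball 0 1 = connectedComponentIn Hᶜ p :=
    Subset.antisymm hF.mapsTo.image_subset fun w hw => ⟨G w, hF.mapsTo_inv hw, hF.right_inv w hw⟩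
  refine ⟨F, ⟨hFc, hF.diff, ?_, himb, Subset.antisymm hS.image_subset fun w hw => ?_⟩, ?_⟩
  · rw [← ball_union_sphere, injOn_union]
    · refine ⟨(show LeftInvOn G F _ from hF.left_inv).injOn, hF.injOn_sphere hFc h hUb, ?_⟩
      exact fun x hx y hy hxy => hUH (hF.mapsTo hx) (hxy ▸ hS hy)
    · exact sphere_disjoint_ball.symm
  · have hfr : frontier (connectedComponentIn Hᶜ p) = H := h.frontier_eq hUo ⟨p, hpU⟩ hUb
      (disjoint_left.2 hUH) (frontier_connectedComponentIn_subset h.isClosed)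
    have hcl : closure (connectedComponentIn Hᶜ p) ⊆ F '' closedBall 0 1 :=
      closure_minimal (himb ▸ image_mono ball_subset_closedBall)
        ((isCompact_closedBall 0 1).image_of_continuousOn hFc).isClosed
    obtain ⟨z, hz, rfl⟩ := hcl (frontier_subset_closure (hfr.symm ▸ hw))
    rw [← ball_union_sphere] at hz
    refine ⟨z, hz.resolve_left fun hzb => hUH (hF.mapsTo hzb) hw, rfl⟩
  · rw [hFF (by simp), hF₀p]

end

section

variable {H : Set ℂ} {α β : ℂ → ℂ}

lemma JordanParam.inversion (h : JordanParam H α β) {p : ℂ} (hp : p ∉ H) :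
    JordanParam ((fun z => (z - p)⁻¹) '' H) (fun u => (α u - p)⁻¹) (fun w => β (w⁻¹ + p)) := by
  have hne : ∀ z ∈ H, z - p ≠ 0 := fun z hz h0 => hp (sub_eq_zero.1 h0 ▸ hz)
  have hm : MapsTo (fun w => w⁻¹ + p) ((fun z => (z - p)⁻¹) '' H) H := by
    rintro _ ⟨z, hz, rfl⟩
    simpa using hz
  refine ⟨(h.cont.sub continuousOn_const).inv₀ fun u hu => hne _ (h.mapsTo hu),
    h.cont_inv.comp ?_ hm, fun u hu => ⟨α u, h.mapsTo hu, rfl⟩, fun w hw => h.mapsTo_inv (hm hw),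
    fun u hu => by simpa using h.left_inv u hu, ?_⟩
  · refine ContinuousOn.add (continuousOn_id.inv₀ ?_) continuousOn_const
    rintro _ ⟨z, hz, rfl⟩
    exact inv_ne_zero (hne z hz)
  · rintro _ ⟨z, hz, rfl⟩
    simp [h.right_inv z hz]

/-- Inverting a Jordan curve about an interior point turns the exterior into the bounded
component, which contains the origin. -/
lemma JordanParam.isBounded_component_inversion (h : JordanParam H α β) {p : ℂ} (hp : p ∉ H)
    (hUb : Bornology.IsBounded (connectedComponentIn Hᶜ p)) :
    Bornology.IsBounded (connectedComponentIn ((fun z => (z - p)⁻¹) '' H)ᶜ 0) := by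
  have h' := h.inversion hp
  set H' := (fun z => (z - p)⁻¹) '' H with hH'
  have h0H' : (0 : ℂ) ∉ H' := by
    rintro ⟨z, hz, h0⟩
    exact hp (sub_eq_zero.1 (inv_eq_zero.1 h0) ▸ hz)
  obtain ⟨q, hq, hqb⟩ := h'.exists_isBounded_component
  by_cases h0 : (0 : ℂ) ∈ connectedComponentIn H'ᶜ q
  · rwa [← connectedComponentIn_eq h0]
  exfalso
  set X := connectedComponentIn H'ᶜ q with hX
  have hXcl : closure X ⊆ X ∪ H' := closure_connectedComponentIn_compl_subset h'.isClosed q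
  have h0cl : ∀ w ∈ closure X, w ≠ 0 := by
    rintro w hw rfl
    exact (hXcl hw).elim h0 h0H'
  have hcont : ContinuousOn (fun w : ℂ => w⁻¹ + p) (closure X) :=
    (continuousOn_id.inv₀ h0cl).add continuousOn_const
  have hqX : q ∈ X := mem_connectedComponentIn hq
  have hHκ : ∀ w : ℂ, w⁻¹ + p ∈ H → w ∈ H' := fun w hw => ⟨_, hw, by simp⟩
  have hqH : q⁻¹ + p ∉ H := fun hqH => hq (hHκ q hqH)
  have hκcl : IsCompact ((fun w : ℂ => w⁻¹ + p) '' closure X) :=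
    hqb.isCompact_closure.image_of_continuousOn hcont
  have hXo : IsOpen ((fun w : ℂ => w⁻¹ + p) '' X) := by
    have : (fun w : ℂ => w⁻¹ + p) '' X = {z | z ≠ p} ∩ (fun z => (z - p)⁻¹) ⁻¹' X := by
      ext z
      constructor
      · rintro ⟨w, hw, rfl⟩
        refine ⟨?_, by simpa using hw⟩
        simpa using h0cl w (subset_closure hw)
      · rintro ⟨hz, hzX⟩
        exact ⟨_, hzX, by simp⟩
    rw [this]
    refine ContinuousOn.isOpen_inter_preimage (ContinuousOn.inv₀ (by fun_prop) ?_) isOpen_ne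
      h'.isClosed.isOpen_compl.connectedComponentIn
    exact fun z hz => sub_ne_zero.2 hz
  have hsub : connectedComponentIn Hᶜ (q⁻¹ + p) ⊆ (fun w : ℂ => w⁻¹ + p) '' X := by
    refine isPreconnected_connectedComponentIn.subset_of_closure_inter_subset hXo
      ⟨_, mem_connectedComponentIn hqH, q, hqX, rfl⟩ ?_
    rintro z ⟨hz, hzc⟩
    obtain ⟨w, hw, rfl⟩ := closure_minimal (image_mono subset_closure) hκcl.isClosed hz
    refine ⟨w, (hXcl hw).resolve_right ?_, rfl⟩
    rintro ⟨v, hv, rfl⟩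
    refine connectedComponentIn_subset _ _ hzc ?_
    simpa using hv
  have heq := h.connectedComponentIn_eq_of_isBounded hp hqH hUb
    (hκcl.isBounded.subset (hsub.trans (image_mono subset_closure)))
  obtain ⟨w, hw, hwp⟩ := hsub (heq ▸ mem_connectedComponentIn hp)
  exact h0cl w (subset_closure hw) (by simpa using hwp)

/-- The inversion about an interior point exchanges the exterior of the curve with the punctured
interior of the inverted curve. -/
lemma JordanParam.mem_component_inversion_iff (h : JordanParam H α β) {p : ℂ} (hp : p ∉ H)
    (hUb : Bornology.IsBounded (connectedComponentIn Hᶜ p)) {F : ℂ → ℂ}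
    (hF : CaratheodoryMap (connectedComponentIn Hᶜ p) H F) (hF0 : F 0 = p) {z : ℂ} (hz : z ≠ p) :
    (z - p)⁻¹ ∈ connectedComponentIn ((fun z => (z - p)⁻¹) '' H)ᶜ 0 ↔
      z ∉ connectedComponentIn Hᶜ p ∧ z ∉ H := by
  have h' := h.inversion hp
  have hUb' := h.isBounded_component_inversion hp hUb
  set H' := (fun z => (z - p)⁻¹) '' H with hH'
  have h0H' : (0 : ℂ) ∉ H' := by
    rintro ⟨z, hz, h0⟩
    exact hp (sub_eq_zero.1 (inv_eq_zero.1 h0) ▸ hz)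
  have hHH' : ∀ w : ℂ, (w - p)⁻¹ ∈ H' → w ∈ H := by
    rintro w ⟨v, hv, hvw⟩
    have : v = w := by simpa using hvw
    exact this ▸ hv
  constructor
  · refine fun hzU' => ⟨fun hzU => ?_, fun hzH =>
      connectedComponentIn_subset _ _ hzU' ⟨z, hzH, rfl⟩⟩
    rw [← hF.image_ball] at hzU
    obtain ⟨x, hx, rfl⟩ := hzU
    have hx0 : x ≠ 0 := by rintro rfl; exact hz hF0
    have hx1 := mem_ball_zero_iff.1 hx
    have hball : ∀ t ∈ Ioc (0 : ℝ) 1, (t * x : ℂ) ∈ ball (0 : ℂ) 1 := fun t ht => by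
      rw [mem_ball_zero_iff, norm_mul, Complex.norm_real, Real.norm_of_nonneg ht.1.le]
      nlinarith [ht.1, ht.2, norm_nonneg x]
    have hFp : ∀ t ∈ Ioc (0 : ℝ) 1, F (t * x) - p ≠ 0 := fun t ht h0 => by
      have := hF.inj (ball_subset_closedBall (hball t ht)) (by simp)
        ((sub_eq_zero.1 h0).trans hF0.symm)
      have ht0 : (t : ℂ) ≠ 0 := by exact_mod_cast ht.1.ne'
      exact mul_ne_zero ht0 hx0 this
    have hFc : ContinuousOn (fun t : ℝ => F (t * x)) (Ioc 0 1) :=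
      hF.diff.continuousOn.comp (by fun_prop) hball
    have hpre : IsPreconnected ((fun t : ℝ => (F (t * x) - p)⁻¹) '' Ioc 0 1) :=
      isPreconnected_Ioc.image _ ((hFc.sub continuousOn_const).inv₀ hFp)
    have hsub : (fun t : ℝ => (F (t * x) - p)⁻¹) '' Ioc 0 1 ⊆ connectedComponentIn H'ᶜ 0 := by
      rw [connectedComponentIn_eq hzU']
      refine hpre.subset_connectedComponentIn ⟨1, by simp, by simp⟩ ?_
      rintro _ ⟨t, ht, rfl⟩ hmem
      have h1 : F (t * x) ∈ connectedComponentIn Hᶜ p := hF.image_ball ▸ ⟨_, hball t ht, rfl⟩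
      exact connectedComponentIn_subset _ _ h1 (hHH' _ hmem)
    have hlim : Filter.Tendsto (fun t : ℝ => F (t * x) - p) (𝓝[>] 0) (𝓝[≠] 0) := by
      refine tendsto_nhdsWithin_iff.2 ⟨?_, ?_⟩
      · have h1 : ContinuousAt F ((0 : ℝ) * x : ℂ) := by
          rw [Complex.ofReal_zero, zero_mul]
          exact (hF.diff 0 (by simp)).differentiableAt (ball_mem_nhds 0 one_pos) |>.continuousAt
        have h2 : ContinuousAt (fun t : ℝ => F (t * x) - p) 0 :=
          (ContinuousAt.comp (f := fun t : ℝ => (t * x : ℂ)) h1 (by fun_prop)).sub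
            continuousAt_const
        have h3 := h2.tendsto
        rw [Complex.ofReal_zero, zero_mul, hF0, sub_self] at h3
        exact h3.mono_left nhdsWithin_le_nhds
      · filter_upwards [Ioc_mem_nhdsGT one_pos] with t ht using hFp t ht
    have hinv := Filter.tendsto_inv₀_nhdsNE_zero.comp hlim
    have hcob := hinv.eventually (Bornology.isCobounded_def.1
      (Bornology.isBounded_def.1 (hUb'.subset hsub)))
    obtain ⟨t, ht, ht'⟩ := (hcob.and (Ioc_mem_nhdsGT one_pos)).exists
    exact ht ⟨t, ht', rfl⟩
  · rintro ⟨hzU, hzH⟩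
    have hVz : ¬ Bornology.IsBounded (connectedComponentIn Hᶜ z) := fun hb => hzU (by
      rw [h.connectedComponentIn_eq_of_isBounded hp hzH hUb hb]
      exact mem_connectedComponentIn hzH)
    have hpV : ∀ w ∈ connectedComponentIn Hᶜ z, w - p ≠ 0 := fun w hw h0 => hzU (by
      rw [sub_eq_zero.1 h0] at hw
      rw [← connectedComponentIn_eq hw]
      exact mem_connectedComponentIn hzH)
    have hpre : IsPreconnected ((fun w => (w - p)⁻¹) '' connectedComponentIn Hᶜ z) :=
      isPreconnected_connectedComponentIn.image _ (ContinuousOn.inv₀ (by fun_prop) hpV)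
    obtain ⟨r, hr, hrU⟩ := Metric.isOpen_iff.1
      (h'.isClosed.isOpen_compl.connectedComponentIn (x := 0)) 0 (mem_connectedComponentIn h0H')
    obtain ⟨w, hw, hwr⟩ : ∃ w ∈ connectedComponentIn Hᶜ z, r⁻¹ < ‖w - p‖ := by
      by_contra! hcon
      exact hVz (isBounded_closedBall.subset fun w hw => mem_closedBall_iff_norm.2 (hcon w hw))
    have hwU : (w - p)⁻¹ ∈ connectedComponentIn H'ᶜ 0 := hrU (by
      rw [mem_ball_zero_iff, norm_inv]
      exact inv_lt_of_inv_lt₀ hr hwr)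
    rw [connectedComponentIn_eq hwU]
    refine hpre.subset_connectedComponentIn ⟨w, hw, rfl⟩ ?_ ⟨z, mem_connectedComponentIn hzH, rfl⟩
    rintro _ ⟨v, hv, rfl⟩ hmem
    exact connectedComponentIn_subset _ _ hv (hHH' _ hmem)

end

section

open Filter Bornology

lemma IsCompact.continuousOn_invFunOn {f : ℂ → ℂ} {K : Set ℂ} (hK : IsCompact K)
    (hf : ContinuousOn f K) (hinj : InjOn f K) :
    ContinuousOn (Function.invFunOn f K) (f '' K) := by
  rw [continuousOn_iff_isClosed]
  intro t ht
  refine ⟨f '' (K ∩ t), ((hK.inter_right ht).image_of_continuousOn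
    (hf.mono inter_subset_left)).isClosed, ?_⟩
  ext w
  constructor
  · rintro ⟨hw, x, hx, rfl⟩
    rw [mem_preimage, hinj.leftInvOn_invFunOn hx] at hw
    exact ⟨⟨x, ⟨hx, hw⟩, rfl⟩, x, hx, rfl⟩
  · rintro ⟨⟨x, ⟨hx, hxt⟩, rfl⟩, hw⟩
    refine ⟨?_, hw⟩
    rwa [mem_preimage, hinj.leftInvOn_invFunOn hx]

/-- Gluing a map of the closed disc and a map of its exterior to a homeomorphism of the plane. -/
lemma exists_homeomorph_glue {F E : ℂ → ℂ} (hF : ContinuousOn F (closedBall 0 1))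
    (hE : ContinuousOn E {z | 1 ≤ ‖z‖}) (heq : ∀ z, ‖z‖ = 1 → F z = E z)
    (hFi : InjOn F (closedBall 0 1)) (hEi : InjOn E {z | 1 < ‖z‖})
    (himg : E '' {z | 1 < ‖z‖} = (F '' closedBall 0 1)ᶜ)
    (hlim : Tendsto E (cobounded ℂ) (cobounded ℂ)) :
    ∃ Φ : ℂ ≃ₜ ℂ, EqOn Φ F (closedBall 0 1) := by
  classical
  set P : ℂ → ℂ := fun z => if ‖z‖ ≤ 1 then F z else E z with hP
  have hPF : ∀ z, ‖z‖ ≤ 1 → P z = F z := fun z hz => if_pos hz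
  have hPE : ∀ z, 1 < ‖z‖ → P z = E z := fun z hz => if_neg hz.not_ge
  have hmem : ∀ z : ℂ, ‖z‖ ≤ 1 → z ∈ closedBall (0 : ℂ) 1 := fun z hz => by simpa using hz
  have hcont : Continuous P := by
    refine continuous_if_le continuous_norm continuous_const (hF.mono ?_) hE heq
    exact fun z hz => hmem z hz
  have hnot : ∀ z, 1 < ‖z‖ → E z ∉ F '' closedBall 0 1 := fun z hz => by
    rw [← mem_compl_iff, ← himg]
    exact ⟨z, hz, rfl⟩
  have hinj : Function.Injective P := by
    intro z w hzw
    rcases le_or_gt ‖z‖ 1 with hz | hz <;> rcases le_or_gt ‖w‖ 1 with hw | hw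
    · rw [hPF z hz, hPF w hw] at hzw
      exact hFi (hmem z hz) (hmem w hw) hzw
    · rw [hPF z hz, hPE w hw] at hzw
      exact absurd ⟨z, hmem z hz, hzw⟩ (hnot w hw)
    · rw [hPE z hz, hPF w hw] at hzw
      exact absurd ⟨w, hmem w hw, hzw.symm⟩ (hnot z hz)
    · rw [hPE z hz, hPE w hw] at hzw
      exact hEi hz hw hzw
  have hsurj : Function.Surjective P := by
    intro w
    by_cases hw : w ∈ F '' closedBall 0 1
    · obtain ⟨z, hz, rfl⟩ := hw
      exact ⟨z, hPF z (by simpa using hz)⟩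
    · rw [← mem_compl_iff, ← himg] at hw
      obtain ⟨z, hz, rfl⟩ := hw
      exact ⟨z, hPE z hz⟩
  have hclosed : IsClosedMap P := by
    refine (isProperMap_iff_tendsto_cocompact.2 ⟨hcont, ?_⟩).isClosedMap
    rw [← cobounded_eq_cocompact]
    refine hlim.congr' ?_
    filter_upwards [tendsto_norm_cobounded_atTop.eventually (eventually_gt_atTop 1)] with z hz
    exact (hPE z hz).symm
  exact ⟨(Equiv.ofBijective P ⟨hinj, hsurj⟩).toHomeomorphOfContinuousClosed hcont hclosed,
    fun z hz => hPF z (by simpa using hz)⟩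

/-- The inner and outer Carathéodory maps of a Jordan curve have boundary values that differ by
a homeomorphism of the circle. -/
lemma CaratheodoryMap.exists_welding {H U V : Set ℂ} {F E : ℂ → ℂ} {p : ℂ} (hp : p ∉ H)
    (hF : CaratheodoryMap U H F) (hE : CaratheodoryMap V ((fun z => (z - p)⁻¹) '' H) E) :
    ∃ τ : ℂ → ℂ, ContinuousOn τ (sphere 0 1) ∧ BijOn τ (sphere 0 1) (sphere 0 1) ∧
      ∀ u ∈ sphere (0 : ℂ) 1, E (τ u) = (F u - p)⁻¹ := by
  have hFH : ∀ u ∈ sphere (0 : ℂ) 1, F u ∈ H := fun u hu => hF.image_sphere ▸ ⟨u, hu, rfl⟩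
  have hEi : InjOn E (sphere 0 1) := hE.inj.mono sphere_subset_closedBall
  have hmem : ∀ u ∈ sphere (0 : ℂ) 1, (F u - p)⁻¹ ∈ E '' sphere 0 1 := fun u hu => by
    rw [hE.image_sphere]
    exact ⟨F u, hFH u hu, rfl⟩
  have hτ : ∀ u ∈ sphere (0 : ℂ) 1,
      E (Function.invFunOn E (sphere 0 1) ((F u - p)⁻¹)) = (F u - p)⁻¹ :=
    fun u hu => Function.invFunOn_eq (hmem u hu)
  refine ⟨fun u => Function.invFunOn E (sphere 0 1) ((F u - p)⁻¹), ?_,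
    ⟨fun u hu => Function.invFunOn_mem (hmem u hu), ?_, ?_⟩, hτ⟩
  · refine ((isCompact_sphere 0 1).continuousOn_invFunOn
      (hE.cont.mono sphere_subset_closedBall) hEi).comp ?_ hmem
    refine ((hF.cont.mono sphere_subset_closedBall).sub continuousOn_const).inv₀ ?_
    intro u hu h0
    have h1 : F u = p := sub_eq_zero.1 h0
    exact hp (h1 ▸ hFH u hu)
  · intro u hu v hv huv
    have := congrArg E huv
    simp only [hτ u hu, hτ v hv, inv_inj, sub_left_inj] at this
    exact hF.inj (sphere_subset_closedBall hu) (sphere_subset_closedBall hv) this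
  · intro v hv
    have : E v ∈ (fun z => (z - p)⁻¹) '' H := hE.image_sphere ▸ ⟨v, hv, rfl⟩
    obtain ⟨z, hz, hzv⟩ := this
    rw [← hF.image_sphere] at hz
    obtain ⟨u, hu, rfl⟩ := hz
    exact ⟨u, hu, hEi (Function.invFunOn_mem (hmem u hu)) hv ((hτ u hu).trans hzv)⟩

lemma norm_inv_smul_mem_sphere {z : ℂ} (hz : z ≠ 0) : ‖z‖⁻¹ • z ∈ sphere (0 : ℂ) 1 := by
  simp [hz]

/-- A homeomorphism of the circle extends radially, with an inversion, to a map from the exterior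
of the disc onto the punctured disc. -/
lemma radial_inversion_extension {τ : ℂ → ℂ} (hc : ContinuousOn τ (sphere 0 1))
    (hb : BijOn τ (sphere 0 1) (sphere 0 1)) :
    ∃ m : ℂ → ℂ, ContinuousOn m {0}ᶜ ∧ (∀ z, z ≠ 0 → ‖m z‖ = ‖z‖⁻¹) ∧ InjOn m {0}ᶜ ∧
      (∀ v, v ≠ 0 → ∃ z, z ≠ 0 ∧ m z = v) ∧ ∀ u ∈ sphere (0 : ℂ) 1, m u = τ u := by
  have hτ : ∀ z : ℂ, z ≠ 0 → ‖τ (‖z‖⁻¹ • z)‖ = 1 := fun z hz => by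
    simpa using hb.mapsTo (norm_inv_smul_mem_sphere hz)
  have hnorm : ∀ z : ℂ, z ≠ 0 → ‖‖z‖⁻¹ • τ (‖z‖⁻¹ • z)‖ = ‖z‖⁻¹ := fun z hz => by
    rw [norm_smul, hτ z hz, norm_inv, norm_norm, mul_one]
  refine ⟨fun z => ‖z‖⁻¹ • τ (‖z‖⁻¹ • z), ?_, hnorm, ?_, ?_, ?_⟩
  · have h1 : ContinuousOn (fun z : ℂ => ‖z‖⁻¹) {0}ᶜ :=
      continuous_norm.continuousOn.inv₀ fun z hz => norm_ne_zero_iff.2 hz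
    exact h1.smul (hc.comp (h1.smul continuousOn_id) fun z hz => norm_inv_smul_mem_sphere hz)
  · intro z hz w hw hzw
    have hn : ‖z‖ = ‖w‖ := by
      have := congrArg norm hzw
      simp only [hnorm z hz, hnorm w hw, inv_inj] at this
      exact this
    have hw' : ‖w‖⁻¹ ≠ 0 := inv_ne_zero (norm_ne_zero_iff.2 hw)
    have h2 : τ (‖z‖⁻¹ • z) = τ (‖w‖⁻¹ • w) := by
      simp only [hn] at hzw ⊢
      exact smul_right_injective ℂ hw' hzw
    have h3 := hb.injOn (norm_inv_smul_mem_sphere hz) (norm_inv_smul_mem_sphere hw) h2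
    rw [hn] at h3
    exact smul_right_injective ℂ hw' h3
  · intro v hv
    have hv' : ‖v‖ ≠ 0 := norm_ne_zero_iff.2 hv
    obtain ⟨u, hu, huv⟩ := hb.surjOn (norm_inv_smul_mem_sphere hv)
    have hu1 : ‖u‖ = 1 := by simpa using hu
    have hz : ‖‖v‖⁻¹ • u‖ = ‖v‖⁻¹ := by simp [hu1]
    refine ⟨‖v‖⁻¹ • u, smul_ne_zero (inv_ne_zero hv') (ne_zero_of_mem_circle hu), ?_⟩
    simp only [hz, inv_inv]
    rw [smul_inv_smul₀ hv', huv, smul_inv_smul₀ hv']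
  · intro u hu
    have hu1 : ‖u‖ = 1 := by simpa using hu
    simp [hu1]

theorem JordanParam.exists_homeomorph {H : Set ℂ} {α β : ℂ → ℂ} (h : JordanParam H α β) :
    ∃ Φ : ℂ ≃ₜ ℂ, DifferentiableOn ℂ Φ (ball 0 1) ∧ Φ '' sphere 0 1 = H := by
  obtain ⟨p, hp, hUb⟩ := h.exists_isBounded_component
  obtain ⟨F, hF, hF0⟩ := h.exists_caratheodoryMap hp hUb
  have h0 : (0 : ℂ) ∉ (fun z => (z - p)⁻¹) '' H := by
    rintro ⟨z, hz, hz0⟩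
    exact hp (sub_eq_zero.1 (inv_eq_zero.1 hz0) ▸ hz)
  obtain ⟨E, hE, hE0⟩ := (h.inversion hp).exists_caratheodoryMap h0
    (h.isBounded_component_inversion hp hUb)
  obtain ⟨τ, hτc, hτb, hτE⟩ := hF.exists_welding hp hE
  obtain ⟨m, hmc, hmn, hmi, hms, hmτ⟩ := radial_inversion_extension hτc hτb
  have hmem : ∀ {z : ℂ}, ‖z‖ ≤ 1 → z ∈ closedBall (0 : ℂ) 1 := fun hz => by simpa using hz
  have hEne : ∀ v ∈ closedBall (0 : ℂ) 1, v ≠ 0 → E v ≠ 0 := fun v hv hv0 hEv =>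
    hv0 (hE.inj hv (by simp) (hEv.trans hE0.symm))
  have hne : ∀ {z : ℂ}, 1 ≤ ‖z‖ → z ≠ 0 := fun hz => norm_pos_iff.1 (by linarith)
  have hmz : ∀ {z : ℂ}, 1 ≤ ‖z‖ → m z ∈ closedBall (0 : ℂ) 1 := fun hz => by
    refine hmem ?_
    rw [hmn _ (hne hz)]
    exact inv_le_one_of_one_le₀ hz
  have hm0 : ∀ {z : ℂ}, z ≠ 0 → m z ≠ 0 := fun hz => by
    rw [← norm_ne_zero_iff, hmn _ hz]
    exact inv_ne_zero (norm_ne_zero_iff.2 hz)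
  have hFimg : F '' closedBall 0 1 = connectedComponentIn Hᶜ p ∪ H := by
    rw [← ball_union_sphere, image_union, hF.image_ball, hF.image_sphere]
  have hiff := fun z (hz : z ≠ p) => h.mem_component_inversion_iff hp hUb hF hF0 hz
  have hpU : p ∈ connectedComponentIn Hᶜ p := mem_connectedComponentIn hp
  obtain ⟨Φ, hΦ⟩ := exists_homeomorph_glue (F := F) (E := fun z => (E (m z))⁻¹ + p) hF.cont
    (((hE.cont.comp (hmc.mono fun z hz => hne hz) fun z hz => hmz hz).inv₀
      fun z hz => hEne _ (hmz hz) (hm0 (hne hz))).add continuousOn_const)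
    (fun z hz => by
      have hz' : z ∈ sphere (0 : ℂ) 1 := by simpa using hz
      simp [hmτ z hz', hτE z hz'])
    hF.inj
    (fun z hz w hw hzw => by
      simp only [add_left_inj, inv_inj] at hzw
      exact hmi (hne (le_of_lt hz)) (hne (le_of_lt hw))
        (hE.inj (hmz (le_of_lt hz)) (hmz (le_of_lt hw)) hzw))
    (by
      rw [hFimg]
      ext w
      rw [mem_compl_iff, mem_union, not_or]
      constructor
      · rintro ⟨z, hz, rfl⟩
        have hz1 : 1 < ‖z‖ := hz
        have hz0 := hne hz1.le
        have hEm := hEne _ (hmz hz1.le) (hm0 hz0)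
        refine (hiff _ ?_).1 ?_
        · simpa using hEm
        · simp only [add_sub_cancel_right, inv_inv]
          rw [← hE.image_ball]
          refine ⟨m z, ?_, rfl⟩
          rw [mem_ball_zero_iff, hmn z hz0]
          exact inv_lt_one_of_one_lt₀ hz1
      · intro hw
        have hwp : w ≠ p := fun hwp => hw.1 (hwp ▸ hpU)
        have hw' := (hiff w hwp).2 hw
        rw [← hE.image_ball] at hw'
        obtain ⟨v, hv, hvw⟩ := hw'
        have hv0 : v ≠ 0 := by
          rintro rfl
          rw [hE0] at hvw
          exact hwp (sub_eq_zero.1 (inv_eq_zero.1 hvw.symm))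
        obtain ⟨z, hz0, rfl⟩ := hms v hv0
        refine ⟨z, ?_, ?_⟩
        · rw [mem_ball_zero_iff, hmn z hz0] at hv
          exact (inv_lt_one₀ (norm_pos_iff.2 hz0)).1 hv
        · simp [hvw])
    (by
      have hlarge : ∀ᶠ z : ℂ in cobounded ℂ, 1 < ‖z‖ :=
        tendsto_norm_cobounded_atTop.eventually (eventually_gt_atTop 1)
      have hmt : Tendsto m (cobounded ℂ) (𝓝 0) := by
        rw [tendsto_zero_iff_norm_tendsto_zero]
        refine (tendsto_inv_atTop_zero.comp
          (tendsto_norm_cobounded_atTop (E := ℂ))).congr' ?_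
        filter_upwards [hlarge] with z hz
        exact (hmn z (hne hz.le)).symm
      have hEc : Tendsto E (𝓝 0) (𝓝 0) := by
        have := (hE.cont.continuousAt (closedBall_mem_nhds 0 one_pos)).tendsto
        rwa [hE0] at this
      have hEm : Tendsto (fun z => E (m z)) (cobounded ℂ) (𝓝[≠] 0) := by
        refine tendsto_nhdsWithin_iff.2 ⟨hEc.comp hmt, ?_⟩
        filter_upwards [hlarge] with z hz
        exact hEne _ (hmz hz.le) (hm0 (hne hz.le))
      have := tendsto_inv₀_nhdsNE_zero.comp hEm
      exact (tendsto_add_const_cobounded p).comp this)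
  refine ⟨Φ, hF.diff.congr fun z hz => hΦ (ball_subset_closedBall hz), ?_⟩
  rw [← hF.image_sphere]
  exact image_congr fun z hz => hΦ (sphere_subset_closedBall hz)

end

/-- The map of the plane that applies `s` to the modulus and preserves the argument. -/
def radialMap (s : ℝ → ℝ) (z : ℂ) : ℂ := (s ‖z‖ / ‖z‖) • z

lemma norm_radialMap {s : ℝ → ℝ} {z : ℂ} (hz : z ≠ 0) (hs : 0 ≤ s ‖z‖) :
    ‖radialMap s z‖ = s ‖z‖ := by
  have hz' : ‖z‖ ≠ 0 := norm_ne_zero_iff.2 hz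
  rw [radialMap, norm_smul, Real.norm_of_nonneg (by positivity), div_mul_cancel₀ _ hz']

lemma radialMap_of_eq {s : ℝ → ℝ} {z : ℂ} (hs : s ‖z‖ = ‖z‖) : radialMap s z = z := by
  by_cases hz : z = 0
  · simp [radialMap, hz]
  · rw [radialMap, hs, div_self (norm_ne_zero_iff.2 hz), one_smul]

lemma dist_radialMap (s : ℝ → ℝ) (h0 : s 0 = 0) (z : ℂ) :
    dist (radialMap s z) z = |s ‖z‖ - ‖z‖| := by
  by_cases hz : z = 0
  · simp [radialMap, hz, h0]
  · have hz' : ‖z‖ ≠ 0 := norm_ne_zero_iff.2 hz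
    have : radialMap s z - z = (s ‖z‖ / ‖z‖ - 1) • z := by rw [sub_smul, one_smul, radialMap]
    rw [dist_eq_norm, this, norm_smul, Real.norm_eq_abs]
    calc |s ‖z‖ / ‖z‖ - 1| * ‖z‖ = |(s ‖z‖ / ‖z‖ - 1) * ‖z‖| := by rw [abs_mul, abs_norm]
      _ = |s ‖z‖ - ‖z‖| := by rw [sub_mul, div_mul_cancel₀ _ hz', one_mul]

lemma continuous_radialMap {s : ℝ → ℝ} (hs : Continuous s) {a : ℝ} (ha : 0 < a)
    (hsa : ∀ t ≤ a, s t = t) : Continuous (radialMap s) := by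
  rw [continuous_iff_continuousAt]
  intro z
  by_cases hz : z = 0
  · refine continuousAt_id.congr ?_
    filter_upwards [ball_mem_nhds z ha] with w hw
    rw [hz, mem_ball_zero_iff] at hw
    exact (radialMap_of_eq (hsa _ hw.le)).symm
  · exact ((hs.comp continuous_norm).continuousAt.div continuous_norm.continuousAt
      (norm_ne_zero_iff.2 hz)).smul continuousAt_id

lemma radialMap_leftInverse {s t : ℝ → ℝ} (h : Function.LeftInverse t s)
    (hs : ∀ x, 0 < x → 0 < s x) : Function.LeftInverse (radialMap t) (radialMap s) := by
  intro z
  by_cases hz : z = 0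
  · simp [radialMap, hz]
  · have hz' : 0 < ‖z‖ := norm_pos_iff.2 hz
    have h1 := hs _ hz'
    rw [radialMap, norm_radialMap hz h1.le, h, radialMap, smul_smul,
      div_mul_div_cancel₀ h1.ne', div_self hz'.ne', one_smul]

/-- A radial homeomorphism of the plane supported near the unit circle, shrinking that circle. -/
lemma exists_radial_homeomorph {δ : ℝ} (hδ : 0 < δ) (hδ1 : δ < 1) :
    ∃ ρ : ℂ ≃ₜ ℂ, (∀ z, δ ≤ |‖z‖ - 1| → ρ z = z) ∧ (∀ z, dist (ρ z) z ≤ δ / 2) ∧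
      ∀ u ∈ sphere (0 : ℂ) 1, ρ u = (1 - δ / 2) • u := by
  set s : ℝ → ℝ := fun t => t - max 0 (δ - |t - 1|) / 2 with hs
  have hsc : Continuous s := by fun_prop
  have hsid : ∀ t, δ ≤ |t - 1| → s t = t := fun t ht => by
    simp [hs, max_eq_left (sub_nonpos.2 ht)]
  have hle : ∀ t, max 0 (δ - |t - 1|) ≤ δ := fun t =>
    max_le hδ.le (by linarith [abs_nonneg (t - 1)])
  have hge : ∀ t, 0 ≤ max 0 (δ - |t - 1|) := fun t => le_max_left _ _
  have hmono : StrictMono s := by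
    intro x y hxy
    have h1 : max 0 (δ - |y - 1|) ≤ max 0 (δ - |x - 1|) + (y - x) := by
      have h2 : |x - 1| ≤ |y - 1| + (y - x) := by
        have := abs_sub_abs_le_abs_sub (x - 1) (y - 1)
        have h3 : |x - 1 - (y - 1)| = y - x := by
          rw [abs_sub_comm, abs_of_nonneg] <;> linarith
        linarith
      refine max_le (by linarith [hge x]) ?_
      linarith [le_max_right 0 (δ - |x - 1|)]
    simp only [hs]
    linarith
  have hsurj : Function.Surjective s := by
    intro y
    obtain ⟨x, -, hx⟩ := intermediate_value_Icc (by linarith : y ≤ y + δ) hsc.continuousOn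
      (show y ∈ Icc (s y) (s (y + δ)) by
        constructor <;> simp only [hs] <;> linarith [hge y, hle (y + δ)])
    exact ⟨x, hx⟩
  have hssmall : ∀ t ≤ 1 - δ, s t = t := fun t ht => hsid t (by
    rw [abs_sub_comm]
    exact (by linarith : δ ≤ 1 - t).trans (le_abs_self _))
  have h0 : s 0 = 0 := hssmall 0 (by linarith)
  set e : ℝ ≃o ℝ := hmono.orderIsoOfSurjective s hsurj with he
  have hes : ∀ t, e t = s t := fun t => rfl
  have hsmall' : ∀ t ≤ 1 - δ, e.symm t = t := fun t ht => by
    rw [OrderIso.symm_apply_eq, hes, hssmall t ht]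
  have hpos : ∀ x, 0 < x → 0 < e x := fun x hx => by
    rw [hes, ← h0]
    exact hmono hx
  have hpos' : ∀ x, 0 < x → 0 < e.symm x := fun x hx => by
    rw [← hsmall' 0 (by linarith)]
    exact e.symm.strictMono hx
  refine ⟨⟨⟨radialMap e, radialMap e.symm, radialMap_leftInverse e.symm_apply_apply hpos,
    radialMap_leftInverse e.apply_symm_apply hpos'⟩,
    continuous_radialMap hsc (sub_pos.2 hδ1) hssmall,
    continuous_radialMap e.symm.continuous (sub_pos.2 hδ1) hsmall'⟩, ?_, ?_, ?_⟩
  · exact fun z hz => radialMap_of_eq (hsid _ hz)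
  · intro z
    refine (dist_radialMap s h0 z).trans_le ?_
    rw [abs_sub_comm, abs_of_nonneg] <;> simp only [hs] <;> linarith [hge ‖z‖, hle ‖z‖]
  · intro u hu
    have hu1 : ‖u‖ = 1 := by simpa using hu
    change (s ‖u‖ / ‖u‖) • u = _
    simp [hs, hu1, hδ.le]

/-- Any Jordan curve in the plane is `ε`-homeomorphic to an analytic Jordan curve,
by a homeomorphism that is the identity outside an `ε`-neighborhood of the curve. -/
theorem jordan_curve_analytic_approximation
    (H : Set ℂ) (hH : IsJordanCurve H) (ε : ℝ) (hε : 0 < ε) :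
    ∃ φ : ℂ ≃ₜ ℂ,
      (∃ c < ε, ∀ z : ℂ, dist (φ z) z ≤ c) ∧
      (∀ z : ℂ, ε ≤ Metric.infDist z H → φ z = z) ∧
      IsAnalyticJordanCurve (φ '' H) := by
  obtain ⟨e⟩ := hH
  obtain ⟨α, β, h⟩ := exists_jordanParam e
  obtain ⟨Φ, hΦd, hΦH⟩ := h.exists_homeomorph
  obtain ⟨η, hη, hΦu⟩ := Metric.uniformContinuousOn_iff.1
    ((isCompact_closedBall (0 : ℂ) 3).uniformContinuousOn_of_continuous Φ.continuous.continuousOn)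
    (ε / 2) (half_pos hε)
  obtain ⟨δ, hδ, hδη⟩ := exists_between (lt_min hη one_pos)
  obtain ⟨hδη, hδ1⟩ := lt_min_iff.1 hδη
  obtain ⟨ρ, hρid, hρd, hρs⟩ := exists_radial_homeomorph hδ hδ1
  refine ⟨(Φ.symm.trans ρ).trans Φ, ⟨ε / 2, half_lt_self hε, fun w => ?_⟩, fun w hw => ?_, ?_⟩
  · obtain ⟨z, rfl⟩ := Φ.surjective w
    simp only [Homeomorph.trans_apply, Homeomorph.symm_apply_apply]
    by_cases hz : δ ≤ |‖z‖ - 1|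
    · rw [hρid z hz, dist_self]
      exact (half_pos hε).le
    · have hz2 : ‖z‖ < 2 := by linarith [le_abs_self (‖z‖ - 1)]
      have hd := hρd z
      refine (hΦu _ ?_ _ ?_ (by linarith)).le
      · rw [mem_closedBall]
        linarith [dist_triangle (ρ z) z 0, dist_zero_right z]
      · rw [mem_closedBall, dist_zero_right]
        linarith
  · obtain ⟨z, rfl⟩ := Φ.surjective w
    simp only [Homeomorph.trans_apply, Homeomorph.symm_apply_apply]
    by_cases hz : δ ≤ |‖z‖ - 1|
    · rw [hρid z hz]
    · rw [not_le] at hz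
      obtain ⟨hz1, hz2⟩ := abs_lt.1 hz
      have hz0 : z ≠ 0 := norm_pos_iff.1 (by linarith)
      have hu := norm_inv_smul_mem_sphere hz0
      have hdist : dist z (‖z‖⁻¹ • z) < η := by
        have := dist_radialMap (fun t => if t = 0 then 0 else 1) (if_pos rfl) z
        rw [if_neg (norm_ne_zero_iff.2 hz0), radialMap, if_neg (norm_ne_zero_iff.2 hz0),
          one_div] at this
        rw [dist_comm, this, abs_sub_comm]
        linarith
      have hmem : Φ (‖z‖⁻¹ • z) ∈ H := hΦH ▸ mem_image_of_mem Φ hu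
      have h1 := infDist_le_dist_of_mem (x := Φ z) hmem
      have h2 := hΦu z (by rw [mem_closedBall, dist_zero_right]; linarith) _
        (closedBall_subset_closedBall (by norm_num) (sphere_subset_closedBall hu)) hdist
      linarith
  · have hc : 0 < 1 - δ / 2 := by linarith
    refine ⟨0, (1 - δ / 2)⁻¹, fun z => Φ ((1 - δ / 2) • z), one_pos,
      (one_lt_inv₀ hc).2 (by linarith), ?_, ?_, ?_⟩
    · refine hΦd.comp (by fun_prop) fun z hz => ?_
      rw [mem_ball_zero_iff, norm_smul, Real.norm_of_nonneg hc.le]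
      exact (lt_inv_mul_iff₀ hc).1 (by simpa using hz.2)
    · exact fun z _ w _ hzw => smul_right_injective ℂ hc.ne' (Φ.injective hzw)
    · rw [← hΦH, image_image]
      exact image_congr fun u hu => by simp [hρs u hu]

end
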